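/- Let α,β > −1/2 with α − β > −5, and let 0 < ε < π/2. Then there exist constants c⁽¹⁾ > 0 depending only on α,β and C > 0 depending only on ε,α,β such that for every positive integer L and every θ with c⁽¹⁾/L ≤ θ ≤ π − ε, setting L̃ := L + (α+β+2)/2, |v_L^{(α,β)}(1,cos θ) − (2^{−(α+β+1)}/Γ(α+1)) L̃^{α+1/2} m_{α+1,β}(θ) [cos ω_{α+1}(L̃θ) + L̃^{−1} F^{(2)}_{α+1,β}(θ) cos ω_{α+2}(L̃θ)]| ≤ C (2^{−(α+β+1)}/Γ(α+1)) L̃^{α+1/2} m_{α+1,β}(θ) (L^{û(α+1)} θ^{ν̂(α+1)} + L^{−2} θ^{−2}), where F^{(2)}_{γ,η}(θ) := ((η²−γ²)/4) tan(θ/2) − ((4γ²−1)/8) cot θ, û(γ) := −2 + frac(γ+1/2) (frac denotes fractional part), and ν̂(γ) := γ+5/2 if γ < 1/2 and ν̂(γ) := γ+1/2 if γ ≥ 1/2. -/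

import Mathlib

open MeasureTheory Real
open scoped ENNReal NNReal

/-- The classical Jacobi polynomial `P_n^{(a,b)}` (hypergeometric representation,
normalised so that `P_n^{(a,b)}(1) = Γ(n+a+1)/(Γ(n+1)Γ(a+1))`). -/
noncomputable def jacobiP (a b : ℝ) (n : ℕ) (x : ℝ) : ℝ :=
  ∑ s ∈ Finset.range (n + 1),
    (Real.Gamma ((n : ℝ) + a + 1) /
        (Real.Gamma ((s : ℝ) + a + 1) * (Nat.factorial (n - s) : ℝ))) *
      (Real.Gamma ((n : ℝ) + b + 1) /
        (Real.Gamma ((n : ℝ) - (s : ℝ) + b + 1) * (Nat.factorial s : ℝ))) *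
      ((x - 1) / 2) ^ s * ((x + 1) / 2) ^ (n - s)

/-- `M_ℓ^{(a,b)}`, the `L₂(w_{a,b})` normalisation constant of `P_ℓ^{(a,b)}`. -/
noncomputable def jacobiM (a b : ℝ) (ℓ : ℕ) : ℝ :=
  (2 : ℝ) ^ (a + b + 1) / (2 * (ℓ : ℝ) + a + b + 1) *
    (Real.Gamma ((ℓ : ℝ) + a + 1) * Real.Gamma ((ℓ : ℝ) + b + 1)) /
    (Real.Gamma ((ℓ : ℝ) + 1) * Real.Gamma ((ℓ : ℝ) + a + b + 1))

/-- The generalised Dirichlet kernel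
`v_L^{(a,b)}(t,s) = Σ_{ℓ=0}^{L} (M_ℓ^{(a,b)})⁻¹ P_ℓ^{(a,b)}(t) P_ℓ^{(a,b)}(s)`. -/
noncomputable def dirichletJ (a b : ℝ) (L : ℕ) (t s : ℝ) : ℝ :=
  ∑ ℓ ∈ Finset.range (L + 1), (jacobiM a b ℓ)⁻¹ * jacobiP a b ℓ t * jacobiP a b ℓ s

/-- The filtered Jacobi kernel
`v_{L,g}^{(a,b)}(t,s) = Σ_{ℓ=0}^{2L−1} g(ℓ/L) (M_ℓ^{(a,b)})⁻¹ P_ℓ^{(a,b)}(t) P_ℓ^{(a,b)}(s)`. -/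
noncomputable def filteredJ (a b : ℝ) (g : ℝ → ℝ) (L : ℕ) (t s : ℝ) : ℝ :=
  ∑ ℓ ∈ Finset.range (2 * L),
    g ((ℓ : ℝ) / (L : ℝ)) * (jacobiM a b ℓ)⁻¹ * jacobiP a b ℓ t * jacobiP a b ℓ s

/-- `Z(d,ℓ)`, the dimension of the space of spherical harmonics of degree `ℓ` on `S^d`. -/
noncomputable def Zdim (d ℓ : ℕ) : ℝ :=
  (2 * (ℓ : ℝ) + (d : ℝ) - 1) * Real.Gamma ((ℓ : ℝ) + (d : ℝ) - 1) /
    (Real.Gamma (d : ℝ) * Real.Gamma ((ℓ : ℝ) + 1))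

/-- The normalised Legendre polynomial `P_ℓ^{(d+1)}` for `S^d`. -/
noncomputable def normLegendre (d ℓ : ℕ) (t : ℝ) : ℝ :=
  jacobiP (((d : ℝ) - 2) / 2) (((d : ℝ) - 2) / 2) ℓ t /
    jacobiP (((d : ℝ) - 2) / 2) (((d : ℝ) - 2) / 2) ℓ 1

/-- The Dirichlet kernel on `S^d`: `v_L^{(d)}(t) = Σ_{ℓ=0}^L Z(d,ℓ) P_ℓ^{(d+1)}(t)`. -/
noncomputable def sphDirichlet (d L : ℕ) (t : ℝ) : ℝ :=
  ∑ ℓ ∈ Finset.range (L + 1), Zdim d ℓ * normLegendre d ℓ t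

/-- The filtered kernel on `S^d`: `v_{L,g}^{(d)}(t) = Σ_{ℓ=0}^∞ g(ℓ/L) Z(d,ℓ) P_ℓ^{(d+1)}(t)`. -/
noncomputable def sphFiltered (d : ℕ) (g : ℝ → ℝ) (L : ℕ) (t : ℝ) : ℝ :=
  ∑' ℓ : ℕ, g ((ℓ : ℝ) / (L : ℝ)) * Zdim d ℓ * normLegendre d ℓ t

/-- The surface area `|S^n| = 2π^{(n+1)/2}/Γ((n+1)/2)` of the unit sphere `S^n`. -/
noncomputable def sphereArea (n : ℕ) : ℝ :=
  2 * Real.pi ^ (((n : ℝ) + 1) / 2) / Real.Gamma (((n : ℝ) + 1) / 2)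

/-- `m_{a,b}(θ) = π^{−1/2} (sin(θ/2))^{−a−1/2} (cos(θ/2))^{−b−1/2}`. -/
noncomputable def mAB (a b θ : ℝ) : ℝ :=
  Real.pi ^ (-(1 / 2 : ℝ)) * Real.sin (θ / 2) ^ (-a - 1 / 2) *
    Real.cos (θ / 2) ^ (-b - 1 / 2)

/-- `ω_γ(z) = z − γπ/2 − π/4`. -/
noncomputable def omegaA (γ z : ℝ) : ℝ := z - γ * Real.pi / 2 - Real.pi / 4

/-- `F^{(2)}_{a,b}(θ) = ((b²−a²)/4) tan(θ/2) − ((4a²−1)/8) cot θ`. -/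
noncomputable def F2fn (a b θ : ℝ) : ℝ :=
  (b ^ 2 - a ^ 2) / 4 * Real.tan (θ / 2) - (4 * a ^ 2 - 1) / 8 * (Real.cos θ / Real.sin θ)

/-- `û(a) = −2 + frac(a + 1/2)`. -/
noncomputable def uHat (a : ℝ) : ℝ := -2 + Int.fract (a + 1 / 2)

/-- `ν̂(a) = a + 5/2` if `a < 1/2`, and `a + 1/2` if `a ≥ 1/2`. -/
noncomputable def nuHat (a : ℝ) : ℝ := if a < 1 / 2 then a + 5 / 2 else a + 1 / 2

section BesselPart

lemma hasDerivAt_int_cos (w : ℝ → ℝ) (hw : Continuous w) (z : ℝ) :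
    HasDerivAt (fun z : ℝ => ∫ t in (-1 : ℝ)..1, w t * Real.cos (z * t))
      (∫ t in (-1 : ℝ)..1, w t * (-(Real.sin (z * t)) * t)) z := by
  refine (intervalIntegral.hasDerivAt_integral_of_dominated_loc_of_deriv_le
    (F := fun z t => w t * Real.cos (z * t))
    (F' := fun z t => w t * (-(Real.sin (z * t)) * t))
    (s := Set.univ) (bound := fun t => |w t| * |t|) Filter.univ_mem ?_ ?_ ?_ ?_ ?_ ?_).2
  · exact Filter.Eventually.of_forall fun x => (by fun_prop : Continuous _).aestronglyMeasurable
  · exact (by fun_prop : Continuous fun t => w t * Real.cos (z * t)).intervalIntegrable _ _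
  · exact (by fun_prop : Continuous fun t => w t * (-(Real.sin (z * t)) * t)).aestronglyMeasurable
  · refine Filter.Eventually.of_forall fun t _ x _ => ?_
    rw [Real.norm_eq_abs, abs_mul, abs_mul, abs_neg]
    have := Real.abs_sin_le_one (x * t)
    gcongr
    nlinarith [abs_nonneg t]
  · exact (by fun_prop : Continuous fun t => |w t| * |t|).intervalIntegrable _ _
  · refine Filter.Eventually.of_forall fun t _ x _ => ?_
    have h1 : HasDerivAt (fun x : ℝ => x * t) t x := by
      simpa using (hasDerivAt_id x).mul_const t
    exact (h1.cos).const_mul (w t)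

lemma hasDerivAt_int_sin (w : ℝ → ℝ) (hw : Continuous w) (z : ℝ) :
    HasDerivAt (fun z : ℝ => ∫ t in (-1 : ℝ)..1, w t * Real.sin (z * t))
      (∫ t in (-1 : ℝ)..1, w t * (Real.cos (z * t) * t)) z := by
  refine (intervalIntegral.hasDerivAt_integral_of_dominated_loc_of_deriv_le
    (F := fun z t => w t * Real.sin (z * t))
    (F' := fun z t => w t * (Real.cos (z * t) * t))
    (s := Set.univ) (bound := fun t => |w t| * |t|) Filter.univ_mem ?_ ?_ ?_ ?_ ?_ ?_).2
  · exact Filter.Eventually.of_forall fun x => (by fun_prop : Continuous _).aestronglyMeasurable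
  · exact (by fun_prop : Continuous fun t => w t * Real.sin (z * t)).intervalIntegrable _ _
  · exact (by fun_prop : Continuous fun t => w t * (Real.cos (z * t) * t)).aestronglyMeasurable
  · refine Filter.Eventually.of_forall fun t _ x _ => ?_
    rw [Real.norm_eq_abs, abs_mul, abs_mul]
    have := Real.abs_cos_le_one (x * t)
    gcongr
    nlinarith [abs_nonneg t]
  · exact (by fun_prop : Continuous fun t => |w t| * |t|).intervalIntegrable _ _
  · refine Filter.Eventually.of_forall fun t _ x _ => ?_
    have h1 : HasDerivAt (fun x : ℝ => x * t) t x := by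
      simpa using (hasDerivAt_id x).mul_const t
    exact (h1.sin).const_mul (w t)

/-- The weight `(1-t²)^μ`. -/
noncomputable def bW (μ t : ℝ) : ℝ := (1 - t ^ 2) ^ μ

lemma bW_cont {μ : ℝ} (hμ : 0 ≤ μ) : Continuous (bW μ) := by
  unfold bW
  exact Continuous.rpow_const (by fun_prop) (fun _ => Or.inr hμ)

/-- Poisson integral (unnormalised Bessel function). -/
noncomputable def bI (μ z : ℝ) : ℝ := ∫ t in (-1 : ℝ)..1, bW μ t * Real.cos (z * t)

/-- Its derivative. -/
noncomputable def bI1 (μ z : ℝ) : ℝ := ∫ t in (-1 : ℝ)..1, bW μ t * (-(Real.sin (z * t)) * t)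

/-- Its second derivative. -/
noncomputable def bI2 (μ z : ℝ) : ℝ := ∫ t in (-1 : ℝ)..1, (-(bW μ t * t)) * (Real.cos (z * t) * t)

lemma bI_deriv {μ : ℝ} (hμ : 0 ≤ μ) (z : ℝ) : HasDerivAt (bI μ) (bI1 μ z) z :=
  hasDerivAt_int_cos _ (bW_cont hμ) z

lemma bI1_deriv {μ : ℝ} (hμ : 0 ≤ μ) (z : ℝ) : HasDerivAt (bI1 μ) (bI2 μ z) z := by
  have hc := bW_cont hμ
  have := hasDerivAt_int_sin (fun t => -(bW μ t * t)) (by fun_prop) z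
  have e : bI1 μ = fun z : ℝ => ∫ t in (-1 : ℝ)..1, (-(bW μ t * t)) * Real.sin (z * t) := by
    funext z
    unfold bI1
    congr 1; funext t; ring
  rw [e]
  exact this

lemma bI_ode {μ : ℝ} (hμ : 0 < μ) (z : ℝ) :
    z * (bI μ z + bI2 μ z) + (2 * μ + 2) * bI1 μ z = 0 := by
  have hc := bW_cont hμ.le
  have hc1 := bW_cont (μ := μ + 1) (by linarith)
  have h := intervalIntegral.integral_mul_deriv_eq_deriv_mul (a := (-1 : ℝ)) (b := 1)
    (u := bW (μ + 1)) (u' := fun t => -(2 * (μ + 1)) * (t * bW μ t))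
    (v := fun t => Real.sin (z * t)) (v' := fun t => Real.cos (z * t) * z) ?_ ?_ ?_ ?_
  · have h1 : bW (μ + 1) 1 = 0 := by
      unfold bW; norm_num; exact Real.zero_rpow (by linarith)
    have h2 : bW (μ + 1) (-1) = 0 := by
      unfold bW; norm_num; exact Real.zero_rpow (by linarith)
    rw [h1, h2] at h
    have e1 : ∫ t in (-1 : ℝ)..1, bW (μ + 1) t * (Real.cos (z * t) * z) =
        z * (bI μ z + bI2 μ z) := by
      unfold bI bI2
      rw [← intervalIntegral.integral_add, ← intervalIntegral.integral_const_mul]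
      · apply intervalIntegral.integral_congr
        intro t ht
        rw [Set.uIcc_of_le (by norm_num)] at ht
        have : bW (μ + 1) t = bW μ t * (1 - t ^ 2) := by
          unfold bW
          rw [Real.rpow_add_one' (by nlinarith [ht.1, ht.2]) (by linarith)]
        simp only [this]; ring
      · exact (by fun_prop : Continuous _).intervalIntegrable _ _
      · exact (by fun_prop : Continuous _).intervalIntegrable _ _
    have e2 : ∫ t in (-1 : ℝ)..1, -(2 * (μ + 1)) * (t * bW μ t) * Real.sin (z * t) =
        (2 * μ + 2) * bI1 μ z := by
      unfold bI1
      rw [← intervalIntegral.integral_const_mul]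
      congr 1; funext t; ring
    rw [e1, e2] at h
    linarith
  · intro x hx
    rw [Set.uIcc_of_le (by norm_num)] at hx
    have h1 : HasDerivAt (fun t : ℝ => 1 - t ^ 2) (-(2 * x)) x := by
      simpa using ((hasDerivAt_id x).pow 2).const_sub 1
    have h2 := h1.rpow_const (p := μ + 1) (Or.inr (by linarith))
    show HasDerivAt (fun t : ℝ => (1 - t ^ 2) ^ (μ + 1)) _ x
    refine h2.congr_deriv ?_
    simp only [bW, show μ + 1 - 1 = μ by ring]; ring
  · intro x _
    have h1 : HasDerivAt (fun x : ℝ => z * x) z x := by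
      simpa using (hasDerivAt_id x).const_mul z
    exact h1.sin
  · exact (by fun_prop : Continuous fun t => -(2 * (μ + 1)) * (t * bW μ t)).intervalIntegrable _ _
  · exact (by fun_prop : Continuous fun t => Real.cos (z * t) * z).intervalIntegrable _ _

lemma bW_nonneg {μ t : ℝ} (ht : t ∈ Set.Icc (-1 : ℝ) 1) : 0 ≤ bW μ t := by
  unfold bW
  exact Real.rpow_nonneg (by nlinarith [ht.1, ht.2]) _

lemma bI_zero (μ : ℝ) : bI μ 0 = ∫ t in (-1 : ℝ)..1, bW μ t := by
  unfold bI; simp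

lemma bI_zero_pos {μ : ℝ} (hμ : 0 < μ) : 0 < bI μ 0 := by
  rw [bI_zero]
  apply intervalIntegral.intervalIntegral_pos_of_pos_on
  · exact (bW_cont hμ.le).intervalIntegrable _ _
  · intro x hx
    unfold bW
    exact Real.rpow_pos_of_pos (by nlinarith [hx.1, hx.2]) _
  · norm_num

lemma bI_abs {μ : ℝ} (hμ : 0 < μ) (z : ℝ) : |bI μ z| ≤ bI μ 0 := by
  rw [bI_zero]
  unfold bI
  have hc := bW_cont hμ.le
  refine (intervalIntegral.abs_integral_le_integral_abs (by norm_num)).trans ?_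
  apply intervalIntegral.integral_mono_on (by norm_num)
  · exact (by fun_prop : Continuous fun t => |bW μ t * Real.cos (z * t)|).intervalIntegrable _ _
  · exact hc.intervalIntegrable _ _
  · intro t ht
    rw [abs_mul, abs_of_nonneg (bW_nonneg ht)]
    nlinarith [bW_nonneg (μ := μ) ht, Real.abs_cos_le_one (z * t)]

lemma bI1_zero (μ : ℝ) : bI1 μ 0 = 0 := by
  unfold bI1; simp

end BesselPart

section ContourPart

lemma ofReal_mul_cpow {r : ℝ} (hr : 0 < r) {w : ℂ} (hw : w ≠ 0) (μ : ℝ) :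
    ((r : ℂ) * w) ^ (μ : ℂ) = ((r ^ μ : ℝ) : ℂ) * w ^ (μ : ℂ) := by
  have hr' : (r : ℂ) ≠ 0 := by exact_mod_cast hr.ne'
  rw [Complex.cpow_def_of_ne_zero (mul_ne_zero hr' hw), Complex.cpow_def_of_ne_zero hw,
    Complex.log_ofReal_mul hr hw, add_mul, Complex.exp_add, Complex.ofReal_cpow hr.le,
    Complex.cpow_def_of_ne_zero hr', Complex.ofReal_log hr.le]

lemma laplace_lim {μ : ℝ} (hμ : 0 < μ) {σ : ℂ} (hσ : σ.im ≠ 0) :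
    Filter.Tendsto (fun z : ℝ => ((z ^ (μ + 1) : ℝ) : ℂ) *
      ∫ y in (0 : ℝ)..1, ((y : ℂ) * ((y : ℂ) + σ)) ^ (μ : ℂ) * ((Real.exp (-(z * y)) : ℝ) : ℂ))
      Filter.atTop (nhds ((Real.Gamma (μ + 1) : ℂ) * σ ^ (μ : ℂ))) := by
  have hne : ∀ y : ℝ, (y : ℂ) + σ ≠ 0 := by
    intro y h
    apply hσ
    have := congrArg Complex.im h
    simpa using this
  have key : ∀ᶠ z : ℝ in Filter.atTop, (∫ r in Set.Ioi (0 : ℝ),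
      Set.indicator (Set.Ioc 0 z) (fun r : ℝ => ((Real.exp (-r) * r ^ μ : ℝ) : ℂ) *
        (((r / z : ℝ) : ℂ) + σ) ^ (μ : ℂ)) r) = ((z ^ (μ + 1) : ℝ) : ℂ) *
      ∫ y in (0 : ℝ)..1, ((y : ℂ) * ((y : ℂ) + σ)) ^ (μ : ℂ) * ((Real.exp (-(z * y)) : ℝ) : ℂ) := by
    filter_upwards [Filter.eventually_gt_atTop 0] with z hz
    have h1 := intervalIntegral.integral_comp_div (a := 0) (b := z)
      (fun y : ℝ => ((y : ℂ) * ((y : ℂ) + σ)) ^ (μ : ℂ) * ((Real.exp (-(z * y)) : ℝ) : ℂ)) hz.ne'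
    rw [zero_div, div_self hz.ne'] at h1
    rw [setIntegral_indicator measurableSet_Ioc,
      Set.inter_eq_self_of_subset_right (Set.Ioc_subset_Ioi_self),
      Real.rpow_add_one hz.ne', Complex.ofReal_mul, mul_assoc, ← Complex.real_smul (x := z), ← h1,
      ← intervalIntegral.integral_of_le hz.le, ← intervalIntegral.integral_const_mul]
    apply intervalIntegral.integral_congr_ae
    refine Filter.Eventually.of_forall fun r hr => ?_
    rw [Set.uIoc_of_le hz.le] at hr
    have hrz : 0 < r / z := div_pos hr.1 hz
    rw [ofReal_mul_cpow hrz (hne _), Real.div_rpow hr.1.le hz.le, mul_div_cancel₀ r hz.ne']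
    have : ((z ^ μ : ℝ) : ℂ) ≠ 0 := by exact_mod_cast (Real.rpow_pos_of_pos hz μ).ne'
    push_cast
    field_simp
  refine Filter.Tendsto.congr' key ?_
  have hlim : (Real.Gamma (μ + 1) : ℂ) * σ ^ (μ : ℂ) = ∫ r in Set.Ioi (0 : ℝ),
      ((Real.exp (-r) * r ^ μ : ℝ) : ℂ) * σ ^ (μ : ℂ) := by
    rw [integral_mul_const, integral_complex_ofReal, Real.Gamma_eq_integral (by linarith),
      show μ + 1 - 1 = μ by ring]
  rw [hlim]
  have hIntg : IntegrableOn (fun r : ℝ => Real.exp (-r) * r ^ μ) (Set.Ioi 0) := by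
    have := Real.GammaIntegral_convergent (s := μ + 1) (by linarith)
    rwa [show μ + 1 - 1 = μ by ring] at this
  refine tendsto_integral_filter_of_dominated_convergence
    (fun r => (Real.exp (-r) * r ^ μ) * (1 + ‖σ‖) ^ μ) ?_ ?_ (hIntg.mul_const _) ?_
  · filter_upwards [Filter.eventually_gt_atTop 0] with z hz
    refine AEStronglyMeasurable.indicator ?_ measurableSet_Ioc
    refine Continuous.aestronglyMeasurable ?_
    refine Continuous.mul ?_ ?_
    · refine Complex.continuous_ofReal.comp ?_
      exact (by fun_prop : Continuous fun r : ℝ => Real.exp (-r)).mul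
        (Real.continuous_rpow_const hμ.le)
    · refine continuous_iff_continuousAt.2 fun r => ?_
      have hc : ContinuousAt (fun w : ℂ => w ^ (μ : ℂ)) (((r / z : ℝ) : ℂ) + σ) :=
        Complex.continuousAt_cpow_const_of_re_pos (Or.inr (by simpa using hσ)) (by simpa using hμ)
      have hg : Continuous fun r : ℝ => (((r / z : ℝ) : ℂ) + σ) := by fun_prop
      exact ContinuousAt.comp (f := fun r : ℝ => (((r / z : ℝ) : ℂ) + σ)) hc hg.continuousAt
  · filter_upwards [Filter.eventually_gt_atTop 0] with z hz
    refine (ae_restrict_iff' measurableSet_Ioi).2 (Filter.Eventually.of_forall fun r hr => ?_)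
    have hr0 : 0 < r := hr
    have hp : 0 ≤ Real.exp (-r) * r ^ μ := by positivity
    by_cases hrz : r ∈ Set.Ioc 0 z
    · rw [Set.indicator_of_mem hrz, norm_mul, Complex.norm_real, Real.norm_of_nonneg hp,
        Complex.norm_cpow_real]
      gcongr
      refine (norm_add_le _ _).trans ?_
      gcongr
      rw [Complex.norm_real, Real.norm_of_nonneg (by positivity)]
      exact (div_le_one hz).2 hrz.2
    · rw [Set.indicator_of_notMem hrz]
      simp only [norm_zero]
      positivity
  · refine (ae_restrict_iff' measurableSet_Ioi).2 (Filter.Eventually.of_forall fun r hr => ?_)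
    have hr0 : 0 < r := hr
    have h1 : Filter.Tendsto (fun z : ℝ => ((Real.exp (-r) * r ^ μ : ℝ) : ℂ) *
        (((r / z : ℝ) : ℂ) + σ) ^ (μ : ℂ)) Filter.atTop
        (nhds (((Real.exp (-r) * r ^ μ : ℝ) : ℂ) * σ ^ (μ : ℂ))) := by
      refine Filter.Tendsto.const_mul _ ?_
      have hc : ContinuousAt (fun w : ℂ => w ^ (μ : ℂ)) σ :=
        Complex.continuousAt_cpow_const_of_re_pos (Or.inr hσ) (by simpa using hμ)
      refine hc.tendsto.comp ?_
      have h2 : Filter.Tendsto (fun z : ℝ => r / z) Filter.atTop (nhds 0) :=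
        Filter.Tendsto.const_div_atTop Filter.tendsto_id r
      have h3 := ((Complex.continuous_ofReal.tendsto 0).comp h2).add_const σ
      simpa using h3
    refine h1.congr' ?_
    filter_upwards [Filter.eventually_ge_atTop r] with z hz
    rw [Set.indicator_of_mem]
    exact ⟨hr0, hz⟩

lemma rect_identity {μ : ℝ} (hμ : 0 < μ) (z : ℝ) :
    (∫ x in (-1 : ℝ)..1, ((bW μ x : ℝ) : ℂ) * Complex.exp (Complex.I * z * x)) =
      (∫ x in (-1 : ℝ)..1, (1 - ((x : ℂ) + Complex.I) ^ 2) ^ (μ : ℂ) *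
          Complex.exp (Complex.I * z * ((x : ℂ) + Complex.I)))
      + Complex.I * Complex.exp (-(Complex.I * z)) *
        (∫ y in (0 : ℝ)..1, ((y : ℂ) * ((y : ℂ) + 2 * Complex.I)) ^ (μ : ℂ) *
          ((Real.exp (-(z * y)) : ℝ) : ℂ))
      - Complex.I * Complex.exp (Complex.I * z) *
        (∫ y in (0 : ℝ)..1, ((y : ℂ) * ((y : ℂ) + -(2 * Complex.I))) ^ (μ : ℂ) *
          ((Real.exp (-(z * y)) : ℝ) : ℂ)) := by
  have h := Complex.integral_boundary_rect_eq_zero_of_continuousOn_of_differentiableOn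
    (fun w : ℂ => (1 - w ^ 2) ^ (μ : ℂ) * Complex.exp (Complex.I * z * w)) (-1) (1 + Complex.I) ?_ ?_
  · simp only [Complex.neg_re, Complex.one_re, Complex.neg_im, Complex.one_im, Complex.add_re,
      Complex.add_im, Complex.I_re, Complex.I_im, neg_zero, add_zero, zero_add, Complex.ofReal_zero,
      zero_mul, Complex.ofReal_one, one_mul, Complex.ofReal_neg, smul_eq_mul] at h
    have e0 : ∫ x in (-1 : ℝ)..1, (1 - (x : ℂ) ^ 2) ^ (μ : ℂ) * Complex.exp (Complex.I * z * x) =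
        ∫ x in (-1 : ℝ)..1, ((bW μ x : ℝ) : ℂ) * Complex.exp (Complex.I * z * x) := by
      apply intervalIntegral.integral_congr
      intro x hx
      rw [Set.uIcc_of_le (by norm_num)] at hx
      simp only [bW]
      rw [Complex.ofReal_cpow (by nlinarith [hx.1, hx.2])]
      push_cast; ring
    have e1 : ∫ y in (0 : ℝ)..1, (1 - (1 + (y : ℂ) * Complex.I) ^ 2) ^ (μ : ℂ) *
        Complex.exp (Complex.I * z * (1 + (y : ℂ) * Complex.I)) =
        Complex.exp (Complex.I * z) *
        (∫ y in (0 : ℝ)..1, ((y : ℂ) * ((y : ℂ) + -(2 * Complex.I))) ^ (μ : ℂ) *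
          ((Real.exp (-(z * y)) : ℝ) : ℂ)) := by
      rw [← intervalIntegral.integral_const_mul]
      congr 1
      funext y
      have a1 : 1 - (1 + (y : ℂ) * Complex.I) ^ 2 = (y : ℂ) * ((y : ℂ) + -(2 * Complex.I)) := by
        ring_nf; rw [Complex.I_sq]; ring
      have a2 : Complex.I * z * (1 + (y : ℂ) * Complex.I) = Complex.I * z + -(z * y) := by
        ring_nf; rw [Complex.I_sq]; ring
      rw [a1, a2, Complex.exp_add]; push_cast; ring
    have e2 : ∫ y in (0 : ℝ)..1, (1 - (-1 + (y : ℂ) * Complex.I) ^ 2) ^ (μ : ℂ) *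
        Complex.exp (Complex.I * z * (-1 + (y : ℂ) * Complex.I)) =
        Complex.exp (-(Complex.I * z)) *
        (∫ y in (0 : ℝ)..1, ((y : ℂ) * ((y : ℂ) + (2 * Complex.I))) ^ (μ : ℂ) *
          ((Real.exp (-(z * y)) : ℝ) : ℂ)) := by
      rw [← intervalIntegral.integral_const_mul]
      congr 1
      funext y
      have a1 : 1 - (-1 + (y : ℂ) * Complex.I) ^ 2 = (y : ℂ) * ((y : ℂ) + (2 * Complex.I)) := by
        ring_nf; rw [Complex.I_sq]; ring
      have a2 : Complex.I * z * (-1 + (y : ℂ) * Complex.I) = -(Complex.I * z) + -(z * y) := by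
        ring_nf; rw [Complex.I_sq]; ring
      rw [a1, a2, Complex.exp_add]; push_cast; ring
    rw [e0, e1, e2] at h
    linear_combination h
  · intro w hw
    refine ContinuousAt.continuousWithinAt ?_
    refine ContinuousAt.mul ?_ (by fun_prop)
    rw [Complex.mem_reProdIm] at hw
    simp only [Complex.neg_re, Complex.one_re, Complex.neg_im, Complex.one_im, Complex.add_re,
      Complex.add_im, Complex.I_re, Complex.I_im, neg_zero, add_zero, zero_add] at hw
    rw [Set.uIcc_of_le (by norm_num), Set.uIcc_of_le (by norm_num)] at hw
    have hc : ContinuousAt (fun v : ℂ => v ^ (μ : ℂ)) (1 - w ^ 2) := by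
      refine Complex.continuousAt_cpow_const_of_re_pos (Or.inl ?_) (by simpa using hμ)
      simp only [Complex.sub_re, Complex.one_re, pow_two, Complex.mul_re]
      nlinarith [hw.1.1, hw.1.2, sq_nonneg w.im]
    exact ContinuousAt.comp (f := fun w : ℂ => 1 - w ^ 2) hc (by fun_prop)
  · intro w hw
    refine DifferentiableAt.differentiableWithinAt ?_
    refine DifferentiableAt.mul ?_ (by fun_prop)
    rw [Complex.mem_reProdIm] at hw
    simp only [Complex.neg_re, Complex.one_re, Complex.neg_im, Complex.one_im, Complex.add_re,
      Complex.add_im, Complex.I_re, Complex.I_im, neg_zero, add_zero, zero_add] at hw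
    rw [min_eq_left (by norm_num), max_eq_right (by norm_num)] at hw
    refine DifferentiableAt.cpow_const (by fun_prop) ?_
    left
    simp only [Complex.sub_re, Complex.one_re, pow_two, Complex.mul_re]
    nlinarith [hw.1.1, hw.1.2, sq_nonneg w.im]

lemma top_lim {μ : ℝ} (hμ : 0 < μ) :
    Filter.Tendsto (fun z : ℝ => ((z ^ (μ + 1) : ℝ) : ℂ) *
      (∫ x in (-1 : ℝ)..1, (1 - ((x : ℂ) + Complex.I) ^ 2) ^ (μ : ℂ) *
          Complex.exp (Complex.I * z * ((x : ℂ) + Complex.I)))) Filter.atTop (nhds 0) := by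
  have h0 := (tendsto_rpow_mul_exp_neg_mul_atTop_nhds_zero (μ + 1) 1 one_pos).mul_const
    ((5 : ℝ) ^ μ * 2)
  rw [zero_mul] at h0
  refine squeeze_zero_norm' ?_ h0
  filter_upwards [Filter.eventually_gt_atTop 0] with z hz
  rw [norm_mul, Complex.norm_real, Real.norm_of_nonneg (by positivity), mul_assoc]
  gcongr
  have := intervalIntegral.norm_integral_le_of_norm_le_const (a := (-1 : ℝ)) (b := 1)
    (f := fun x : ℝ => (1 - ((x : ℂ) + Complex.I) ^ 2) ^ (μ : ℂ) *
          Complex.exp (Complex.I * z * ((x : ℂ) + Complex.I))) (C := 5 ^ μ * Real.exp (-1 * z)) ?_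
  · refine this.trans (le_of_eq ?_)
    norm_num; ring
  · intro x hx
    rw [Set.uIoc_of_le (by norm_num)] at hx
    rw [norm_mul, Complex.norm_cpow_real, Complex.norm_exp]
    have h1 : (Complex.I * z * ((x : ℂ) + Complex.I)).re = -1 * z := by simp
    rw [h1]
    gcongr
    refine (norm_sub_le _ _).trans ?_
    rw [norm_pow, norm_one]
    have h2 : ‖(x : ℂ) + Complex.I‖ ≤ 2 := by
      refine (norm_add_le _ _).trans ?_
      rw [Complex.norm_real, Complex.norm_I, Real.norm_eq_abs]
      have := abs_le.2 ⟨hx.1.le, hx.2⟩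
      linarith
    nlinarith [norm_nonneg ((x : ℂ) + Complex.I)]

lemma two_I_cpow (μ : ℝ) : (2 * Complex.I) ^ (μ : ℂ) =
    ((2 ^ μ : ℝ) : ℂ) * Complex.exp (((π / 2 * μ : ℝ) : ℂ) * Complex.I) := by
  have := ofReal_mul_cpow (r := 2) (by norm_num) Complex.I_ne_zero μ
  push_cast at this ⊢
  rw [this, Complex.cpow_def_of_ne_zero Complex.I_ne_zero, Complex.log_I]
  congr 2; ring

lemma neg_two_I_cpow (μ : ℝ) : (-(2 * Complex.I)) ^ (μ : ℂ) =
    ((2 ^ μ : ℝ) : ℂ) * Complex.exp (((-(π / 2 * μ) : ℝ) : ℂ) * Complex.I) := by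
  have := ofReal_mul_cpow (r := 2) (by norm_num) (neg_ne_zero.2 Complex.I_ne_zero) μ
  push_cast at this ⊢
  rw [show -(2 * Complex.I) = 2 * (-Complex.I) by ring, this,
    Complex.cpow_def_of_ne_zero (neg_ne_zero.2 Complex.I_ne_zero), Complex.log_neg_I]
  congr 2; ring

lemma bI_eq_re {μ : ℝ} (hμ : 0 < μ) (z : ℝ) :
    bI μ z = (∫ x in (-1 : ℝ)..1, ((bW μ x : ℝ) : ℂ) * Complex.exp (Complex.I * z * x)).re := by
  have hc := bW_cont hμ.le
  have h := intervalIntegral.intervalIntegral_re (𝕜 := ℂ) (μ := volume) (a := (-1 : ℝ)) (b := 1)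
    (f := fun x : ℝ => ((bW μ x : ℝ) : ℂ) * Complex.exp (Complex.I * z * x))
    ((by fun_prop : Continuous _).intervalIntegrable _ _)
  simp only [RCLike.re_to_complex] at h
  rw [← h]
  unfold bI
  congr 1; funext x
  rw [Complex.re_ofReal_mul, show Complex.I * (z : ℂ) * x = ((z * x : ℝ) : ℂ) * Complex.I by
    push_cast; ring, Complex.exp_ofReal_mul_I_re]

theorem bI_asymp {μ : ℝ} (hμ : 0 < μ) :
    Filter.Tendsto (fun z : ℝ => z ^ (μ + 1) * bI μ z -
      2 ^ (μ + 1) * Real.Gamma (μ + 1) * Real.cos (z - (μ + 1) * π / 2)) Filter.atTop (nhds 0) := by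
  have hT := top_lim hμ
  have hP := laplace_lim hμ (σ := 2 * Complex.I) (by simp)
  have hM := laplace_lim hμ (σ := -(2 * Complex.I)) (by simp)
  rw [two_I_cpow] at hP
  rw [neg_two_I_cpow] at hM
  rw [tendsto_iff_norm_sub_tendsto_zero] at hT hP hM
  have hS := (hT.add hP).add hM
  rw [add_zero, add_zero] at hS
  refine squeeze_zero_norm (fun z => ?_) hS
  set T := ∫ x in (-1 : ℝ)..1, (1 - ((x : ℂ) + Complex.I) ^ 2) ^ (μ : ℂ) *
          Complex.exp (Complex.I * z * ((x : ℂ) + Complex.I)) with hTdef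
  set P := ∫ y in (0 : ℝ)..1, ((y : ℂ) * ((y : ℂ) + 2 * Complex.I)) ^ (μ : ℂ) *
          ((Real.exp (-(z * y)) : ℝ) : ℂ) with hPdef
  set M := ∫ y in (0 : ℝ)..1, ((y : ℂ) * ((y : ℂ) + -(2 * Complex.I))) ^ (μ : ℂ) *
          ((Real.exp (-(z * y)) : ℝ) : ℂ) with hMdef
  have hb := bI_eq_re hμ z
  rw [rect_identity hμ z, ← hTdef, ← hPdef, ← hMdef] at hb
  set Z : ℂ := ((z ^ (μ + 1) : ℝ) : ℂ) with hZ
  have heq : z ^ (μ + 1) * bI μ z -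
      2 ^ (μ + 1) * Real.Gamma (μ + 1) * Real.cos (z - (μ + 1) * π / 2) =
      ((Z * T - 0) + Complex.I * Complex.exp (-(Complex.I * z)) *
        (Z * P - (Real.Gamma (μ + 1) : ℂ) * (((2 ^ μ : ℝ) : ℂ) *
          Complex.exp (((π / 2 * μ : ℝ) : ℂ) * Complex.I))) -
        Complex.I * Complex.exp (Complex.I * z) *
        (Z * M - (Real.Gamma (μ + 1) : ℂ) * (((2 ^ μ : ℝ) : ℂ) *
          Complex.exp (((-(π / 2 * μ) : ℝ) : ℂ) * Complex.I)))).re := by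
    have c1 : ((Z * T - 0) + Complex.I * Complex.exp (-(Complex.I * z)) *
        (Z * P - (Real.Gamma (μ + 1) : ℂ) * (((2 ^ μ : ℝ) : ℂ) *
          Complex.exp (((π / 2 * μ : ℝ) : ℂ) * Complex.I))) -
        Complex.I * Complex.exp (Complex.I * z) *
        (Z * M - (Real.Gamma (μ + 1) : ℂ) * (((2 ^ μ : ℝ) : ℂ) *
          Complex.exp (((-(π / 2 * μ) : ℝ) : ℂ) * Complex.I)))) =
        ((z ^ (μ + 1) : ℝ) : ℂ) * (T + Complex.I * Complex.exp (-(Complex.I * z)) * P -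
          Complex.I * Complex.exp (Complex.I * z) * M) -
        (((Real.Gamma (μ + 1) * 2 ^ μ : ℝ) : ℂ)) *
          (Complex.exp ((((μ + 1) * π / 2 - z : ℝ) : ℂ) * Complex.I) +
           Complex.exp (((z - (μ + 1) * π / 2 : ℝ) : ℂ) * Complex.I)) := by
      have d1 : Complex.exp ((((μ + 1) * π / 2 - z : ℝ) : ℂ) * Complex.I) =
          Complex.I * Complex.exp (-(Complex.I * z)) *
            Complex.exp (((π / 2 * μ : ℝ) : ℂ) * Complex.I) := by
        nth_rewrite 2 [← Complex.exp_pi_div_two_mul_I]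
        rw [← Complex.exp_add, ← Complex.exp_add]
        congr 1; push_cast; ring
      have d2 : Complex.exp (((z - (μ + 1) * π / 2 : ℝ) : ℂ) * Complex.I) =
          (-Complex.I) * Complex.exp (Complex.I * z) *
            Complex.exp (((-(π / 2 * μ) : ℝ) : ℂ) * Complex.I) := by
        rw [← Complex.exp_neg_pi_div_two_mul_I]
        rw [← Complex.exp_add, ← Complex.exp_add]
        congr 1; push_cast; ring
      rw [d1, d2, hZ]; push_cast; ring
    rw [c1, Complex.sub_re, Complex.re_ofReal_mul, Complex.re_ofReal_mul, ← hb, Complex.add_re,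
      Complex.exp_ofReal_mul_I_re, Complex.exp_ofReal_mul_I_re,
      ← Real.cos_neg ((μ + 1) * π / 2 - z), Real.rpow_add_one (x := 2) (by norm_num)]
    rw [show -((μ + 1) * π / 2 - z) = z - (μ + 1) * π / 2 by ring]
    ring
  rw [heq, Real.norm_eq_abs]
  refine (Complex.abs_re_le_norm _).trans ((norm_sub_le _ _).trans ?_)
  refine add_le_add ((norm_add_le _ _).trans ?_) (le_of_eq ?_)
  · refine add_le_add le_rfl (le_of_eq ?_)
    rw [norm_mul, norm_mul, Complex.norm_I, Complex.norm_exp]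
    simp
  · rw [norm_mul, norm_mul, Complex.norm_I, Complex.norm_exp]
    simp

end ContourPart

section BesselTwo

lemma bI_zero_eq {μ : ℝ} (hμ : 0 < μ) :
    bI μ 0 * Real.Gamma (μ + 3 / 2) = √π * Real.Gamma (μ + 1) := by
  rw [bI_zero]
  have h1 := intervalIntegral.integral_comp_mul_sub (a := 0) (b := 1) (bW μ) (c := 2) (by norm_num) 1
  rw [show (2 : ℝ) * 0 - 1 = -1 by norm_num, show (2 : ℝ) * 1 - 1 = 1 by norm_num, smul_eq_mul] at h1
  have h2 : ∫ x in (0 : ℝ)..1, bW μ (2 * x - 1) = 4 ^ μ * ∫ x in (0 : ℝ)..1, x ^ μ * (1 - x) ^ μ := by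
    rw [← intervalIntegral.integral_const_mul]
    apply intervalIntegral.integral_congr
    intro x hx
    rw [Set.uIcc_of_le (by norm_num)] at hx
    simp only [bW]
    rw [show 1 - (2 * x - 1) ^ 2 = 4 * (x * (1 - x)) by ring,
      Real.mul_rpow (by norm_num) (mul_nonneg hx.1 (by linarith [hx.2])),
      Real.mul_rpow hx.1 (by linarith [hx.2])]
  have h3 := Complex.Gamma_mul_Gamma_eq_betaIntegral (s := ((μ + 1 : ℝ) : ℂ)) (t := ((μ + 1 : ℝ) : ℂ))
    (by rw [Complex.ofReal_re]; linarith) (by rw [Complex.ofReal_re]; linarith)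
  have h4 : Complex.betaIntegral ((μ + 1 : ℝ) : ℂ) ((μ + 1 : ℝ) : ℂ) =
      ((∫ x in (0 : ℝ)..1, x ^ μ * (1 - x) ^ μ : ℝ) : ℂ) := by
    unfold Complex.betaIntegral
    rw [← intervalIntegral.integral_ofReal]
    apply intervalIntegral.integral_congr
    intro x hx
    rw [Set.uIcc_of_le (by norm_num)] at hx
    simp only
    rw [Complex.ofReal_mul, Complex.ofReal_cpow hx.1, Complex.ofReal_cpow (by linarith [hx.2])]
    push_cast
    norm_num
  rw [h4, ← Complex.ofReal_add, Complex.Gamma_ofReal, Complex.Gamma_ofReal] at h3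
  have h5 : Real.Gamma (μ + 1) * Real.Gamma (μ + 1) = Real.Gamma (μ + 1 + (μ + 1)) *
      ∫ x in (0 : ℝ)..1, x ^ μ * (1 - x) ^ μ := by exact_mod_cast h3
  have h6 := Real.Gamma_mul_Gamma_add_half (μ + 1)
  have hG1 : 0 < Real.Gamma (μ + 1) := Real.Gamma_pos_of_pos (by linarith)
  have hG2 : 0 < Real.Gamma (μ + 1 + (μ + 1)) := Real.Gamma_pos_of_pos (by linarith)
  rw [h2] at h1
  have h7 : ∫ x in (-1 : ℝ)..1, bW μ x = 2 * (4 ^ μ * ∫ x in (0 : ℝ)..1, x ^ μ * (1 - x) ^ μ) := by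
    rw [h1]; ring
  rw [h7]
  rw [show μ + 1 + 1 / 2 = μ + 3 / 2 by ring, show 2 * (μ + 1) = μ + 1 + (μ + 1) by ring] at h6
  set J := ∫ x in (0 : ℝ)..1, x ^ μ * (1 - x) ^ μ
  have h8 : (2 : ℝ) ^ (1 - (μ + 1 + (μ + 1))) * (2 * 4 ^ μ) = 1 := by
    rw [show (4 : ℝ) = 2 ^ (2 : ℝ) by norm_num, ← Real.rpow_mul (by norm_num)]
    nth_rewrite 2 [show (2 : ℝ) = 2 ^ (1 : ℝ) by norm_num]
    rw [← Real.rpow_add (by norm_num), ← Real.rpow_add (by norm_num)]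
    rw [show (1 - (μ + 1 + (μ + 1)) + (1 + 2 * μ)) = 0 by ring, Real.rpow_zero]
  have h9 : Real.Gamma (μ + 1) * (2 * (4 ^ μ * J) * Real.Gamma (μ + 3 / 2)) =
      Real.Gamma (μ + 1) * (√π * Real.Gamma (μ + 1)) := by
    calc _ = (2 * 4 ^ μ) * J * (Real.Gamma (μ + 1) * Real.Gamma (μ + 3 / 2)) := by ring
      _ = (2 ^ (1 - (μ + 1 + (μ + 1))) * (2 * 4 ^ μ)) * √π * (Real.Gamma (μ + 1 + (μ + 1)) * J) := by
          rw [h6]; ring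
      _ = _ := by rw [h8, ← h5]; ring
  exact mul_left_cancel₀ hG1.ne' h9

/-- `h → 0` with `|hpD| ≤ C k z^{-k-1}` gives `|h| ≤ C z^{-k}`. -/
lemma decay_of_deriv (h hpD : ℝ → ℝ) (C : ℝ) (k : ℕ) (hk : 1 ≤ k)
    (hd : ∀ z, 1 ≤ z → HasDerivAt h (hpD z) z) (hlim : Filter.Tendsto h Filter.atTop (nhds 0))
    (hb : ∀ z, 1 ≤ z → |hpD z| ≤ C / z ^ (k + 1)) : ∀ z, 1 ≤ z → |h z| ≤ C / z ^ k := by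
  have hC : 0 ≤ C := by
    have := (abs_nonneg _).trans (hb 1 le_rfl)
    simpa using this
  have main : ∀ (g g' : ℝ → ℝ), (∀ z, 1 ≤ z → HasDerivAt g (g' z) z) →
      Filter.Tendsto g Filter.atTop (nhds 0) → (∀ z, 1 ≤ z → g' z ≤ C / z ^ (k + 1)) →
      ∀ z, 1 ≤ z → -(C / z ^ k) ≤ g z := by
    intro g g' hgd hgl hgb z hz
    have hder : ∀ x, 1 ≤ x → HasDerivAt (fun x => g x + C / x ^ k)
        (g' x + -(C * (k * x ^ (k - 1))) / (x ^ k) ^ 2) x := by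
      intro x hx
      have hx0 : x ≠ 0 := by linarith
      have := ((hasDerivAt_const x C).div (hasDerivAt_pow k x) (pow_ne_zero k hx0))
      refine (hgd x hx).add (this.congr_deriv ?_)
      ring
    have hanti : AntitoneOn (fun x => g x + C / x ^ k) (Set.Ici 1) := by
      apply antitoneOn_of_deriv_nonpos (convex_Ici 1)
      · intro x hx; exact (hder x hx).continuousAt.continuousWithinAt
      · intro x hx
        rw [interior_Ici] at hx
        exact (hder x (le_of_lt hx)).differentiableAt.differentiableWithinAt
      · intro x hx
        rw [interior_Ici] at hx
        have hx1 : 1 < x := hx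
        have hx0 : 0 < x := by linarith
        rw [(hder x hx1.le).deriv]
        have e : -(C * (k * x ^ (k - 1))) / (x ^ k) ^ 2 = -(k * (C / x ^ (k + 1))) := by
          obtain ⟨j, rfl⟩ : ∃ j, k = j + 1 := ⟨k - 1, by omega⟩
          rw [Nat.add_sub_cancel]
          field_simp
          ring
        rw [e]
        have h1 := hgb x hx1.le
        have h2 : (1 : ℝ) ≤ k := by exact_mod_cast hk
        have h3 : 0 ≤ C / x ^ (k + 1) := by positivity
        nlinarith
    have hl : Filter.Tendsto (fun x : ℝ => g x + C / x ^ k) Filter.atTop (nhds 0) := by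
      have : Filter.Tendsto (fun x : ℝ => C / x ^ k) Filter.atTop (nhds 0) :=
        Filter.Tendsto.const_div_atTop (Filter.tendsto_pow_atTop (by omega)) C
      simpa using hgl.add this
    have : (0 : ℝ) ≤ g z + C / z ^ k := by
      refine le_of_tendsto hl ?_
      filter_upwards [Filter.eventually_ge_atTop z] with x hx
      exact hanti hz (hz.trans hx) hx
    linarith
  intro z hz
  rw [abs_le]
  refine ⟨main h hpD hd hlim (fun z hz => (le_abs_self _).trans (hb z hz)) z hz, ?_⟩
  have := main (fun x => -h x) (fun x => -hpD x) (fun z hz => (hd z hz).neg)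
    (by simpa using hlim.neg) (fun z hz => (neg_le_abs _).trans (hb z hz)) z hz
  linarith

/-- Taylor estimate for the derivative. -/
lemma deriv_bound (h hpD hppD : ℝ → ℝ) (z A D : ℝ)
    (hd : ∀ x, z ≤ x → HasDerivAt h (hpD x) x) (hd' : ∀ x, z ≤ x → HasDerivAt hpD (hppD x) x)
    (h0 : |h z| ≤ A) (h1 : |h (z + 1)| ≤ A) (h2 : ∀ x, z ≤ x → |hppD x| ≤ D) :
    |hpD z| ≤ 2 * A + D := by
  obtain ⟨c, hc, hcs⟩ := exists_hasDerivAt_eq_slope h hpD (by linarith : z < z + 1)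
    (fun x hx => (hd x hx.1).continuousAt.continuousWithinAt) (fun x hx => hd x hx.1.le)
  obtain ⟨e, he, hes⟩ := exists_hasDerivAt_eq_slope hpD hppD hc.1
    (fun x hx => (hd' x hx.1).continuousAt.continuousWithinAt) (fun x hx => hd' x hx.1.le)
  have hz1 : z + 1 - z = 1 := by ring
  rw [hz1, div_one] at hcs
  have hD := h2 e he.1.le
  have hcz : 0 < c - z := by linarith [hc.1]
  rw [eq_div_iff hcz.ne'] at hes
  have hc1 : c - z ≤ 1 := by linarith [hc.2]
  have : |hppD e * (c - z)| ≤ D := by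
    rw [abs_mul, abs_of_pos hcz]
    nlinarith [abs_nonneg (hppD e)]
  rw [abs_le] at *
  constructor <;> nlinarith [this.1, this.2, h0.1, h0.2, h1.1, h1.2]

lemma perturb_decay (e epD eppD : ℝ → ℝ) (M R : ℝ) (hM : 0 ≤ M) (hR : 0 ≤ R)
    (hd : ∀ z, 1 ≤ z → HasDerivAt e (epD z) z) (hd' : ∀ z, 1 ≤ z → HasDerivAt epD (eppD z) z)
    (hode : ∀ z, 1 ≤ z → |eppD z + e z| ≤ M * |e z| / z ^ 2 + R / z ^ 3)
    (hlim : Filter.Tendsto e Filter.atTop (nhds 0)) :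
    ∃ C, 0 ≤ C ∧ ∀ z, 1 ≤ z → |e z| ≤ C / z ^ 2 ∧ |epD z| ≤ C / z ^ 2 := by

  obtain ⟨C0, hC0, hb0⟩ : ∃ C0, 0 ≤ C0 ∧ ∀ z, 1 ≤ z → |e z| ≤ C0 := by
    have h1 := hlim.abs
    rw [abs_zero] at h1
    have h2 := h1.eventually (gt_mem_nhds (show (0 : ℝ) < 1 by norm_num))
    obtain ⟨Z, hZ⟩ := Filter.eventually_atTop.1 h2
    obtain ⟨C, hC⟩ := (isCompact_Icc (a := (1 : ℝ)) (b := Z)).exists_bound_of_continuousOn (f := e)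
      (fun x hx => (hd x hx.1).continuousAt.continuousWithinAt)
    refine ⟨max C 1, by positivity, fun z hz => ?_⟩
    rcases le_total z Z with h | h
    · exact (hC z ⟨hz, h⟩).trans (le_max_left _ _)
    · exact (hZ z h).le.trans (le_max_right _ _)

  have hlim' : Filter.Tendsto epD Filter.atTop (nhds 0) := by
    rw [Metric.tendsto_atTop]
    intro ε hε
    have h1 := hlim.abs
    rw [abs_zero] at h1
    set δ := ε / (4 + M) / 2 with hδ
    have hδ0 : 0 < δ := by positivity
    have h3 : Filter.Tendsto (fun x : ℝ => R / x ^ 3) Filter.atTop (nhds 0) :=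
      Filter.Tendsto.const_div_atTop (Filter.tendsto_pow_atTop (by norm_num)) R
    obtain ⟨Z, hZ⟩ := Filter.eventually_atTop.1 ((h1.eventually (gt_mem_nhds hδ0)).and
      ((h3.eventually (gt_mem_nhds hδ0)).and (Filter.eventually_ge_atTop 1)))
    refine ⟨Z, fun z hz => ?_⟩
    have hz1 := (hZ z hz).2.2
    have hb := deriv_bound e epD eppD z δ (M * δ + 2 * δ) (fun x hx => hd x (hz1.trans hx))
      (fun x hx => hd' x (hz1.trans hx)) (hZ z hz).1.le (hZ (z + 1) (by linarith)).1.le ?_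
    · rw [Real.dist_eq, sub_zero]
      refine lt_of_le_of_lt hb ?_
      have : (4 + M) * δ = ε / 2 := by rw [hδ]; field_simp
      nlinarith
    · intro x hx
      obtain ⟨g1, g2, g3⟩ := hZ x (hz.trans hx)
      have g4 := hode x g3
      have g5 : M * |e x| / x ^ 2 ≤ M * δ := by
        refine (div_le_self (by positivity) (one_le_pow₀ g3)).trans ?_
        gcongr
      have g6 : |eppD x| ≤ |eppD x + e x| + |e x| := by
        have := abs_sub (eppD x + e x) (e x)
        rwa [add_sub_cancel_right] at this
      linarith
  set A : ℝ → ℝ := fun z => e z * Real.cos z - epD z * Real.sin z with hA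
  set B : ℝ → ℝ := fun z => e z * Real.sin z + epD z * Real.cos z with hB
  have hAd : ∀ z, 1 ≤ z → HasDerivAt A (-(eppD z + e z) * Real.sin z) z := by
    intro z hz
    refine (((hd z hz).mul (Real.hasDerivAt_cos z)).sub
      ((hd' z hz).mul (Real.hasDerivAt_sin z))).congr_deriv ?_
    ring
  have hBd : ∀ z, 1 ≤ z → HasDerivAt B ((eppD z + e z) * Real.cos z) z := by
    intro z hz
    refine (((hd z hz).mul (Real.hasDerivAt_sin z)).add
      ((hd' z hz).mul (Real.hasDerivAt_cos z))).congr_deriv ?_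
    ring
  have hS : Filter.Tendsto (fun z => |e z| + |epD z|) Filter.atTop (nhds 0) := by
    simpa using hlim.abs.add hlim'.abs
  have hAl : Filter.Tendsto A Filter.atTop (nhds 0) := by
    refine squeeze_zero_norm (fun z => ?_) hS
    rw [Real.norm_eq_abs]
    refine (abs_sub _ _).trans ?_
    rw [abs_mul, abs_mul]
    nlinarith [Real.abs_cos_le_one z, Real.abs_sin_le_one z, abs_nonneg (e z), abs_nonneg (epD z)]
  have hBl : Filter.Tendsto B Filter.atTop (nhds 0) := by
    refine squeeze_zero_norm (fun z => ?_) hS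
    rw [Real.norm_eq_abs]
    refine (abs_add_le _ _).trans ?_
    rw [abs_mul, abs_mul]
    nlinarith [Real.abs_cos_le_one z, Real.abs_sin_le_one z, abs_nonneg (e z), abs_nonneg (epD z)]
  have step : ∀ (k : ℕ) (C : ℝ), 1 ≤ k → 0 ≤ C → (∀ z, 1 ≤ z → |eppD z + e z| ≤ C / z ^ (k + 1)) →
      ∀ z, 1 ≤ z → |e z| ≤ 2 * C / z ^ k ∧ |epD z| ≤ 2 * C / z ^ k := by
    intro k C hk hC hbd z hz
    have a := decay_of_deriv A _ C k hk hAd hAl (fun z hz => by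
      rw [abs_mul, abs_neg]
      exact (mul_le_of_le_one_right (abs_nonneg _) (Real.abs_sin_le_one z)).trans (hbd z hz)) z hz
    have b := decay_of_deriv B _ C k hk hBd hBl (fun z hz => by
      rw [abs_mul]
      exact (mul_le_of_le_one_right (abs_nonneg _) (Real.abs_cos_le_one z)).trans (hbd z hz)) z hz
    have ee : e z = A z * Real.cos z + B z * Real.sin z := by
      simp only [hA, hB]
      linear_combination (-(e z)) * (Real.sin_sq_add_cos_sq z)
    have ee' : epD z = B z * Real.cos z - A z * Real.sin z := by
      simp only [hA, hB]
      linear_combination (-(epD z)) * (Real.sin_sq_add_cos_sq z)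
    have hc := Real.abs_cos_le_one z
    have hs := Real.abs_sin_le_one z
    rw [mul_div_assoc]
    constructor
    · rw [ee]
      refine (abs_add_le _ _).trans ?_
      rw [abs_mul, abs_mul]
      nlinarith [abs_nonneg (A z), abs_nonneg (B z)]
    · rw [ee']
      refine (abs_sub _ _).trans ?_
      rw [abs_mul, abs_mul]
      nlinarith [abs_nonneg (A z), abs_nonneg (B z)]
  have s1 := step 1 (M * C0 + R) le_rfl (by positivity) (by
    intro z hz
    refine (hode z hz).trans ?_
    rw [add_div]
    refine add_le_add ?_ ?_
    · have := hb0 z hz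
      gcongr
    · gcongr
      norm_num)
  refine ⟨2 * (M * (2 * (M * C0 + R)) + R), by positivity, step 2 _ (by norm_num) (by positivity) ?_⟩
  intro z hz
  refine (hode z hz).trans ?_
  have h1 := (s1 z hz).1
  have hz0 : 0 < z := by linarith
  rw [add_div]
  refine add_le_add ?_ le_rfl
  rw [pow_one] at h1
  calc M * |e z| / z ^ 2 ≤ M * (2 * (M * C0 + R) / z) / z ^ 2 := by gcongr
    _ = _ := by field_simp

/-- The normalised function `z^{a+1/2} G(z)`. -/
noncomputable def bF (a z : ℝ) : ℝ := z ^ (a + 1 / 2) * (bI (a - 1 / 2) z / bI (a - 1 / 2) 0)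

/-- Its derivative. -/
noncomputable def bF1 (a z : ℝ) : ℝ := (a + 1 / 2) * z ^ (a - 1 / 2) * (bI (a - 1 / 2) z / bI (a - 1 / 2) 0)
  + z ^ (a + 1 / 2) * (bI1 (a - 1 / 2) z / bI (a - 1 / 2) 0)

lemma bF_deriv {a : ℝ} (ha : 1 / 2 < a) {z : ℝ} (hz : 0 < z) : HasDerivAt (bF a) (bF1 a z) z := by
  have h1 := (Real.hasDerivAt_rpow_const (x := z) (p := a + 1 / 2) (Or.inl hz.ne')).mul
    ((bI_deriv (μ := a - 1 / 2) (by linarith) z).div_const (bI (a - 1 / 2) 0))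
  rw [show a + 1 / 2 - 1 = a - 1 / 2 by ring] at h1
  exact h1

lemma bF1_deriv {a : ℝ} (ha : 1 / 2 < a) {z : ℝ} (hz : 0 < z) :
    HasDerivAt (bF1 a) (-(1 - (a ^ 2 - 1 / 4) / z ^ 2) * bF a z) z := by
  have hG := (bI_deriv (μ := a - 1 / 2) (by linarith) z).div_const (bI (a - 1 / 2) 0)
  have hG1 := (bI1_deriv (μ := a - 1 / 2) (by linarith) z).div_const (bI (a - 1 / 2) 0)
  have h1 := ((Real.hasDerivAt_rpow_const (x := z) (p := a - 1 / 2) (Or.inl hz.ne')).const_mul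
    (a + 1 / 2)).mul hG
  have h2 := (Real.hasDerivAt_rpow_const (x := z) (p := a + 1 / 2) (Or.inl hz.ne')).mul hG1
  refine (h1.add h2).congr_deriv ?_
  have hode := bI_ode (μ := a - 1 / 2) (by linarith) z
  have hk := (bI_zero_pos (μ := a - 1 / 2) (by linarith)).ne'
  unfold bF
  rw [show a + 1 / 2 - 1 = a - 1 / 2 by ring]
  have p1 : z ^ (a + 1 / 2) = z ^ (a - 1 / 2 - 1) * z ^ 2 := by
    rw [← Real.rpow_natCast z 2, ← Real.rpow_add hz]; norm_num; ring_nf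
  have p2 : z ^ (a - 1 / 2) = z ^ (a - 1 / 2 - 1) * z := by
    rw [← Real.rpow_add_one hz.ne']; ring_nf
  rw [p1, p2]
  generalize z ^ (a - 1 / 2 - 1) = Z at *
  generalize bI (a - 1 / 2) 0 = k at *
  generalize bI (a - 1 / 2) z = i0 at *
  generalize bI1 (a - 1 / 2) z = i1 at *
  generalize bI2 (a - 1 / 2) z = i2 at *
  clear h1 h2 hG hG1
  field_simp
  linear_combination (16 * Z * z) * hode

/-- The amplitude constant. -/
noncomputable def bK (a : ℝ) : ℝ := 2 ^ (a + 1 / 2) * Real.Gamma (a + 1) / √π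

lemma bK_pos {a : ℝ} (ha : 1 / 2 < a) : 0 < bK a := by
  unfold bK
  have : 0 < Real.Gamma (a + 1) := Real.Gamma_pos_of_pos (by linarith)
  have := Real.sqrt_pos.2 Real.pi_pos
  positivity

lemma bF_lim {a : ℝ} (ha : 1 / 2 < a) :
    Filter.Tendsto (fun z => bF a z - bK a * Real.cos (z - (a + 1 / 2) * π / 2)) Filter.atTop
      (nhds 0) := by
  have h := (bI_asymp (μ := a - 1 / 2) (by linarith)).div_const (bI (a - 1 / 2) 0)
  rw [zero_div] at h
  refine h.congr fun z => ?_
  have hk := (bI_zero_pos (μ := a - 1 / 2) (by linarith)).ne'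
  have e := bI_zero_eq (μ := a - 1 / 2) (by linarith)
  have hs := Real.sqrt_pos.2 Real.pi_pos
  have hK : 2 ^ (a - 1 / 2 + 1) * Real.Gamma (a - 1 / 2 + 1) / bI (a - 1 / 2) 0 = bK a := by
    unfold bK
    rw [show a - 1 / 2 + 1 = a + 1 / 2 by ring, show a - 1 / 2 + 3 / 2 = a + 1 by ring] at *
    generalize bI (a - 1 / 2) 0 = k at *
    generalize Real.Gamma (a + 1 / 2) = g at *
    generalize Real.Gamma (a + 1) = g1 at *
    generalize (2 : ℝ) ^ (a + 1 / 2) = t at *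
    rw [div_eq_div_iff hk hs.ne']
    linear_combination -t * e
  rw [← hK, show a - 1 / 2 + 1 = a + 1 / 2 by ring]
  unfold bF
  field_simp

theorem bF_two {a : ℝ} (ha : 1 / 2 < a) : ∃ C, 0 ≤ C ∧ ∀ z, 1 ≤ z →
    |bF a z - bK a * (Real.cos (z - (a + 1 / 2) * π / 2) -
      (a ^ 2 - 1 / 4) / (2 * z) * Real.sin (z - (a + 1 / 2) * π / 2))| ≤ C / z ^ 2 ∧
    |bF1 a z + bK a * Real.sin (z - (a + 1 / 2) * π / 2)| ≤ C / z ∧ |bF a z| ≤ C ∧ |bF1 a z| ≤ C := by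
  set φ := (a + 1 / 2) * π / 2 with hφ
  set K := bK a with hK
  have hKp : 0 < K := bK_pos ha
  set m := a ^ 2 - 1 / 4 with hm
  have hmp : 0 < m := by rw [hm]; nlinarith
  set e : ℝ → ℝ := fun z => bF a z - K * (Real.cos (z - φ) - m / (2 * z) * Real.sin (z - φ)) with he
  set epD : ℝ → ℝ := fun z => bF1 a z - K * (-Real.sin (z - φ) - (m / (2 * z) * Real.cos (z - φ)
    - m / (2 * z ^ 2) * Real.sin (z - φ))) with he'
  set eppD : ℝ → ℝ := fun z => -(1 - m / z ^ 2) * bF a z - K * (-Real.cos (z - φ) -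
    (-m / (2 * z) * Real.sin (z - φ) - m / z ^ 2 * Real.cos (z - φ) + m / z ^ 3 * Real.sin (z - φ)))
    with he''
  have dc : ∀ z, HasDerivAt (fun z => Real.cos (z - φ)) (-Real.sin (z - φ)) z := fun z => by
    simpa using ((hasDerivAt_id z).sub_const φ).cos
  have ds : ∀ z, HasDerivAt (fun z => Real.sin (z - φ)) (Real.cos (z - φ)) z := fun z => by
    simpa using ((hasDerivAt_id z).sub_const φ).sin
  have d1 : ∀ z : ℝ, 1 ≤ z → HasDerivAt (fun z : ℝ => m / (2 * z)) (-(m / (2 * z ^ 2))) z := by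
    intro z hz
    have hz0 : z ≠ 0 := by linarith
    refine ((hasDerivAt_const z m).div ((hasDerivAt_id z).const_mul 2) (by simpa using hz0)).congr_deriv ?_
    simp only [id]
    field_simp; ring
  have d2 : ∀ z : ℝ, 1 ≤ z → HasDerivAt (fun z : ℝ => m / (2 * z ^ 2)) (-(m / z ^ 3)) z := by
    intro z hz
    have hz0 : z ≠ 0 := by linarith
    refine ((hasDerivAt_const z m).div ((hasDerivAt_pow 2 z).const_mul 2) (by positivity)).congr_deriv ?_
    field_simp; norm_num; ring
  have hd : ∀ z, 1 ≤ z → HasDerivAt e (epD z) z := by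
    intro z hz
    refine ((bF_deriv ha (by linarith : 0 < z)).sub
      (((dc z).sub ((d1 z hz).mul (ds z))).const_mul K)).congr_deriv ?_
    simp only [he']; ring
  have hd' : ∀ z, 1 ≤ z → HasDerivAt epD (eppD z) z := by
    intro z hz
    have hz0 : z ≠ 0 := by linarith
    refine ((bF1_deriv ha (by linarith : 0 < z)).sub
      (((ds z).neg.sub (((d1 z hz).mul (dc z)).sub ((d2 z hz).mul (ds z)))).const_mul K)).congr_deriv ?_
    simp only [he'']
    rw [← hm]
    field_simp
    ring
  have hlim : Filter.Tendsto e Filter.atTop (nhds 0) := by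
    have h1 := bF_lim ha
    have h2 : Filter.Tendsto (fun z : ℝ => K * (m / (2 * z) * Real.sin (z - φ))) Filter.atTop (nhds 0) := by
      have h3 : Filter.Tendsto (fun z : ℝ => K * m / z) Filter.atTop (nhds 0) :=
        Filter.Tendsto.const_div_atTop Filter.tendsto_id _
      refine squeeze_zero_norm' ?_ h3
      filter_upwards [Filter.eventually_gt_atTop 0] with z hz
      rw [Real.norm_eq_abs, abs_mul, abs_mul, abs_of_pos hKp, abs_of_pos (by positivity), mul_div_assoc]
      gcongr
      have := Real.abs_sin_le_one (z - φ)
      calc m / (2 * z) * |Real.sin (z - φ)| ≤ m / (2 * z) * 1 := by gcongr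
        _ ≤ m / z := by rw [mul_one]; gcongr; linarith
    have h4 := h1.add h2
    rw [add_zero] at h4
    refine h4.congr fun z => ?_
    simp only [he]; ring
  have hside : ∀ z, 1 ≤ z → |eppD z + e z| ≤ m * |e z| / z ^ 2 + K * |m - m ^ 2 / 2| / z ^ 3 := by
    intro z hz
    have hz0 : 0 < z := by linarith
    have : eppD z + e z = m * e z / z ^ 2 + K * (m - m ^ 2 / 2) * Real.sin (z - φ) / z ^ 3 := by
      simp only [he, he'']
      field_simp
      ring
    rw [this]
    refine (abs_add_le _ _).trans ?_
    rw [abs_div, abs_div, abs_mul, abs_mul, abs_mul, abs_of_pos hmp, abs_of_pos hKp,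
      abs_of_pos (by positivity : 0 < z ^ 2), abs_of_pos (by positivity : 0 < z ^ 3)]
    have hs := Real.abs_sin_le_one (z - φ)
    refine add_le_add le_rfl (div_le_div_of_nonneg_right ?_ (by positivity))
    exact mul_le_of_le_one_right (by positivity) hs
  obtain ⟨C, hC, hb⟩ := perturb_decay e epD eppD m (K * |m - m ^ 2 / 2|) hmp.le (by positivity) hd hd' hside hlim
  · refine ⟨C + K * (1 + m) + K * m, by positivity, fun z hz => ?_⟩
    obtain ⟨h1, h2⟩ := hb z hz
    have hz0 : 0 < z := by linarith
    have hs := Real.abs_sin_le_one (z - φ)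
    have hc := Real.abs_cos_le_one (z - φ)
    have hCz : C / z ^ 2 ≤ C := div_le_self hC (one_le_pow₀ hz)
    have hCz' : C / z ^ 2 ≤ C / z := by
      gcongr; nlinarith
    have A1 : |epD z - (bF1 a z + K * Real.sin (z - φ))| ≤ K * m / z := by
      have : epD z - (bF1 a z + K * Real.sin (z - φ)) =
        K * m / (2 * z) * (Real.cos (z - φ) - Real.sin (z - φ) / z) := by
        simp only [he']; field_simp; ring
      rw [this, abs_mul, abs_of_pos (by positivity)]
      have : |Real.cos (z - φ) - Real.sin (z - φ) / z| ≤ 2 := by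
        refine (abs_sub _ _).trans ?_
        rw [abs_div, abs_of_pos hz0]
        have : |Real.sin (z - φ)| / z ≤ 1 := by
          rw [div_le_one hz0]; linarith
        linarith
      calc _ ≤ K * m / (2 * z) * 2 := by gcongr
        _ = _ := by field_simp
    have A2 : |bF1 a z + K * Real.sin (z - φ)| ≤ (C + K * m) / z := by
      have := abs_sub (epD z) (epD z - (bF1 a z + K * Real.sin (z - φ)))
      rw [sub_sub_cancel] at this
      rw [add_div]
      linarith
    refine ⟨?_, ?_, ?_, ?_⟩
    · refine h1.trans ?_
      gcongr
      nlinarith [mul_pos hKp hmp]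
    · refine A2.trans ?_
      gcongr
      nlinarith [mul_pos hKp hmp]
    · have : bF a z = e z + K * (Real.cos (z - φ) - m / (2 * z) * Real.sin (z - φ)) := by
        simp only [he]; ring
      rw [this]
      refine (abs_add_le _ _).trans ?_
      rw [abs_mul, abs_of_pos hKp]
      have : |Real.cos (z - φ) - m / (2 * z) * Real.sin (z - φ)| ≤ 1 + m := by
        refine (abs_sub _ _).trans ?_
        rw [abs_mul, abs_of_pos (by positivity : 0 < m / (2 * z))]
        have : m / (2 * z) ≤ m := div_le_self hmp.le (by linarith)
        nlinarith [abs_nonneg (Real.sin (z - φ))]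
      nlinarith [mul_pos hKp hmp]
    · have h5 : (C + K * m) / z ≤ C + K * m := div_le_self (by positivity) hz
      have h6 := abs_sub (bF1 a z + K * Real.sin (z - φ)) (K * Real.sin (z - φ))
      rw [add_sub_cancel_right, abs_mul K, abs_of_pos hKp] at h6
      nlinarith [mul_pos hKp hmp]

end BesselTwo

section AlgebraPart

/-- Coefficients of the Jacobi polynomial. -/
noncomputable def jco (a b : ℝ) (n s : ℕ) : ℝ :=
  (Real.Gamma ((n : ℝ) + a + 1) /
        (Real.Gamma ((s : ℝ) + a + 1) * (Nat.factorial (n - s) : ℝ))) *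
      (Real.Gamma ((n : ℝ) + b + 1) /
        (Real.Gamma ((n : ℝ) - (s : ℝ) + b + 1) * (Nat.factorial s : ℝ)))

lemma jacobiP_eq (a b : ℝ) (n : ℕ) (x : ℝ) : jacobiP a b n x =
    ∑ s ∈ Finset.range (n + 1), jco a b n s * ((x - 1) / 2) ^ s * ((x + 1) / 2) ^ (n - s) := rfl

lemma jco_rec {a b : ℝ} (ha : -1 < a) (hb : -1 < b) (s t : ℕ) :
    ((s : ℝ) + 1) * (s + 1 + a) * jco a b (s + t + 1) (s + 1) =
      (t + 1) * (t + 1 + b) * jco a b (s + t + 1) s := by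
  unfold jco
  have e1 : s + t + 1 - (s + 1) = t := by omega
  have e2 : s + t + 1 - s = t + 1 := by omega
  have hs : (0:ℝ) ≤ s := Nat.cast_nonneg s
  have ht : (0:ℝ) ≤ t := Nat.cast_nonneg t
  have g1 := Real.Gamma_add_one (s := (s:ℝ) + a + 1) (by linarith)
  have g2 := Real.Gamma_add_one (s := (t:ℝ) + b + 1) (by linarith)
  have p1 := Real.Gamma_pos_of_pos (s := (s:ℝ) + a + 1) (by linarith)
  have p2 := Real.Gamma_pos_of_pos (s := (t:ℝ) + b + 1) (by linarith)
  rw [e1, e2, Nat.factorial_succ, Nat.factorial_succ]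
  push_cast
  rw [show (s : ℝ) + 1 + a + 1 = s + a + 1 + 1 by ring, g1,
    show (s:ℝ) + t + 1 - (s + 1) + b + 1 = t + b + 1 by ring,
    show (s:ℝ) + t + 1 - s + b + 1 = t + b + 1 + 1 by ring, g2]
  have f1 : (0:ℝ) < Nat.factorial s := by exact_mod_cast Nat.factorial_pos s
  have f2 : (0:ℝ) < Nat.factorial t := by exact_mod_cast Nat.factorial_pos t
  have q1 : 0 < (s:ℝ) + a + 1 := by linarith
  have q2 : 0 < (t:ℝ) + b + 1 := by linarith
  generalize Real.Gamma ((s:ℝ) + a + 1) = G1 at *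
  generalize Real.Gamma ((t:ℝ) + b + 1) = G2 at *
  generalize Real.Gamma ((s:ℝ) + t + 1 + a + 1) = G3 at *
  generalize Real.Gamma ((s:ℝ) + t + 1 + b + 1) = G4 at *
  field_simp
  ring

lemma telescopic_ode (a b : ℝ) (n : ℕ) (c : ℕ → ℝ) (hc : c (n + 1) = 0)
    (hrec : ∀ s ≤ n, ((s : ℝ) + 1) * (s + 1 + a) * c (s + 1) = (n - s) * (n - s + b) * c s)
    (X Y : ℝ) :
    ∑ s ∈ Finset.range (n + 1), c s * ((s * (s + a) * X ^ (s - 1) * Y ^ (n + 1 - s)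
      - (n - s : ℝ) * (n - s + b) * X ^ s * Y ^ (n - s)) +
      ((n - s : ℝ) * (n - s + b) * X ^ (s + 1) * Y ^ (n - s - 1) - s * (s + a) * X ^ s * Y ^ (n - s))) = 0 := by
  have h1 := Finset.sum_range_sub' (fun s : ℕ => s * (s + a) * c s * X ^ (s - 1) * Y ^ (n + 1 - s)) (n + 1)
  have h2 := Finset.sum_range_sub (fun s : ℕ => s * (s + a) * c s * X ^ s * Y ^ (n - s)) (n + 1)
  simp only [hc] at h1 h2
  simp only [Nat.cast_zero, zero_mul, mul_zero, sub_zero] at h1 h2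
  rw [← add_zero (0 : ℝ)]
  nth_rewrite 1 [← h1]
  rw [← h2, ← Finset.sum_add_distrib]
  refine Finset.sum_congr rfl fun s hs => ?_
  have hsn : s ≤ n := by simpa [Nat.lt_succ_iff] using hs
  have := hrec s hsn
  rw [show n + 1 - (s + 1) = n - s by omega, Nat.add_sub_cancel]
  push_cast
  rw [show n - (s + 1) = n - s - 1 by omega]
  linear_combination (X ^ s * Y ^ (n - s) - X ^ (s + 1) * Y ^ (n - s - 1)) * this

lemma jacobi_ode {a b : ℝ} (ha : -1 < a) (hb : -1 < b) (n : ℕ) : ∃ P1 P2 : ℝ → ℝ,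
    (∀ x, HasDerivAt (jacobiP a b n) (P1 x) x) ∧ (∀ x, HasDerivAt P1 (P2 x) x) ∧
    ∀ x, (1 - x ^ 2) * P2 x + (b - a - (a + b + 2) * x) * P1 x
      + n * (n + a + b + 1) * jacobiP a b n x = 0 := by
  set c : ℕ → ℝ := fun s => if s ≤ n then jco a b n s else 0 with hcdef
  have hcc : ∀ s, s ≤ n → c s = jco a b n s := fun s hs => by simp [hcdef, hs]
  have hrec : ∀ s ≤ n, ((s : ℝ) + 1) * (s + 1 + a) * c (s + 1) = (n - s) * (n - s + b) * c s := by
    intro s hs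
    rcases hs.eq_or_lt with h | h
    · subst h; simp [hcdef]
    · obtain ⟨t, rfl⟩ := Nat.exists_eq_add_of_lt h
      rw [hcc _ hs, hcc _ (by omega), jco_rec ha hb]
      push_cast; ring
  have hQ : jacobiP a b n = fun x => ∑ s ∈ Finset.range (n + 1),
      c s * (((x - 1) / 2) ^ s * ((x + 1) / 2) ^ (n - s)) := by
    funext x
    rw [jacobiP_eq]
    refine Finset.sum_congr rfl fun s hs => ?_
    rw [hcc s (by simpa [Nat.lt_succ_iff] using hs)]; ring
  have hX : ∀ x : ℝ, HasDerivAt (fun x : ℝ => (x - 1) / 2) (1 / 2) x := fun x =>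
    ((hasDerivAt_id x).sub_const 1).div_const 2
  have hY : ∀ x : ℝ, HasDerivAt (fun x : ℝ => (x + 1) / 2) (1 / 2) x := fun x =>
    ((hasDerivAt_id x).add_const 1).div_const 2
  have hmon : ∀ (i j : ℕ) (x : ℝ), HasDerivAt (fun x : ℝ => ((x - 1) / 2) ^ i * ((x + 1) / 2) ^ j)
      ((i * (((x - 1) / 2) ^ (i - 1) * ((x + 1) / 2) ^ j)
        + j * (((x - 1) / 2) ^ i * ((x + 1) / 2) ^ (j - 1))) / 2) x := by
    intro i j x
    refine (((hX x).fun_pow i).fun_mul ((hY x).fun_pow j)).congr_deriv ?_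
    ring
  refine ⟨fun x => ∑ s ∈ Finset.range (n + 1),
      c s * ((s * (((x - 1) / 2) ^ (s - 1) * ((x + 1) / 2) ^ (n - s))
        + ((n - s : ℕ) : ℝ) * (((x - 1) / 2) ^ s * ((x + 1) / 2) ^ (n - s - 1))) / 2),
    fun x => ∑ s ∈ Finset.range (n + 1),
      c s * ((s * (((s - 1 : ℕ) * (((x - 1) / 2) ^ (s - 1 - 1) * ((x + 1) / 2) ^ (n - s))
        + (n - s : ℕ) * (((x - 1) / 2) ^ (s - 1) * ((x + 1) / 2) ^ (n - s - 1))) / 2)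
        + ((n - s : ℕ) : ℝ) * ((s * (((x - 1) / 2) ^ (s - 1) * ((x + 1) / 2) ^ (n - s - 1))
        + (n - s - 1 : ℕ) * (((x - 1) / 2) ^ s * ((x + 1) / 2) ^ (n - s - 1 - 1))) / 2)) / 2),
    ?_, ?_, ?_⟩
  · intro x
    rw [hQ]
    exact HasDerivAt.fun_sum fun s _ => (hmon s (n - s) x).const_mul (c s)
  · intro x
    exact HasDerivAt.fun_sum fun s _ => ((((hmon (s - 1) (n - s) x).const_mul (s : ℝ)).add
      ((hmon s (n - s - 1) x).const_mul ((n - s : ℕ) : ℝ))).div_const 2).const_mul (c s)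
  · intro x
    have ht := telescopic_ode a b n c (by simp [hcdef]) hrec ((x - 1) / 2) ((x + 1) / 2)
    rw [hQ]
    simp only [Finset.mul_sum, ← Finset.sum_add_distrib]
    rw [← neg_eq_zero, ← ht, ← Finset.sum_neg_distrib]
    refine Finset.sum_congr rfl fun s hs => ?_
    have hsn : s ≤ n := by simpa [Nat.lt_succ_iff] using hs
    obtain ⟨t, rfl⟩ := Nat.exists_eq_add_of_le hsn
    rw [show s + t - s = t by omega, show s + t + 1 - s = t + 1 by omega]
    have h1 : x - 1 = 2 * ((x - 1) / 2) := by ring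
    generalize hXX : (x - 1) / 2 = X at *
    have hx : x = 2 * X + 1 := by linarith
    have hYY : (x + 1) / 2 = X + 1 := by rw [hx]; ring
    rw [hYY, hx]
    generalize c s = k
    clear_value c
    clear ht hrec hcc hQ hs hsn hX hY hmon h1 hXX hYY
    push_cast
    rcases s with _ | _ | s <;> rcases t with _ | _ | t <;>
      simp only [Nat.zero_sub, Nat.add_sub_cancel, Nat.zero_add, Nat.sub_self, Nat.add_one_sub_one, Nat.cast_zero, Nat.cast_one] <;>
      push_cast <;> ring

end AlgebraPart

section DirichletPart

lemma jco_shift0 {a b : ℝ} (ha : -1 < a) (hb : -1 < b) (s t : ℕ) :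
    jco (a + 1) b (s + t) s * (s + a + 1) = jco a b (s + t) s * (s + t + a + 1) := by
  unfold jco
  have hs : (0:ℝ) ≤ s := Nat.cast_nonneg s
  have ht : (0:ℝ) ≤ t := Nat.cast_nonneg t
  have g1 := Real.Gamma_add_one (s := (s:ℝ) + a + 1) (by linarith)
  have g2 := Real.Gamma_add_one (s := (s:ℝ) + t + a + 1) (by linarith)
  have p1 := Real.Gamma_pos_of_pos (s := (s:ℝ) + a + 1) (by linarith)
  have q1 : 0 < (s:ℝ) + a + 1 := by linarith
  rw [show s + t - s = t by omega]
  push_cast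
  rw [show (s : ℝ) + (a + 1) + 1 = s + a + 1 + 1 by ring, g1,
    show (s:ℝ) + t + (a + 1) + 1 = s + t + a + 1 + 1 by ring, g2]
  rw [div_mul_div_comm, div_mul_div_comm, div_mul_eq_mul_div, div_mul_eq_mul_div]
  have p2 := Real.Gamma_pos_of_pos (s := (t:ℝ) + b + 1) (by linarith)
  rw [show (s:ℝ) + t - s + b + 1 = t + b + 1 by ring]
  have f1 : (0:ℝ) < Nat.factorial s := by exact_mod_cast Nat.factorial_pos s
  have f2 : (0:ℝ) < Nat.factorial t := by exact_mod_cast Nat.factorial_pos t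
  rw [div_eq_div_iff (by positivity) (by positivity)]
  ring

lemma jco_shift1 {a b : ℝ} (ha : -1 < a) (hb : -1 < b) (s t : ℕ) :
    jco (a + 1) b (s + t) s * ((s + t + 1 + b) * (s + a + 1)) =
      jco a b (s + t + 1) s * ((t + 1) * (t + 1 + b)) := by
  unfold jco
  have hs : (0:ℝ) ≤ s := Nat.cast_nonneg s
  have ht : (0:ℝ) ≤ t := Nat.cast_nonneg t
  have g1 := Real.Gamma_add_one (s := (s:ℝ) + a + 1) (by linarith)
  have g2 := Real.Gamma_add_one (s := (s:ℝ) + t + b + 1) (by linarith)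
  have g3 := Real.Gamma_add_one (s := (t:ℝ) + b + 1) (by linarith)
  have p1 := Real.Gamma_pos_of_pos (s := (s:ℝ) + a + 1) (by linarith)
  have q1 : 0 < (s:ℝ) + a + 1 := by linarith
  have q2 : 0 < (t:ℝ) + b + 1 := by linarith
  rw [show s + t - s = t by omega, show s + t + 1 - s = t + 1 by omega, Nat.factorial_succ]
  push_cast
  rw [show (s : ℝ) + (a + 1) + 1 = s + a + 1 + 1 by ring, g1,
    show (s:ℝ) + t + 1 + b + 1 = s + t + b + 1 + 1 by ring, g2,
    show (s:ℝ) + t - s + b + 1 = t + b + 1 by ring,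
    show (s:ℝ) + t + 1 - s + b + 1 = t + b + 1 + 1 by ring, g3,
    show (s:ℝ) + t + 1 + a + 1 = s + t + (a + 1) + 1 by ring]
  rw [div_mul_div_comm, div_mul_div_comm, div_mul_eq_mul_div, div_mul_eq_mul_div]
  have p2 := Real.Gamma_pos_of_pos (s := (t:ℝ) + b + 1) (by linarith)
  have f1 : (0:ℝ) < Nat.factorial s := by exact_mod_cast Nat.factorial_pos s
  have f2 : (0:ℝ) < Nat.factorial t := by exact_mod_cast Nat.factorial_pos t
  rw [div_eq_div_iff (by positivity) (by positivity)]
  ring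

lemma jco_shift2 {a b : ℝ} (ha : -1 < a) (hb : -1 < b) (s t : ℕ) :
    jco (a + 1) b (s + t) s * (s + t + 1 + b) =
      jco a b (s + t + 1) (s + 1) * (s + 1) := by
  unfold jco
  have hs : (0:ℝ) ≤ s := Nat.cast_nonneg s
  have ht : (0:ℝ) ≤ t := Nat.cast_nonneg t
  have g2 := Real.Gamma_add_one (s := (s:ℝ) + t + b + 1) (by linarith)
  have p1 := Real.Gamma_pos_of_pos (s := (s:ℝ) + (a + 1) + 1) (by linarith)
  have q2 : 0 < (t:ℝ) + b + 1 := by linarith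
  rw [show s + t - s = t by omega, show s + t + 1 - (s + 1) = t by omega, Nat.factorial_succ]
  push_cast
  rw [show (s:ℝ) + t + 1 + b + 1 = s + t + b + 1 + 1 by ring, g2,
    show (s:ℝ) + t - s + b + 1 = t + b + 1 by ring,
    show (s:ℝ) + t + 1 - (s + 1) + b + 1 = t + b + 1 by ring,
    show (s:ℝ) + t + 1 + a + 1 = s + t + (a + 1) + 1 by ring,
    show (s:ℝ) + 1 + a + 1 = s + (a + 1) + 1 by ring]
  rw [div_mul_div_comm, div_mul_div_comm, div_mul_eq_mul_div, div_mul_eq_mul_div]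
  have p2 := Real.Gamma_pos_of_pos (s := (t:ℝ) + b + 1) (by linarith)
  have f1 : (0:ℝ) < Nat.factorial s := by exact_mod_cast Nat.factorial_pos s
  have f2 : (0:ℝ) < Nat.factorial t := by exact_mod_cast Nat.factorial_pos t
  rw [div_eq_div_iff (by positivity) (by positivity)]
  ring

lemma jacobi_contig {a b : ℝ} (ha : -1 < a) (hb : -1 < b) (n : ℕ) (x : ℝ) :
    (2 * ((n : ℝ) + 1) + a + b + 1) * jacobiP a b (n + 1) x =
      ((n : ℝ) + 1 + a + b + 1) * jacobiP (a + 1) b (n + 1) x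
        - ((n : ℝ) + 1 + b) * jacobiP (a + 1) b n x := by
  have hX : jacobiP (a + 1) b n x = ((x + 1) / 2) * jacobiP (a + 1) b n x
    - ((x - 1) / 2) * jacobiP (a + 1) b n x := by ring
  have hn : (0:ℝ) ≤ n := Nat.cast_nonneg n
  have h1 : ((n : ℝ) + 1 + b) * (((x + 1) / 2) * jacobiP (a + 1) b n x) =
      ∑ s ∈ Finset.range (n + 1 + 1), jco a b (n + 1) s * (((n + 1 : ℝ) - s) * ((n + 1 : ℝ) - s + b)) / (s + a + 1)
        * ((x - 1) / 2) ^ s * ((x + 1) / 2) ^ (n + 1 - s) := by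
    rw [Finset.sum_range_succ, jacobiP_eq]
    push_cast
    rw [sub_self]
    simp only [zero_mul, mul_zero, zero_div, add_zero, Finset.mul_sum]
    refine Finset.sum_congr rfl fun s hs => ?_
    have hsn : s ≤ n := by simpa [Nat.lt_succ_iff] using hs
    obtain ⟨t, rfl⟩ := Nat.exists_eq_add_of_le hsn
    have hs0 : (0:ℝ) ≤ s := Nat.cast_nonneg s
    have := jco_shift1 ha hb s t
    rw [show s + t + 1 - s = t + 1 by omega, show s + t - s = t by omega]
    push_cast
    rw [show (s:ℝ) + t + 1 - s = t + 1 by ring, ← this]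
    have q1 : (s:ℝ) + a + 1 ≠ 0 := by linarith
    rw [← mul_assoc (jco (a+1) b (s + t) s), mul_div_assoc, div_self q1]
    ring
  have h2 : ((n : ℝ) + 1 + b) * (((x - 1) / 2) * jacobiP (a + 1) b n x) =
      ∑ s ∈ Finset.range (n + 1 + 1), jco a b (n + 1) s * s
        * ((x - 1) / 2) ^ s * ((x + 1) / 2) ^ (n + 1 - s) := by
    rw [Finset.sum_range_succ', jacobiP_eq]
    push_cast
    simp only [zero_mul, mul_zero, add_zero, Finset.mul_sum]
    refine Finset.sum_congr rfl fun s hs => ?_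
    have hsn : s ≤ n := by simpa [Nat.lt_succ_iff] using hs
    obtain ⟨t, rfl⟩ := Nat.exists_eq_add_of_le hsn
    have := jco_shift2 ha hb s t
    rw [show s + t - s = t by omega]
    push_cast
    rw [← this]
    ring
  rw [hX, mul_sub, h1, h2, jacobiP_eq, jacobiP_eq, ← Finset.sum_sub_distrib, Finset.mul_sum, Finset.mul_sum,
    ← Finset.sum_sub_distrib]
  refine Finset.sum_congr rfl fun s hs => ?_
  have hsn : s ≤ n + 1 := by simpa [Nat.lt_succ_iff] using hs
  obtain ⟨t, ht⟩ := Nat.exists_eq_add_of_le hsn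
  have hs0 : (0:ℝ) ≤ s := Nat.cast_nonneg s
  have := jco_shift0 ha hb s t
  have htt : (n : ℝ) + 1 = s + t := by exact_mod_cast ht
  rw [← ht, ← htt] at this
  have q1 : (s:ℝ) + a + 1 ≠ 0 := by linarith
  have h3 : jco (a + 1) b (n + 1) s = jco a b (n + 1) s * (n + 1 + a + 1) / (s + a + 1) := by
    rw [← this, mul_div_assoc, div_self q1, mul_one]
  rw [h3]
  generalize jco a b (n + 1) s = k
  field_simp
  ring

lemma jacobiP_one {a b : ℝ} (ha : -1 < a) (hb : -1 < b) (n : ℕ) :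
    jacobiP a b n 1 = Real.Gamma (n + a + 1) / (Real.Gamma (a + 1) * Nat.factorial n) := by
  rw [jacobiP_eq, Finset.sum_range_succ']
  have hn : (0:ℝ) ≤ n := Nat.cast_nonneg n
  have p1 := Real.Gamma_pos_of_pos (s := (n:ℝ) + b + 1) (by linarith)
  rw [Finset.sum_eq_zero (by intro s _; norm_num)]
  unfold jco
  norm_num
  rw [div_self p1.ne', mul_one]

lemma jacobiP_zero {a b : ℝ} (ha : -1 < a) (hb : -1 < b) (x : ℝ) : jacobiP a b 0 x = 1 := by
  rw [jacobiP_eq]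
  have p1 := Real.Gamma_pos_of_pos (s := a + 1) (by linarith)
  have p2 := Real.Gamma_pos_of_pos (s := b + 1) (by linarith)
  simp [jco, p1.ne', p2.ne']

lemma dirichlet_term {a b : ℝ} (ha : -(1/2) < a) (hb : -(1/2) < b) (l : ℕ) (x : ℝ) :
    (jacobiM a b l)⁻¹ * jacobiP a b l 1 * jacobiP a b l x =
    (2:ℝ) ^ (-(a + b + 1)) / Real.Gamma (a + 1) * (Real.Gamma (l + a + b + 1) / Real.Gamma (l + b + 1)) *
      ((2 * l + a + b + 1) * jacobiP a b l x) := by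
  have hl : (0:ℝ) ≤ l := Nat.cast_nonneg l
  rw [jacobiP_one (by linarith) (by linarith), jacobiM, Real.Gamma_nat_eq_factorial, Real.rpow_neg (by norm_num)]
  have p1 := Real.Gamma_pos_of_pos (s := a + 1) (by linarith)
  have p2 := Real.Gamma_pos_of_pos (s := l + a + b + 1) (by linarith)
  have p3 := Real.Gamma_pos_of_pos (s := l + b + 1) (by linarith)
  have p4 := Real.Gamma_pos_of_pos (s := l + a + 1) (by linarith)
  have f1 : (0:ℝ) < Nat.factorial l := by exact_mod_cast Nat.factorial_pos l
  have q : 0 < 2 * (l:ℝ) + a + b + 1 := by linarith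
  have r : (0:ℝ) < 2 ^ (a + b + 1) := by positivity
  generalize (2:ℝ) ^ (a + b + 1) = T at *
  generalize Real.Gamma (a + 1) = G1 at *
  generalize Real.Gamma (l + a + b + 1) = G2 at *
  generalize Real.Gamma (l + b + 1) = G3 at *
  generalize Real.Gamma (l + a + 1) = G4 at *
  generalize jacobiP a b l x = P
  field_simp

lemma dirichlet_closed {a b : ℝ} (ha : -(1/2) < a) (hb : -(1/2) < b) (L : ℕ) (x : ℝ) :
    dirichletJ a b L 1 x = (2:ℝ) ^ (-(a + b + 1)) / Real.Gamma (a + 1) *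
      (Real.Gamma (L + a + b + 2) / Real.Gamma (L + b + 1)) * jacobiP (a + 1) b L x := by
  unfold dirichletJ
  simp only [dirichlet_term ha hb]
  induction L with
  | zero =>
    rw [Finset.sum_range_one, jacobiP_zero (by linarith) (by linarith), jacobiP_zero (by linarith) (by linarith)]
    have g := Real.Gamma_add_one (s := a + b + 1) (by linarith)
    norm_num
    rw [show a + b + 2 = a + b + 1 + 1 by ring, g]
    ring
  | succ n ih =>
    have hn : (0:ℝ) ≤ n := Nat.cast_nonneg n
    rw [Finset.sum_range_succ, ih]
    have c := jacobi_contig (a := a) (b := b) (by linarith) (by linarith) n x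
    push_cast
    rw [c]
    have g1 := Real.Gamma_add_one (s := n + a + b + 2) (by linarith)
    have g2 := Real.Gamma_add_one (s := n + b + 1) (by linarith)
    have p3 := Real.Gamma_pos_of_pos (s := n + b + 1) (by linarith)
    rw [show (n:ℝ) + 1 + a + b + 1 = n + a + b + 2 by ring, show (n:ℝ) + 1 + a + b + 2 = n + a + b + 2 + 1 by ring,
      show (n:ℝ) + 1 + b + 1 = n + b + 1 + 1 by ring, g1, g2]
    have q : 0 < (n:ℝ) + b + 1 := by linarith
    generalize (2:ℝ) ^ (-(a + b + 1)) / Real.Gamma (a + 1) = T at *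
    generalize Real.Gamma (n + a + b + 2) = G2 at *
    generalize Real.Gamma (n + b + 1) = G3 at *
    generalize jacobiP (a + 1) b n x = P1
    generalize jacobiP (a + 1) b (n+1) x = P2
    field_simp
    ring

end DirichletPart

section GammaPart

lemma log_diff_bound {M t : ℝ} (hM : 0 < M) (ht : |t| ≤ M / 2) :
    |Real.log (M + t) - Real.log (M - t) - 2 * t / M| ≤ 4 * |t| ^ 3 / M ^ 3 := by
  set x := t / M with hx
  have hxa : |x| ≤ 1 / 2 := by
    rw [hx, abs_div, abs_of_pos hM, div_le_iff₀ hM]; linarith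
  have h1 := Real.abs_log_sub_add_sum_range_le (x := x) (by linarith) 2
  have h2 := Real.abs_log_sub_add_sum_range_le (x := -x) (by rw [abs_neg]; linarith) 2
  have hb : |x| ^ 3 / (1 - |x|) ≤ 2 * |x| ^ 3 := by
    rw [div_le_iff₀ (by linarith)]
    nlinarith [pow_nonneg (abs_nonneg x) 3]
  rw [abs_neg] at h2
  simp only [Finset.sum_range_succ, Finset.sum_range_zero] at h1 h2
  norm_num at h1 h2
  obtain ⟨xl, xr⟩ := abs_le.1 hxa
  have e1 : Real.log (M + t) = Real.log M + Real.log (1 + x) := by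
    rw [← Real.log_mul hM.ne' (by linarith)]; congr 1; rw [hx]; field_simp
  have e2 : Real.log (M - t) = Real.log M + Real.log (1 - x) := by
    rw [← Real.log_mul hM.ne' (by linarith)]; congr 1; rw [hx]; field_simp
  have e3 : 2 * t / M = 2 * x := by rw [hx]; ring
  have e4 : 4 * |t| ^ 3 / M ^ 3 = 2 * |x| ^ 3 + 2 * |x| ^ 3 := by
    rw [hx, abs_div, abs_of_pos hM, div_pow]; ring
  rw [e1, e2, e3, e4]
  obtain ⟨a1, a2⟩ := abs_le.1 (h1.trans hb)
  obtain ⟨b1, b2⟩ := abs_le.1 (h2.trans hb)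
  rw [abs_le]
  constructor <;> linarith

lemma prod_gamma {s : ℝ} (hs : 0 < s) (n : ℕ) :
    ∏ j ∈ Finset.range n, (s + j) = Real.Gamma (n + s) / Real.Gamma s := by
  have p := Real.Gamma_pos_of_pos hs
  induction n with
  | zero => simp [p.ne']
  | succ n ih =>
    rw [Finset.prod_range_succ, ih]
    push_cast
    have hn : (0:ℝ) ≤ n := Nat.cast_nonneg n
    rw [show (n:ℝ) + 1 + s = n + s + 1 by ring, Real.Gamma_add_one (by linarith)]
    ring

lemma log_gamma_lim_pos {s : ℝ} (hs : 0 < s) :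
    Filter.Tendsto (fun n : ℕ => Real.log (Real.Gamma (n + s + 1)) - s * Real.log n
      - Real.log (Real.Gamma (n + 1))) Filter.atTop (nhds 0) := by
  have p := Real.Gamma_pos_of_pos hs
  have h := (Real.GammaSeq_tendsto_Gamma s).log p.ne'
  have h2 := (tendsto_const_nhds (x := Real.log (Real.Gamma s))).sub h
  rw [sub_self] at h2
  refine h2.congr' ?_
  filter_upwards [Filter.eventually_gt_atTop 0] with n hn
  have hn' : (0:ℝ) < n := by exact_mod_cast hn
  have p2 := Real.Gamma_pos_of_pos (s := n + s + 1) (by linarith)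
  rw [Real.GammaSeq, prod_gamma hs, Real.Gamma_nat_eq_factorial]
  push_cast
  have f1 : (0:ℝ) < Nat.factorial n := by exact_mod_cast Nat.factorial_pos n
  rw [show (n:ℝ) + 1 + s = n + s + 1 by ring, Real.log_div (by positivity) (by positivity),
    Real.log_div p2.ne' p.ne', Real.log_mul (by positivity) (by positivity), Real.log_rpow hn']
  ring

lemma log_shift_lim (c : ℝ) :
    Filter.Tendsto (fun n : ℕ => Real.log (n + c) - Real.log n) Filter.atTop (nhds 0) := by
  have h1 : Filter.Tendsto (fun n : ℕ => 1 + c / (n:ℝ)) Filter.atTop (nhds (1 + 0)) :=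
    tendsto_const_nhds.add (Filter.Tendsto.const_div_atTop tendsto_natCast_atTop_atTop c)
  rw [add_zero] at h1
  have h2 := h1.log one_ne_zero
  rw [Real.log_one] at h2
  refine h2.congr' ?_
  have h3 : ∀ᶠ n : ℕ in Filter.atTop, |c| < (n:ℝ) :=
    tendsto_natCast_atTop_atTop.eventually_gt_atTop |c|
  filter_upwards [h3] with n hn
  have hn' : (0:ℝ) < n := lt_of_le_of_lt (abs_nonneg c) hn
  have := neg_abs_le c
  rw [← Real.log_div (by linarith) hn'.ne']
  congr 1
  field_simp

lemma log_gamma_lim {s : ℝ} (hs : -1 < s) :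
    Filter.Tendsto (fun n : ℕ => Real.log (Real.Gamma (n + s + 1)) - s * Real.log n
      - Real.log (Real.Gamma (n + 1))) Filter.atTop (nhds 0) := by
  have h := (log_gamma_lim_pos (s := s + 1) (by linarith)).sub (log_shift_lim (s + 1))
  rw [sub_zero] at h
  refine h.congr fun n => ?_
  have hn : (0:ℝ) ≤ n := Nat.cast_nonneg n
  have p2 := Real.Gamma_pos_of_pos (s := n + s + 1) (by linarith)
  rw [show (n:ℝ) + (s + 1) + 1 = (n + s + 1) + 1 by ring, Real.Gamma_add_one (by linarith),
    Real.log_mul (by linarith) p2.ne']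
  rw [show (n:ℝ) + (s + 1) = n + s + 1 by ring]
  ring

/-- Logarithm of the gamma ratio. -/
noncomputable def lnR (a b : ℝ) (n : ℕ) : ℝ :=
  Real.log (Real.Gamma (n + (a + b) + 1)) + Real.log (Real.Gamma (n + a + 1))
   - Real.log (Real.Gamma (n + b + 1)) - Real.log (Real.Gamma (n + 1)) -
    2 * a * Real.log (n + (a + b + 1) / 2)

lemma lnR_lim {a b : ℝ} (ha : 1 / 2 < a) (hb : -(1 / 2) < b) :
    Filter.Tendsto (lnR a b) Filter.atTop (nhds 0) := by
  have h := (((log_gamma_lim (s := a + b) (by linarith)).add (log_gamma_lim (s := a) (by linarith))).sub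
    (log_gamma_lim (s := b) (by linarith))).sub ((log_shift_lim ((a + b + 1) / 2)).const_mul (2 * a))
  norm_num at h
  refine h.congr fun n => ?_
  unfold lnR
  ring

lemma lnR_step {a b : ℝ} (ha : 1 / 2 < a) (hb : -(1 / 2) < b) :
    ∃ C, 0 ≤ C ∧ ∃ n0 : ℕ, 1 ≤ n0 ∧ ∀ n ≥ n0, |lnR a b (n + 1) - lnR a b n| ≤ C / (n:ℝ) ^ 3 := by
  set σ := (a + b) / 2 with hσ
  set δ := (a - b) / 2 with hδ
  refine ⟨4 * |σ| ^ 3 + 4 * |δ| ^ 3 + 2 * a * (4 * |(1:ℝ) / 2| ^ 3), by positivity,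
    ⌈2 * |σ| + 2 * |δ| + 1⌉₊, Nat.one_le_iff_ne_zero.2 (by positivity), fun n hn => ?_⟩
  have hn1 : 2 * |σ| + 2 * |δ| + 1 ≤ (n:ℝ) := (Nat.le_ceil _).trans (by exact_mod_cast hn)
  have p1 := abs_nonneg σ
  have p2 := abs_nonneg δ
  have hn0 : (0:ℝ) < n := by linarith
  set M := (n:ℝ) + (a + b + 2) / 2 with hM
  have hMn : (n:ℝ) ≤ M := by rw [hM]; linarith
  have hM0 : 0 < M := by linarith
  have b1 := log_diff_bound (M := M) (t := σ) hM0 (by linarith)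
  have b2 := log_diff_bound (M := M) (t := δ) hM0 (by linarith)
  have b3 := log_diff_bound (M := M) (t := 1 / 2) hM0 (by norm_num; linarith)
  have g : ∀ c : ℝ, -1 < c → Real.log (Real.Gamma ((n + 1 : ℕ) + c + 1)) - Real.log (Real.Gamma (n + c + 1))
      = Real.log (n + c + 1) := by
    intro c hc
    have p2 := Real.Gamma_pos_of_pos (s := n + c + 1) (by linarith)
    push_cast
    rw [show (n:ℝ) + 1 + c + 1 = (n + c + 1) + 1 by ring, Real.Gamma_add_one (by linarith),
      Real.log_mul (by linarith) p2.ne']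
    ring
  have g1 := g (a + b) (by linarith)
  have g2 := g a (by linarith)
  have g3 := g b (by linarith)
  have g4 := g 0 (by linarith)
  rw [add_zero, add_zero] at g4
  have key : lnR a b (n + 1) - lnR a b n = (Real.log (M + σ) - Real.log (M - σ) - 2 * σ / M) +
      (Real.log (M + δ) - Real.log (M - δ) - 2 * δ / M) -
      2 * a * (Real.log (M + 1 / 2) - Real.log (M - 1 / 2) - 2 * (1 / 2) / M) := by
    have z : 2 * σ / M + 2 * δ / M - 2 * a * (2 * (1 / 2) / M) = 0 := by
      rw [hσ, hδ]; field_simp; ring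
    rw [show M + σ = n + (a + b) + 1 by rw [hM, hσ]; ring, show M - σ = n + 1 by rw [hM, hσ]; ring,
     show M + δ = n + a + 1 by rw [hM, hδ]; ring, show M - δ = n + b + 1 by rw [hM, hδ]; ring,
     show M + 1 / 2 = (n + 1 : ℕ) + (a + b + 1) / 2 by rw [hM]; push_cast; ring,
     show M - 1 / 2 = n + (a + b + 1) / 2 by rw [hM]; ring]
    unfold lnR
    linear_combination g1 + g2 - g3 - g4 + z
  rw [key]
  have b3' : |2 * a * (Real.log (M + 1 / 2) - Real.log (M - 1 / 2) - 2 * (1 / 2) / M)| ≤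
     2 * a * (4 * |(1:ℝ) / 2| ^ 3 / M ^ 3) := by
    rw [abs_mul, abs_of_pos (by linarith : 0 < 2 * a)]
    gcongr
  calc _ ≤ 4 * |σ| ^ 3 / M ^ 3 + 4 * |δ| ^ 3 / M ^ 3 + 2 * a * (4 * |(1:ℝ) / 2| ^ 3 / M ^ 3) :=
        (abs_sub _ _).trans (add_le_add ((abs_add_le _ _).trans (add_le_add b1 b2)) b3')
    _ = (4 * |σ| ^ 3 + 4 * |δ| ^ 3 + 2 * a * (4 * |(1:ℝ) / 2| ^ 3)) / M ^ 3 := by ring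
    _ ≤ _ := by gcongr

lemma seq_bound (f : ℕ → ℝ) (C : ℝ) (n0 : ℕ) (hn0 : 1 ≤ n0) (hC : 0 ≤ C)
    (hlim : Filter.Tendsto f Filter.atTop (nhds 0))
    (h : ∀ n ≥ n0, f n - f (n + 1) ≤ C / (n:ℝ) ^ 3) : ∀ n ≥ n0, f n ≤ 4 * C / (n:ℝ) ^ 2 := by
  intro n hn
  set h' : ℕ → ℝ := fun k => f (n + k) - 4 * C / ((n + k : ℕ) : ℝ) ^ 2 with hh
  have hmono : Monotone h' := by
    refine monotone_nat_of_le_succ fun k => ?_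
    simp only [hh]
    have h1 := h (n + k) (by omega)
    have hk : (1:ℝ) ≤ ((n + k : ℕ) : ℝ) := by exact_mod_cast (by omega : 1 ≤ n + k)
    rw [← add_assoc]
    push_cast at *
    set x : ℝ := (n:ℝ) + k
    have : C / x ^ 3 ≤ 4 * C / x ^ 2 - 4 * C / (x + 1) ^ 2 := by
      rw [div_sub_div _ _ (by positivity) (by positivity), div_le_div_iff₀ (by positivity) (by positivity)]
      have : 0 ≤ C * x ^ 2 * (4 * x * (2 * x + 1) - (x + 1) ^ 2) := by
        apply mul_nonneg (by positivity); nlinarith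
      nlinarith
    linarith
  have hl : Filter.Tendsto h' Filter.atTop (nhds (0 - 0)) := by
    have t1 : Filter.Tendsto (fun k : ℕ => n + k) Filter.atTop Filter.atTop :=
      Filter.tendsto_atTop_mono (fun k => by simp) Filter.tendsto_id
    refine (hlim.comp t1).sub ?_
    have t2 : Filter.Tendsto (fun x : ℝ => 4 * C / x ^ 2) Filter.atTop (nhds 0) :=
      Filter.Tendsto.const_div_atTop (Filter.tendsto_pow_atTop (by norm_num)) _
    exact t2.comp (tendsto_natCast_atTop_atTop.comp t1)
  rw [sub_zero] at hl
  have := hmono.ge_of_tendsto hl 0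
  simp only [hh, add_zero] at this
  linarith

lemma lnR_bound {a b : ℝ} (ha : 1 / 2 < a) (hb : -(1 / 2) < b) :
    ∃ C, 0 ≤ C ∧ ∃ n0 : ℕ, 1 ≤ n0 ∧ ∀ n ≥ n0, |lnR a b n| ≤ C / (n:ℝ) ^ 2 := by
  obtain ⟨C, hC, n0, hn0, h⟩ := lnR_step ha hb
  have hl := lnR_lim ha hb
  refine ⟨4 * C, by positivity, n0, hn0, fun n hn => ?_⟩
  have h1 := seq_bound (lnR a b) C n0 hn0 hC hl (fun k hk => by
    have := (abs_le.1 (h k hk)).1; linarith) n hn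
  have h2 := seq_bound (fun k => - lnR a b k) C n0 hn0 hC (by simpa using hl.neg) (fun k hk => by
    have := (abs_le.1 (h k hk)).2; linarith) n hn
  rw [abs_le]
  constructor <;> linarith

theorem gamma_ratio_bound {a b : ℝ} (ha : 1 / 2 < a) (hb : -(1 / 2) < b) :
    ∃ C, 0 ≤ C ∧ ∀ n : ℕ, 1 ≤ n → |Real.exp (lnR a b n) - 1| ≤ C / (n:ℝ) ^ 2 := by
  obtain ⟨C, hC, n0, hn0, h⟩ := lnR_bound ha hb
  obtain ⟨n1, hn1⟩ : ∃ n1 : ℕ, ∀ n ≥ n1, |lnR a b n| ≤ 1 := by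
    have := (lnR_lim ha hb).abs
    rw [abs_zero] at this
    exact Filter.eventually_atTop.1 (this.eventually_le_const one_pos)
  refine ⟨2 * C + ∑ i ∈ Finset.range (n0 + n1), |Real.exp (lnR a b i) - 1| * (i:ℝ) ^ 2, by positivity, ?_⟩
  intro n hn
  have hn' : (0:ℝ) < n := by exact_mod_cast hn
  have hs : 0 ≤ ∑ i ∈ Finset.range (n0 + n1), |Real.exp (lnR a b i) - 1| * (i:ℝ) ^ 2 := by positivity
  rw [le_div_iff₀ (by positivity)]
  by_cases hc : n < n0 + n1
  · have := Finset.single_le_sum (f := fun i : ℕ => |Real.exp (lnR a b i) - 1| * (i:ℝ) ^ 2)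
      (fun i _ => by positivity) (Finset.mem_range.2 hc)
    linarith
  · have h1 := Real.abs_exp_sub_one_le (hn1 n (by omega))
    have h2 := h n (by omega)
    rw [le_div_iff₀ (by positivity)] at h2
    nlinarith [pow_pos hn' 2]

end GammaPart

section TrigPart

lemma sin_half_le {x : ℝ} (h0 : 0 < x) (h1 : x < π / 2) : x / 2 ≤ Real.sin x := by
  refine le_trans ?_ (Real.mul_le_sin h0.le h1.le)
  have : (1:ℝ) / 2 ≤ 2 / π := by
    rw [div_le_div_iff₀ (by norm_num) Real.pi_pos]
    linarith [Real.pi_le_four]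
  nlinarith

lemma trig1 {x : ℝ} (h0 : 0 < x) (h1 : x < π / 2) :
    |Real.cos x / Real.sin x - 1 / x| ≤ x := by
  have s1 := Real.sin_gt_sub_cube h0
  have s2 := Real.sin_lt h0
  have c1 := Real.one_sub_sq_div_two_le_cos (x := x)
  have c2 := Real.cos_le_one x
  have s3 := sin_half_le h0 h1
  have hs : 0 < Real.sin x := by linarith
  generalize Real.sin x = S at *
  generalize Real.cos x = C at *
  rw [div_sub_div _ _ hs.ne' h0.ne', abs_div, abs_of_pos (mul_pos hs h0), div_le_iff₀ (by positivity), abs_le]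
  have h3 : 0 < x ^ 3 := by positivity
  have : x * (S * x) ≥ x ^ 3 / 2 := by nlinarith [mul_pos h0 h0]
  constructor
  · nlinarith [mul_le_mul_of_nonneg_left c1 h0.le]
  · nlinarith [mul_le_mul_of_nonneg_left c2 h0.le]

lemma trig2 {x : ℝ} (h0 : 0 < x) (h1 : x < π / 2) :
    |1 / Real.sin x ^ 2 - 1 / x ^ 2| ≤ 2 := by
  have s1 := Real.sin_gt_sub_cube h0
  have s2 := Real.sin_lt h0
  have s3 := sin_half_le h0 h1
  have hs : 0 < Real.sin x := by linarith
  generalize Real.sin x = S at *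
  rw [div_sub_div _ _ (by positivity) (by positivity), abs_div, abs_of_pos (by positivity : 0 < S ^ 2 * x ^ 2),
    div_le_iff₀ (by positivity), abs_le]
  have h2 : x ^ 2 / 4 ≤ S ^ 2 := by nlinarith
  have h4 : x ^ 4 / 4 ≤ S ^ 2 * x ^ 2 := by nlinarith [pow_pos h0 2]
  have h5 : 0 ≤ x ^ 2 - S ^ 2 := by nlinarith
  have h6 : x ^ 2 - S ^ 2 ≤ x ^ 4 / 3 := by
    have : x ^ 2 - S ^ 2 = (x - S) * (x + S) := by ring
    rw [this]
    calc (x - S) * (x + S) ≤ (x ^ 3 / 6) * (2 * x) := by gcongr <;> linarith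
      _ = _ := by ring
  have := pow_pos h0 4
  constructor <;> linarith

lemma trig3 {x : ℝ} (h0 : 0 < x) (h1 : x < π / 2) :
    |Real.cos x / Real.sin x ^ 3 - 1 / x ^ 3| ≤ 8 := by
  have s3 := sin_half_le h0 h1
  have hs : 0 < Real.sin x := by linarith
  have h8 : x ^ 3 / 8 ≤ Real.sin x ^ 3 := by
    calc x ^ 3 / 8 = (x / 2) ^ 3 := by ring
      _ ≤ _ := by gcongr
  rcases le_or_gt x 1 with hx | hx
  · have b1 := Real.sin_bound (x := x) (by rwa [abs_of_pos h0])
    have b2 := Real.cos_bound (x := x) (by rwa [abs_of_pos h0])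
    rw [abs_of_pos h0] at b1 b2
    obtain ⟨s, hsd⟩ : ∃ s, Real.sin x = x - x ^ 3 / 6 + x ^ 5 * s := 
      ⟨(Real.sin x - (x - x ^ 3 / 6)) / x ^ 5, by field_simp; ring⟩
    obtain ⟨c, hcd⟩ : ∃ c, Real.cos x = 1 - x ^ 2 / 2 + x ^ 4 * c := 
      ⟨(Real.cos x - (1 - x ^ 2 / 2)) / x ^ 4, by field_simp; ring⟩
    have s1 : |s| ≤ 1 / 10 := by
      rw [hsd, add_sub_cancel_left, abs_mul, abs_of_pos (by positivity : 0 < x ^ 5)] at b1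
      have : 0 < x ^ 5 := by positivity
      by_contra hcon
      push Not at hcon
      nlinarith
    have c1 : |c| ≤ 1 / 10 := by
      rw [hcd, add_sub_cancel_left, abs_mul, abs_of_pos (by positivity : 0 < x ^ 4)] at b2
      have : 0 < x ^ 4 := by positivity
      by_contra hcon
      push Not at hcon
      nlinarith
    set k := -1 / 6 + x ^ 2 * s with hk
    have x2 : x ^ 2 ≤ 1 := by nlinarith
    have hk1 : |k| ≤ 3 / 10 := by
      have : |x ^ 2 * s| ≤ 1 / 10 := by
        rw [abs_mul, abs_of_pos (by positivity : 0 < x ^ 2)]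
        nlinarith [abs_nonneg s]
      obtain ⟨t1, t2⟩ := abs_le.1 this
      rw [abs_le]; constructor <;> linarith
    have key : x ^ 3 * Real.cos x - Real.sin x ^ 3 = - x ^ 7 * (3 * s + 3 * k ^ 2 + x ^ 2 * k ^ 3 - c) := by
      rw [hsd, hcd, hk]; ring
    have hb : |3 * s + 3 * k ^ 2 + x ^ 2 * k ^ 3 - c| ≤ 1 := by
      obtain ⟨t1, t2⟩ := abs_le.1 s1
      obtain ⟨t3, t4⟩ := abs_le.1 c1
      have k2 : k ^ 2 ≤ 9 / 100 := by
        rw [← sq_abs]; nlinarith [abs_nonneg k]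
      have k3 : |x ^ 2 * k ^ 3| ≤ 27 / 1000 := by
        rw [abs_mul, abs_pow k, abs_of_pos (by positivity : 0 < x ^ 2)]
        have : |k| ^ 3 ≤ (3 / 10) ^ 3 := by gcongr
        have h0 : 0 ≤ |k| ^ 3 := by positivity
        nlinarith
      obtain ⟨t5, t6⟩ := abs_le.1 k3
      rw [abs_le]; constructor <;> nlinarith [sq_nonneg k]
    rw [div_sub_div _ _ (by positivity) (by positivity), abs_div, abs_of_pos (by positivity : 0 < Real.sin x ^ 3 * x ^ 3),
      div_le_iff₀ (by positivity), mul_one, mul_comm (Real.cos x), key, abs_mul, abs_neg, abs_of_pos (by positivity : 0 < x ^ 7)]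
    have x7 : x ^ 7 ≤ x ^ 6 := by
      have := pow_pos h0 6
      nlinarith
    have : x ^ 6 ≤ 8 * (Real.sin x ^ 3 * x ^ 3) := by nlinarith [pow_pos h0 3]
    have := pow_pos h0 7
    nlinarith [abs_nonneg (3 * s + 3 * k ^ 2 + x ^ 2 * k ^ 3 - c)]
  · have hx3 : 1 ≤ x ^ 3 := one_le_pow₀ hx.le
    have c2 := Real.cos_le_one x
    have c0 : 0 ≤ Real.cos x := Real.cos_nonneg_of_neg_pi_div_two_le_of_le (by linarith) h1.le
    have t1 : Real.cos x / Real.sin x ^ 3 ≤ 8 := by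
      rw [div_le_iff₀ (by positivity)]; linarith
    have t2 : 0 ≤ Real.cos x / Real.sin x ^ 3 := by positivity
    have t3 : 1 / x ^ 3 ≤ 1 := by rw [div_le_one (by positivity)]; exact hx3
    have t4 : 0 ≤ 1 / x ^ 3 := by positivity
    rw [abs_le]; constructor <;> linarith

/-- The correction function. -/
noncomputable def cB (m l θ : ℝ) : ℝ := m / 4 * (Real.cos (θ / 2) / Real.sin (θ / 2) - 2 / θ)
  - l / 4 * (Real.sin (θ / 2) / Real.cos (θ / 2))

/-- Its derivative. -/
noncomputable def cB1 (m l θ : ℝ) : ℝ := -(m / 8) * (1 / Real.sin (θ / 2) ^ 2 - 4 / θ ^ 2)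
  - l / 8 * (1 / Real.cos (θ / 2) ^ 2)

/-- Its second derivative. -/
noncomputable def cB2 (m l θ : ℝ) : ℝ := m / 8 * (Real.cos (θ / 2) / Real.sin (θ / 2) ^ 3 - 8 / θ ^ 3)
  - l / 8 * (Real.sin (θ / 2) / Real.cos (θ / 2) ^ 3)

lemma half_facts {θ : ℝ} (h0 : 0 < θ) (h1 : θ < π) : 0 < Real.sin (θ / 2) ∧ 0 < Real.cos (θ / 2) ∧
    HasDerivAt (fun θ : ℝ => Real.sin (θ / 2)) (Real.cos (θ / 2) / 2) θ ∧
    HasDerivAt (fun θ : ℝ => Real.cos (θ / 2)) (-(Real.sin (θ / 2) / 2)) θ ∧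
    Real.sin (θ / 2) ^ 2 + Real.cos (θ / 2) ^ 2 = 1 := by
  refine ⟨Real.sin_pos_of_pos_of_lt_pi (by linarith) (by linarith),
    Real.cos_pos_of_mem_Ioo ⟨by linarith, by linarith⟩, ?_, ?_, Real.sin_sq_add_cos_sq _⟩
  · exact (((hasDerivAt_id θ).div_const 2).sin).congr_deriv (by simp; ring)
  · exact (((hasDerivAt_id θ).div_const 2).cos).congr_deriv (by simp; ring)

lemma cB_deriv (m l : ℝ) {θ : ℝ} (h0 : 0 < θ) (h1 : θ < π) : HasDerivAt (cB m l) (cB1 m l θ) θ := by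
  obtain ⟨hS, hC, dS, dC, hsc⟩ := half_facts h0 h1
  have d := (((dC.div dS hS.ne').sub ((hasDerivAt_const θ (2:ℝ)).div (hasDerivAt_id θ) h0.ne')).const_mul (m / 4)).sub
    ((dS.div dC hC.ne').const_mul (l / 4))
  refine d.congr_deriv ?_
  unfold cB1
  simp only [id]
  have e1 : (-(Real.sin (θ / 2) / 2) * Real.sin (θ / 2) - Real.cos (θ / 2) * (Real.cos (θ / 2) / 2)) = -(1 / 2) := by
    linear_combination (-1/2) * hsc
  have e2 : (Real.cos (θ / 2) / 2 * Real.cos (θ / 2) - Real.sin (θ / 2) * -(Real.sin (θ / 2) / 2)) = 1 / 2 := by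
    linear_combination (1/2) * hsc
  rw [e1, e2]
  ring

lemma cB1_deriv (m l : ℝ) {θ : ℝ} (h0 : 0 < θ) (h1 : θ < π) : HasDerivAt (cB1 m l) (cB2 m l θ) θ := by
  obtain ⟨hS, hC, dS, dC, hsc⟩ := half_facts h0 h1
  have d := ((((hasDerivAt_const θ (1:ℝ)).fun_div (dS.fun_pow 2) (by positivity)).sub
    ((hasDerivAt_const θ (4:ℝ)).fun_div (hasDerivAt_pow 2 θ) (by positivity))).const_mul (-(m / 8))).sub
    (((hasDerivAt_const θ (1:ℝ)).fun_div (dC.fun_pow 2) (by positivity)).const_mul (l / 8))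
  refine d.congr_deriv ?_
  unfold cB2
  generalize Real.sin (θ / 2) = S at *
  generalize Real.cos (θ / 2) = C at *
  norm_num
  field_simp
  ring

lemma cB_bounds (m l : ℝ) {ε : ℝ} (hε : 0 < ε) (hε2 : ε < π / 2) : ∃ K, 0 ≤ K ∧ ∀ θ, 0 < θ → θ ≤ π - ε →
    |cB m l θ| ≤ K * θ ∧ |cB1 m l θ| ≤ K ∧ |cB2 m l θ| ≤ K ∧ 
    |Real.cos (θ / 2) / Real.sin (θ / 2) - 2 / θ| ≤ K * θ ∧ |Real.sin (θ / 2) / Real.cos (θ / 2)| ≤ K * θ := by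
  set c := Real.sin (ε / 2) with hc
  have hc0 : 0 < c := Real.sin_pos_of_pos_of_lt_pi (by linarith) (by linarith)
  refine ⟨|m| * 1 + |l| * (1 / c + 1 / c ^ 2 + 1 / c ^ 3) + 1 + 1 / c, by positivity, fun θ h0 h1 => ?_⟩
  have hπ : θ < π := by linarith
  obtain ⟨hS, hC, dS, dC, hsc⟩ := half_facts h0 hπ
  have hCc : c ≤ Real.cos (θ / 2) := by
    rw [hc, ← Real.cos_pi_div_two_sub]
    apply Real.cos_le_cos_of_nonneg_of_le_pi <;> linarith
  have t1 := trig1 (x := θ / 2) (by linarith) (by linarith)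
  have t2 := trig2 (x := θ / 2) (by linarith) (by linarith)
  have t3 := trig3 (x := θ / 2) (by linarith) (by linarith)
  have sl := Real.sin_lt (x := θ / 2) (by linarith)
  have s1 := Real.sin_le_one (θ / 2)
  rw [show 1 / (θ / 2) = 2 / θ by field_simp] at t1
  rw [show 1 / (θ / 2) ^ 2 = 4 / θ ^ 2 by field_simp; norm_num] at t2
  rw [show 1 / (θ / 2) ^ 3 = 8 / θ ^ 3 by field_simp; norm_num] at t3
  unfold cB cB1 cB2
  generalize Real.sin (θ / 2) = S at *
  generalize Real.cos (θ / 2) = C at *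
  have u1 : |S / C| ≤ (1 / c) * (θ / 2) := by
    rw [abs_of_pos (by positivity), div_mul_eq_mul_div, one_mul]
    gcongr
  have u2 : |1 / C ^ 2| ≤ 1 / c ^ 2 := by
    rw [abs_of_pos (by positivity)]; gcongr
  have u3 : |S / C ^ 3| ≤ 1 / c ^ 3 := by
    rw [abs_of_pos (by positivity)]; gcongr
  have pm := abs_nonneg m
  have pl := abs_nonneg l
  have q1 : 0 < 1 / c := by positivity
  have q2 : 0 < 1 / c ^ 2 := by positivity
  have q3 : 0 < 1 / c ^ 3 := by positivity
  have z1 := mul_nonneg pl q1.le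
  have z2 := mul_nonneg pl q2.le
  have z3 := mul_nonneg pl q3.le
  generalize 1 / c = c1 at *
  generalize 1 / c ^ 2 = c2 at *
  generalize 1 / c ^ 3 = c3 at *
  have a4 : |m / 4| = |m| / 4 := by rw [abs_div]; norm_num
  have a8 : |m / 8| = |m| / 8 := by rw [abs_div]; norm_num
  have b4 : |l / 4| = |l| / 4 := by rw [abs_div]; norm_num
  have b8 : |l / 8| = |l| / 8 := by rw [abs_div]; norm_num
  refine ⟨?_, ?_, ?_, ?_, ?_⟩
  · refine (abs_sub _ _).trans ?_
    rw [abs_mul, abs_mul, a4, b4]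
    have w1 : |m| / 4 * |C / S - 2 / θ| ≤ |m| / 4 * (θ / 2) := by gcongr
    have w2 : |l| / 4 * |S / C| ≤ |l| / 4 * (c1 * (θ / 2)) := by gcongr
    nlinarith [mul_nonneg pm h0.le, mul_nonneg z1 h0.le, mul_nonneg z2 h0.le, mul_nonneg z3 h0.le, mul_nonneg q1.le h0.le]
  · refine (abs_sub _ _).trans ?_
    rw [abs_mul, abs_mul, abs_neg, a8, b8]
    have w1 : |m| / 8 * |1 / S ^ 2 - 4 / θ ^ 2| ≤ |m| / 8 * 2 := by gcongr
    have w2 : |l| / 8 * |1 / C ^ 2| ≤ |l| / 8 * c2 := by gcongr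
    linarith
  · refine (abs_sub _ _).trans ?_
    rw [abs_mul, abs_mul, a8, b8]
    have w1 : |m| / 8 * |C / S ^ 3 - 8 / θ ^ 3| ≤ |m| / 8 * 8 := by gcongr
    have w2 : |l| / 8 * |S / C ^ 3| ≤ |l| / 8 * c3 := by gcongr
    linarith
  · refine t1.trans ?_
    have : 1 ≤ |m| * 1 + |l| * (c1 + c2 + c3) + 1 + c1 := by linarith
    nlinarith
  · refine u1.trans ?_
    have : c1 ≤ |m| * 1 + |l| * (c1 + c2 + c3) + 1 + c1 := by linarith
    nlinarith [mul_nonneg q1.le h0.le]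

lemma F2_eq (a b : ℝ) {θ : ℝ} (h0 : 0 < θ) (h1 : θ < π) :
    F2fn a b θ = - cB (a ^ 2 - 1 / 4) (b ^ 2 - 1 / 4) θ - (a ^ 2 - 1 / 4) / (2 * θ) := by
  obtain ⟨hS, hC, dS, dC, hsc⟩ := half_facts h0 h1
  unfold F2fn cB
  have e1 : Real.sin θ = 2 * Real.sin (θ / 2) * Real.cos (θ / 2) := by
    rw [← Real.sin_two_mul]; ring_nf
  have e2 : Real.cos θ = Real.cos (θ / 2) ^ 2 - Real.sin (θ / 2) ^ 2 := by
    rw [← Real.cos_two_mul']; ring_nf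
  rw [Real.tan_eq_sin_div_cos, e1, e2]
  generalize Real.sin (θ / 2) = S at *
  generalize Real.cos (θ / 2) = C at *
  field_simp
  ring

end TrigPart

section OdePart

/-- The weight factor. -/
noncomputable def wr (a b θ : ℝ) : ℝ := Real.exp ((a + 1 / 2) * (Real.log (2 * Real.sin (θ / 2)) - Real.log θ)
  + (b + 1 / 2) * Real.log (Real.cos (θ / 2)))

lemma wr_deriv (a b : ℝ) {θ : ℝ} (h0 : 0 < θ) (h1 : θ < π) :
    HasDerivAt (wr a b) (wr a b θ * cB (2 * (a + 1 / 2)) (2 * (b + 1 / 2)) θ) θ := by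
  obtain ⟨hS, hC, dS, dC, hsc⟩ := half_facts h0 h1
  have d := ((((dS.const_mul 2).log (by positivity)).sub (Real.hasDerivAt_log h0.ne')).const_mul (a + 1 / 2)).add
    ((dC.log hC.ne').const_mul (b + 1 / 2))
  refine d.exp.congr_deriv ?_
  unfold wr cB
  congr 1
  field_simp
  ring

lemma wr_lim (a b : ℝ) : Filter.Tendsto (wr a b) (nhdsWithin 0 (Set.Ioi 0)) (nhds 1) := by
  have hI : Set.Ioo (0:ℝ) 1 ∈ nhdsWithin (0:ℝ) (Set.Ioi 0) := Ioo_mem_nhdsGT one_pos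
  have t1 : Filter.Tendsto (fun θ : ℝ => 2 * Real.sin (θ / 2) / θ) (nhdsWithin 0 (Set.Ioi 0)) (nhds 1) := by
    have l1 : Filter.Tendsto (fun θ : ℝ => 1 - θ ^ 2 / 24) (nhdsWithin 0 (Set.Ioi 0)) (nhds 1) := by
      have : Filter.Tendsto (fun θ : ℝ => 1 - θ ^ 2 / 24) (nhds 0) (nhds (1 - 0 ^ 2 / 24)) :=
        Continuous.tendsto (by fun_prop) 0
      norm_num at this
      exact this.mono_left nhdsWithin_le_nhds
    refine tendsto_of_tendsto_of_tendsto_of_le_of_le' l1 tendsto_const_nhds ?_ ?_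
    · filter_upwards [hI] with θ hθ
      have := Real.sin_gt_sub_cube (x := θ / 2) (by linarith [hθ.1])
      rw [le_div_iff₀ hθ.1]
      nlinarith
    · filter_upwards [hI] with θ hθ
      have := Real.sin_lt (x := θ / 2) (by linarith [hθ.1])
      rw [div_le_one hθ.1]
      linarith
  have t2 := t1.log one_ne_zero
  have t3 : Filter.Tendsto (fun θ : ℝ => Real.cos (θ / 2)) (nhdsWithin 0 (Set.Ioi 0)) (nhds 1) := by
    have : Filter.Tendsto (fun θ : ℝ => Real.cos (θ / 2)) (nhds 0) (nhds (Real.cos (0 / 2))) :=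
      Continuous.tendsto (by fun_prop) 0
    norm_num at this
    exact this.mono_left nhdsWithin_le_nhds
  have t4 := t3.log one_ne_zero
  have t5 := ((t2.const_mul (a + 1 / 2)).add (t4.const_mul (b + 1 / 2))).rexp
  rw [Real.log_one, mul_zero, mul_zero, add_zero, Real.exp_zero] at t5
  refine t5.congr' ?_
  filter_upwards [hI] with θ hθ
  have hs : 0 < Real.sin (θ / 2) := Real.sin_pos_of_pos_of_lt_pi (by linarith [hθ.1]) (by linarith [hθ.2, Real.pi_gt_three])
  rw [Real.log_div (by positivity) hθ.1.ne']
  rfl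

lemma yhat_exists {a b : ℝ} (ha : 1 / 2 < a) (hb : -(1 / 2) < b) (L : ℕ) : ∃ Y Y1 : ℝ → ℝ,
    (∀ θ, 0 < θ → θ < π → HasDerivAt Y (Y1 θ) θ ∧
      HasDerivAt Y1 (-(2 * (a + 1 / 2) / θ) * Y1 θ
        - (((L : ℝ) + (a + b + 1) / 2) ^ 2 + 2 * cB1 (a ^ 2 - 1 / 4) (b ^ 2 - 1 / 4) θ) * Y θ) θ) ∧
    Filter.Tendsto Y (nhdsWithin 0 (Set.Ioi 0)) (nhds 1) ∧
    Filter.Tendsto Y1 (nhdsWithin 0 (Set.Ioi 0)) (nhds 0) ∧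
    ∀ θ, Y θ = wr a b θ * (jacobiP a b L (Real.cos θ) / jacobiP a b L 1) := by
  obtain ⟨P1, P2, hP1, hP2, hode⟩ := jacobi_ode (a := a) (b := b) (by linarith) (by linarith) L
  set p := jacobiP a b L 1 with hp
  have hL : (0:ℝ) ≤ L := Nat.cast_nonneg L
  have hp0 : 0 < p := by
    rw [hp, jacobiP_one (by linarith) (by linarith)]
    have := Real.Gamma_pos_of_pos (s := L + a + 1) (by linarith)
    have := Real.Gamma_pos_of_pos (s := a + 1) (by linarith)
    have : (0:ℝ) < Nat.factorial L := by exact_mod_cast Nat.factorial_pos L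
    positivity
  set y : ℝ → ℝ := fun θ => jacobiP a b L (Real.cos θ) / p with hy
  set y1 : ℝ → ℝ := fun θ => P1 (Real.cos θ) * -Real.sin θ / p with hy1
  set τ := cB (2 * (a + 1 / 2)) (2 * (b + 1 / 2)) with hτ
  have dy : ∀ θ, HasDerivAt y (y1 θ) θ := fun θ =>
    ((hP1 (Real.cos θ)).comp θ (Real.hasDerivAt_cos θ)).div_const p
  have dy1 : ∀ θ, HasDerivAt y1 ((P2 (Real.cos θ) * -Real.sin θ * -Real.sin θ + P1 (Real.cos θ) * -Real.cos θ) / p) θ :=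
    fun θ => ((((hP2 (Real.cos θ)).comp θ (Real.hasDerivAt_cos θ)).mul (Real.hasDerivAt_sin θ).neg)).div_const p
  refine ⟨fun θ => wr a b θ * y θ, fun θ => wr a b θ * (τ θ * y θ + y1 θ), ?_, ?_, ?_, fun θ => rfl⟩
  · intro θ h0 h1
    constructor
    · exact ((wr_deriv a b h0 h1).mul (dy θ)).congr_deriv (by ring)
    · have dτ := cB_deriv (2 * (a + 1 / 2)) (2 * (b + 1 / 2)) h0 h1
      refine ((wr_deriv a b h0 h1).mul ((dτ.mul (dy θ)).add (dy1 θ))).congr_deriv ?_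
      obtain ⟨hS, hC, dS, dC, hsc⟩ := half_facts h0 h1
      have e1 : Real.sin θ = 2 * Real.sin (θ / 2) * Real.cos (θ / 2) := by
        rw [← Real.sin_two_mul]; ring_nf
      have e2 : Real.cos θ = Real.cos (θ / 2) ^ 2 - Real.sin (θ / 2) ^ 2 := by
        rw [← Real.cos_two_mul']; ring_nf
      have ho := hode (Real.cos θ)
      obtain ⟨X, hX⟩ : ∃ X, X = Real.cos (θ / 2) / Real.sin (θ / 2) := ⟨_, rfl⟩
      obtain ⟨Z, hZ⟩ : ∃ Z, Z = Real.sin (θ / 2) / Real.cos (θ / 2) := ⟨_, rfl⟩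
      obtain ⟨w, hw⟩ : ∃ w, w = 1 / θ := ⟨_, rfl⟩
      have hXZ : X * Z = 1 := by rw [hX, hZ]; field_simp
      have hXS : 1 / Real.sin (θ / 2) ^ 2 = 1 + X ^ 2 := by
        rw [hX]; field_simp; linarith
      have hZC : 1 / Real.cos (θ / 2) ^ 2 = 1 + Z ^ 2 := by
        rw [hZ]; field_simp; linarith
      have v0 : τ θ = 2 * (a + 1 / 2) / 4 * (X - 2 * w) - 2 * (b + 1 / 2) / 4 * Z := by
        rw [hτ, cB, hX, hZ, hw]; ring
      have v1 : cB1 (2 * (a + 1 / 2)) (2 * (b + 1 / 2)) θ = -(2 * (a + 1 / 2) / 8) * (1 + X ^ 2 - 4 * w ^ 2)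
         - 2 * (b + 1 / 2) / 8 * (1 + Z ^ 2) := by
        rw [cB1, hXS, hZC, hw]; ring
      have v2 : cB1 (a ^ 2 - 1 / 4) (b ^ 2 - 1 / 4) θ = -((a ^ 2 - 1 / 4) / 8) * (1 + X ^ 2 - 4 * w ^ 2)
         - (b ^ 2 - 1 / 4) / 8 * (1 + Z ^ 2) := by
        rw [cB1, hXS, hZC, hw]; ring
      have k1 : τ θ ^ 2 + cB1 (2 * (a + 1 / 2)) (2 * (b + 1 / 2)) θ + 2 * (a + 1 / 2) / θ * τ θ
          + 2 * cB1 (a ^ 2 - 1 / 4) (b ^ 2 - 1 / 4) θ + ((a + b + 1) / 2) ^ 2 = 0 := by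
        rw [v0, v1, v2, show 2 * (a + 1 / 2) / θ = 2 * (a + 1 / 2) * w by rw [hw]; ring]
        linear_combination (-(a + 1 / 2) * (b + 1 / 2) / 2) * hXZ
      have k2 : (P2 (Real.cos θ) * -Real.sin θ * -Real.sin θ + P1 (Real.cos θ) * -Real.cos θ) / p =
          -(2 * τ θ + 2 * (a + 1 / 2) / θ) * y1 θ - L * (L + a + b + 1) * y θ := by
        have hkap : (2 * τ θ + 2 * (a + 1 / 2) / θ) * Real.sin θ = (a - b) + (a + b + 1) * Real.cos θ := by
          have hc0 : Real.cos (θ / 2) = X * Real.sin (θ / 2) := by rw [hX]; field_simp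
          have hs0 : Real.sin (θ / 2) = Z * Real.cos (θ / 2) := by rw [hZ]; field_simp
          rw [v0, show 2 * (a + 1 / 2) / θ = 2 * (a + 1 / 2) * w by rw [hw]; ring, e1, e2]
          have x1 : X * (Real.sin (θ / 2) * Real.cos (θ / 2)) = Real.cos (θ / 2) ^ 2 := by
            linear_combination (-Real.cos (θ / 2)) * hc0
          have x2 : Z * (Real.sin (θ / 2) * Real.cos (θ / 2)) = Real.sin (θ / 2) ^ 2 := by
            linear_combination (-Real.sin (θ / 2)) * hs0
          linear_combination (2 * a + 1) * x1 - (2 * b + 1) * x2 + (a - b) * hsc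
        have hs2 : Real.sin θ ^ 2 = 1 - Real.cos θ ^ 2 := Real.sin_sq θ
        simp only [hy, hy1]
        field_simp
        clear k1 v0 v1 v2
        rw [mul_comm] at hkap
        have hth : (2 * τ θ + 2 * (a + 1 / 2) / θ) * θ = 2 * τ θ * θ + 2 * (a + 1 / 2) := by field_simp
        have hkap2 : Real.sin θ * (2 * τ θ * θ + 2 * (a + 1 / 2)) = θ * ((a - b) + (a + b + 1) * Real.cos θ) := by
          rw [← hth, ← hkap]; ring
        linear_combination θ * ho + θ * P2 (Real.cos θ) * hs2 - P1 (Real.cos θ) * hkap2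
      simp only [Pi.add_apply, Pi.mul_apply]
      rw [← hτ, k2]
      linear_combination (wr a b θ * y θ) * k1
  · have c1 : Filter.Tendsto y (nhdsWithin 0 (Set.Ioi 0)) (nhds 1) := by
      have := (dy 0).continuousAt.tendsto
      rw [show y 0 = 1 by simp [hy, ← hp, hp0.ne']] at this
      exact this.mono_left nhdsWithin_le_nhds
    simpa using (wr_lim a b).mul c1
  · have c1 : Filter.Tendsto y (nhdsWithin 0 (Set.Ioi 0)) (nhds 1) := by
      have := (dy 0).continuousAt.tendsto
      rw [show y 0 = 1 by simp [hy, ← hp, hp0.ne']] at this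
      exact this.mono_left nhdsWithin_le_nhds
    have c2 : Filter.Tendsto y1 (nhdsWithin 0 (Set.Ioi 0)) (nhds 0) := by
      have := (dy1 0).continuousAt.tendsto
      rw [show y1 0 = 0 by simp [hy1]] at this
      exact this.mono_left nhdsWithin_le_nhds
    have c3 : Filter.Tendsto τ (nhdsWithin 0 (Set.Ioi 0)) (nhds 0) := by
      obtain ⟨K, hK, hb⟩ := cB_bounds (2 * (a + 1 / 2)) (2 * (b + 1 / 2)) (ε := 1) one_pos (by linarith [Real.pi_gt_three])
      have l1 : Filter.Tendsto (fun θ : ℝ => K * θ) (nhdsWithin 0 (Set.Ioi 0)) (nhds 0) := by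
        have : Filter.Tendsto (fun θ : ℝ => K * θ) (nhds 0) (nhds (K * 0)) :=
          Continuous.tendsto (by fun_prop) 0
        rw [mul_zero] at this
        exact this.mono_left nhdsWithin_le_nhds
      refine squeeze_zero_norm' ?_ l1
      filter_upwards [Ioo_mem_nhdsGT (one_pos : (0:ℝ) < 1)] with θ hθ
      exact (hb θ hθ.1 (by linarith [hθ.2, Real.pi_gt_three])).1
    simpa using (wr_lim a b).mul ((c3.mul c1).add c2)

lemma gron {T T1 φ φ1 : ℝ → ℝ} {s t : ℝ} (hst : s ≤ t) (hT : ∀ x, s ≤ x → x ≤ t → HasDerivAt T (T1 x) x)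
    (hφ : ∀ x, s ≤ x → x ≤ t → HasDerivAt φ (φ1 x) x) (h : ∀ x, s ≤ x → x ≤ t → T1 x ≤ φ1 x * T x) :
    T t * Real.exp (-φ t) ≤ T s * Real.exp (-φ s) := by
  have hd : ∀ x, s ≤ x → x ≤ t → HasDerivAt (fun x => T x * Real.exp (-φ x))
      ((T1 x - φ1 x * T x) * Real.exp (-φ x)) x := fun x h1 h2 =>
    ((hT x h1 h2).mul ((hφ x h1 h2).neg.exp)).congr_deriv (by simp only [Pi.neg_apply]; ring)
  have : AntitoneOn (fun x => T x * Real.exp (-φ x)) (Set.Icc s t) := by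
    refine antitoneOn_of_deriv_nonpos (convex_Icc s t)
      (fun x hx => (hd x hx.1 hx.2).continuousAt.continuousWithinAt)
      (fun x hx => ?_) (fun x hx => ?_)
    · rw [interior_Icc] at hx
      exact (hd x hx.1.le hx.2.le).differentiableAt.differentiableWithinAt
    · rw [interior_Icc] at hx
      rw [(hd x hx.1.le hx.2.le).deriv]
      exact mul_nonpos_of_nonpos_of_nonneg (by linarith [h x hx.1.le hx.2.le]) (Real.exp_pos _).le
  exact this (Set.left_mem_Icc.2 hst) (Set.right_mem_Icc.2 hst) hst

end OdePart

section EnergyPart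

lemma near_abs {A N D : ℝ} (hA : 0 ≤ A) (hN : 1 ≤ N) (hD : 0 ≤ D) {e e1 r : ℝ → ℝ}
    (he : ∀ x, 0 < x → x ≤ 1 / N → HasDerivAt e (e1 x) x)
    (he1 : ∀ x, 0 < x → x ≤ 1 / N → HasDerivAt e1 (-(2 * A / x) * e1 x - N ^ 2 * e x - r x) x)
    (hr : ∀ x, 0 < x → x ≤ 1 / N → |r x| ≤ D * (|e x| + 1))
    (l0 : Filter.Tendsto e (nhdsWithin 0 (Set.Ioi 0)) (nhds 0))
    (l1 : Filter.Tendsto e1 (nhdsWithin 0 (Set.Ioi 0)) (nhds 0)) :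
    e1 (1 / N) ^ 2 + N ^ 2 * e (1 / N) ^ 2 ≤ Real.exp (2 * D) / N ^ 2 := by
  have hN0 : 0 < N := by linarith
  have key : ∀ s, 0 < s → s ≤ 1 / N →
      (e1 (1 / N) ^ 2 + N ^ 2 * e (1 / N) ^ 2 + 1 / N ^ 2) * Real.exp (-(2 * D)) ≤
        e1 s ^ 2 + N ^ 2 * e s ^ 2 + 1 / N ^ 2 := by
    intro s hs hs1
    have g := gron (T := fun x => e1 x ^ 2 + N ^ 2 * e x ^ 2 + 1 / N ^ 2)
      (T1 := fun x => -(4 * A / x) * e1 x ^ 2 - 2 * e1 x * r x)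
      (φ := fun x => 2 * D * N * x) (φ1 := fun _ => 2 * D * N) hs1 ?_ ?_ ?_
    · have c1 : -(2 * D * N * (1 / N)) = -(2 * D) := by field_simp
      simp only [c1] at g
      refine g.trans ?_
      have : Real.exp (-(2 * D * N * s)) ≤ 1 := by
        rw [Real.exp_le_one_iff]
        have : 0 ≤ 2 * D * N * s := by positivity
        linarith
      exact mul_le_of_le_one_right (by positivity) this
    · intro x h1 h2
      have hx : 0 < x := by linarith
      refine ((((he1 x hx h2).fun_pow 2).fun_add (((he x hx h2).fun_pow 2).const_mul (N ^ 2))).add_const (1 / N ^ 2)).congr_deriv ?_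
      simp only [Nat.cast_ofNat]
      ring
    · intro x h1 h2
      simpa using (hasDerivAt_id x).const_mul (2 * D * N)
    · intro x h1 h2
      have hx : 0 < x := by linarith
      have h3 := hr x hx h2
      have h4 : 0 ≤ 4 * A / x * e1 x ^ 2 := by positivity
      have h5 : -(2 * e1 x * r x) ≤ 2 * |e1 x| * (D * (|e x| + 1)) := by
        calc -(2 * e1 x * r x) ≤ |2 * e1 x * r x| := neg_le_abs _
          _ = 2 * |e1 x| * |r x| := by rw [abs_mul, abs_mul]; norm_num
          _ ≤ _ := by gcongr
      have h6 : 2 * |e1 x| * |e x| ≤ N * (e1 x ^ 2 + N ^ 2 * e x ^ 2) := by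
        rw [← sq_abs (e1 x), ← sq_abs (e x)]
        have : 2 * |e1 x| * |e x| ≤ |e1 x| ^ 2 + |e x| ^ 2 := by nlinarith [sq_nonneg (|e1 x| - |e x|)]
        have : |e1 x| ^ 2 ≤ N * |e1 x| ^ 2 := by nlinarith [sq_nonneg (|e1 x|)]
        have hN3 : 1 ≤ N ^ 3 := one_le_pow₀ hN
        have : |e x| ^ 2 ≤ N ^ 3 * |e x| ^ 2 := by nlinarith [sq_nonneg (|e x|)]
        nlinarith
      have h7 : 2 * |e1 x| ≤ N * (e1 x ^ 2 + 1 / N ^ 2) := by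
        rw [← sq_abs (e1 x)]
        have : N * (|e1 x| ^ 2 + 1 / N ^ 2) - 2 * |e1 x| = (N * |e1 x| - 1) ^ 2 / N := by field_simp; ring
        have : 0 ≤ (N * |e1 x| - 1) ^ 2 / N := by positivity
        linarith
      have h8 : 0 ≤ N * e1 x ^ 2 + N * (N ^ 2 * e x ^ 2) + N * (1 / N ^ 2) := by positivity
      have h9 : 0 ≤ N * (N ^ 2 * e x ^ 2) + N * (1 / N ^ 2) := by positivity
      have h10 : 2 * |e1 x| * (|e x| + 1) ≤ 2 * N * (e1 x ^ 2 + N ^ 2 * e x ^ 2 + 1 / N ^ 2) := by nlinarith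
      have h11 := mul_le_mul_of_nonneg_left h10 hD
      linarith
  have lim : Filter.Tendsto (fun s => e1 s ^ 2 + N ^ 2 * e s ^ 2 + 1 / N ^ 2) (nhdsWithin 0 (Set.Ioi 0))
      (nhds (0 ^ 2 + N ^ 2 * 0 ^ 2 + 1 / N ^ 2)) :=
    ((l1.pow 2).add ((l0.pow 2).const_mul (N ^ 2))).add_const _
  have h := ge_of_tendsto lim (b := (e1 (1 / N) ^ 2 + N ^ 2 * e (1 / N) ^ 2 + 1 / N ^ 2) * Real.exp (-(2 * D))) (by
    filter_upwards [Ioo_mem_nhdsGT (show (0:ℝ) < 1 / N by positivity)] with s hs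
    exact key s hs.1 hs.2.le)
  have h2 : 0 < 1 / N ^ 2 := by positivity
  rw [Real.exp_neg, ← div_eq_mul_inv, div_le_iff₀ (Real.exp_pos _)] at h
  have : (0 ^ 2 + N ^ 2 * 0 ^ 2 + 1 / N ^ 2) * Real.exp (2 * D) = Real.exp (2 * D) / N ^ 2 := by ring
  linarith

lemma far_abs {N Q CR C0 t : ℝ} (hN : 1 ≤ N) (hQ : 0 ≤ Q) (hCR : 0 ≤ CR) (ht1 : 1 / N ≤ t)
    (ht4 : t ≤ 4) {e e1 q R : ℝ → ℝ}
    (he : ∀ x, 1 / N ≤ x → x ≤ t → HasDerivAt e (e1 x) x)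
    (he1 : ∀ x, 1 / N ≤ x → x ≤ t → HasDerivAt e1 (-(N ^ 2 + q x) * e x - R x) x)
    (hq : ∀ x, 1 / N ≤ x → x ≤ t → |q x| ≤ Q / x ^ 2)
    (hR : ∀ x, 1 / N ≤ x → x ≤ t → |R x| ≤ CR * (1 / N) * (1 + 1 / (N * x ^ 2)))
    (h0 : e1 (1 / N) ^ 2 + N ^ 2 * e (1 / N) ^ 2 ≤ C0 / N ^ 2) :
    e t ^ 2 ≤ (C0 + 1) * Real.exp (5 * (Q + CR)) / N ^ 4 := by
  have hN0 : 0 < N := by linarith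
  have hi : 0 < 1 / N := by positivity
  have g := gron (T := fun x => e1 x ^ 2 + N ^ 2 * e x ^ 2 + 1 / N ^ 2)
      (T1 := fun x => -2 * q x * e x * e1 x - 2 * e1 x * R x)
      (φ := fun x => (Q + CR) * (x - 1 / N * x⁻¹)) (φ1 := fun x => (Q + CR) * (1 + 1 / (N * x ^ 2))) ht1 ?_ ?_ ?_
  · have ht0 : 0 < t := by linarith
    have c1 : Real.exp (-(5 * (Q + CR))) ≤ Real.exp (-((Q + CR) * (t - 1 / N * t⁻¹))) *
        Real.exp (((Q + CR) * (1 / N - 1 / N * (1 / N)⁻¹))) := by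
      rw [← Real.exp_add, Real.exp_le_exp]
      have x1 : 1 / N * (1 / N)⁻¹ = 1 := by field_simp
      rw [x1]
      have x2 : 0 ≤ 1 / N * t⁻¹ := by positivity
      have : (Q + CR) * (t - 1 / N * t⁻¹ - 1 / N + 1) ≤ (Q + CR) * 5 :=
        mul_le_mul_of_nonneg_left (by linarith) (by linarith)
      nlinarith
    have c2 : (e1 t ^ 2 + N ^ 2 * e t ^ 2 + 1 / N ^ 2) * Real.exp (-(5 * (Q + CR))) ≤
        e1 (1 / N) ^ 2 + N ^ 2 * e (1 / N) ^ 2 + 1 / N ^ 2 := by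
      calc _ ≤ (e1 t ^ 2 + N ^ 2 * e t ^ 2 + 1 / N ^ 2) * (Real.exp (-((Q + CR) * (t - 1 / N * t⁻¹))) *
              Real.exp (((Q + CR) * (1 / N - 1 / N * (1 / N)⁻¹)))) :=
            mul_le_mul_of_nonneg_left c1 (by positivity)
        _ ≤ ((e1 (1 / N) ^ 2 + N ^ 2 * e (1 / N) ^ 2 + 1 / N ^ 2) *
            Real.exp (-((Q + CR) * (1 / N - 1 / N * (1 / N)⁻¹)))) * Real.exp (((Q + CR) * (1 / N - 1 / N * (1 / N)⁻¹))) := by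
            rw [← mul_assoc]
            exact mul_le_mul_of_nonneg_right g (Real.exp_pos _).le
        _ = _ := by
            rw [mul_assoc, ← Real.exp_add]; simp
    rw [Real.exp_neg, ← div_eq_mul_inv, div_le_iff₀ (Real.exp_pos _)] at c2
    have c3 : N ^ 2 * e t ^ 2 ≤ (C0 + 1) / N ^ 2 * Real.exp (5 * (Q + CR)) := by
      have y1 : 0 ≤ e1 t ^ 2 + 1 / N ^ 2 := by positivity
      have y2 : (e1 (1 / N) ^ 2 + N ^ 2 * e (1 / N) ^ 2 + 1 / N ^ 2) ≤ (C0 + 1) / N ^ 2 := by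
        rw [add_div]; linarith
      have y3 := mul_le_mul_of_nonneg_right y2 (Real.exp_pos (5 * (Q + CR))).le
      linarith
    rw [le_div_iff₀ (by positivity)]
    calc e t ^ 2 * N ^ 4 = (N ^ 2 * e t ^ 2) * N ^ 2 := by ring
      _ ≤ ((C0 + 1) / N ^ 2 * Real.exp (5 * (Q + CR))) * N ^ 2 := by gcongr
      _ = _ := by field_simp
  · intro x h1 h2
    refine ((((he1 x h1 h2).fun_pow 2).fun_add (((he x h1 h2).fun_pow 2).const_mul (N ^ 2))).add_const (1 / N ^ 2)).congr_deriv ?_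
    simp only [Nat.cast_ofNat]
    ring
  · intro x h1 h2
    have hx : 0 < x := by linarith
    refine (((hasDerivAt_id x).sub ((hasDerivAt_inv hx.ne').const_mul (1 / N))).const_mul (Q + CR)).congr_deriv ?_
    field_simp
    ring
  · intro x h1 h2
    have hx : 0 < x := by linarith
    set E := |e x| with hE
    set E1 := |e1 x| with hE1
    have s1 : e x ^ 2 = E ^ 2 := (sq_abs _).symm
    have s2 : e1 x ^ 2 = E1 ^ 2 := (sq_abs _).symm
    have p1 : -2 * q x * e x * e1 x ≤ 2 * (Q / x ^ 2) * (E * E1) := by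
      calc -2 * q x * e x * e1 x ≤ |-2 * q x * e x * e1 x| := le_abs_self _
        _ = 2 * |q x| * (E * E1) := by rw [abs_mul, abs_mul, abs_mul]; norm_num; ring
        _ ≤ _ := by gcongr; exact hq x h1 h2
    have p2 : -(2 * e1 x * R x) ≤ 2 * E1 * (CR * (1 / N) * (1 + 1 / (N * x ^ 2))) := by
      calc -(2 * e1 x * R x) ≤ |2 * e1 x * R x| := neg_le_abs _
        _ = 2 * E1 * |R x| := by rw [abs_mul, abs_mul]; norm_num [hE1]
        _ ≤ _ := by gcongr; exact hR x h1 h2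
    have p3 : 2 * (E * E1) ≤ (1 / N) * (E1 ^ 2 + N ^ 2 * E ^ 2 + 1 / N ^ 2) := by
      have : (1 / N) * (E1 ^ 2 + N ^ 2 * E ^ 2) - 2 * (E * E1) = (E1 - N * E) ^ 2 / N := by field_simp; ring
      have : 0 ≤ (E1 - N * E) ^ 2 / N := by positivity
      have : 0 ≤ 1 / N * (1 / N ^ 2) := by positivity
      linarith
    have p4 : 2 * E1 * (1 / N) ≤ E1 ^ 2 + N ^ 2 * E ^ 2 + 1 / N ^ 2 := by
      have : E1 ^ 2 + 1 / N ^ 2 - 2 * E1 * (1 / N) = (E1 - 1 / N) ^ 2 := by ring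
      have : 0 ≤ N ^ 2 * E ^ 2 := by positivity
      nlinarith [sq_nonneg (E1 - 1 / N)]
    rw [s1, s2]
    set T := E1 ^ 2 + N ^ 2 * E ^ 2 + 1 / N ^ 2 with hT
    have hT0 : 0 ≤ T := by positivity
    have p5 : 2 * (Q / x ^ 2) * (E * E1) ≤ Q * (1 / (N * x ^ 2)) * T := by
      calc 2 * (Q / x ^ 2) * (E * E1) = Q / x ^ 2 * (2 * (E * E1)) := by ring
        _ ≤ Q / x ^ 2 * (1 / N * T) := by gcongr
        _ = _ := by field_simp
    have p6 : 2 * E1 * (CR * (1 / N) * (1 + 1 / (N * x ^ 2))) ≤ CR * (1 + 1 / (N * x ^ 2)) * T := by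
      calc _ = CR * (1 + 1 / (N * x ^ 2)) * (2 * E1 * (1 / N)) := by ring
        _ ≤ _ := by gcongr
    have p7 : 0 ≤ Q * T := by positivity
    calc _ ≤ 2 * (Q / x ^ 2) * (E * E1) + 2 * E1 * (CR * (1 / N) * (1 + 1 / (N * x ^ 2))) := by linarith
      _ ≤ Q * (1 / (N * x ^ 2)) * T + CR * (1 + 1 / (N * x ^ 2)) * T := by linarith
      _ ≤ (Q + CR) * (1 + 1 / (N * x ^ 2)) * T := by nlinarith

end EnergyPart

section ConcretePart

lemma near_bd {a b : ℝ} (ha : 1 / 2 < a) : ∃ C : ℝ, 0 ≤ C ∧ ∀ N : ℝ, 1 ≤ N → ∀ Y Y1 : ℝ → ℝ,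
    (∀ θ, 0 < θ → θ < Real.pi → HasDerivAt Y (Y1 θ) θ ∧
      HasDerivAt Y1 (-(2 * (a + 1 / 2) / θ) * Y1 θ - (N ^ 2 + 2 * cB1 (a ^ 2 - 1 / 4) (b ^ 2 - 1 / 4) θ) * Y θ) θ) →
    Filter.Tendsto Y (nhdsWithin 0 (Set.Ioi 0)) (nhds 1) →
    Filter.Tendsto Y1 (nhdsWithin 0 (Set.Ioi 0)) (nhds 0) →
    (Y1 (1 / N) - N * (bI1 (a - 1 / 2) 1 / bI (a - 1 / 2) 0)) ^ 2 +
      N ^ 2 * (Y (1 / N) - bI (a - 1 / 2) 1 / bI (a - 1 / 2) 0) ^ 2 ≤ C / N ^ 2 := by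
  obtain ⟨K, hK, hb⟩ := cB_bounds (a ^ 2 - 1 / 4) (b ^ 2 - 1 / 4) (ε := 1) one_pos (by linarith [Real.pi_gt_three])
  refine ⟨Real.exp (2 * (2 * K)), (Real.exp_pos _).le, ?_⟩
  intro N hN Y Y1 hY l0 l1
  have hN0 : 0 < N := by linarith
  have hi : 1 / N ≤ 1 := by rw [div_le_one hN0]; exact hN
  set μ := a - 1 / 2 with hμ
  have hμ0 : 0 ≤ μ := by rw [hμ]; linarith
  set I0 := bI μ 0 with hI0
  have hI : 0 < I0 := bI_zero_pos (by linarith)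
  have dN : ∀ x, HasDerivAt (fun x : ℝ => N * x) N x := fun x => by
    simpa using (hasDerivAt_id x).const_mul N
  have d1 : ∀ x, HasDerivAt (fun x => bI μ (N * x) / I0) (N * (bI1 μ (N * x) / I0)) x := fun x =>
    (((bI_deriv hμ0 (N * x)).comp x (dN x)).div_const I0).congr_deriv (by ring)
  have d2 : ∀ x, HasDerivAt (fun x => N * (bI1 μ (N * x) / I0)) (N ^ 2 * (bI2 μ (N * x) / I0)) x := fun x =>
    ((((bI1_deriv hμ0 (N * x)).comp x (dN x)).div_const I0).const_mul N).congr_deriv (by ring)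
  have := near_abs (A := a + 1 / 2) (N := N) (D := 2 * K) (by linarith) hN (by linarith)
    (e := fun x => Y x - bI μ (N * x) / I0) (e1 := fun x => Y1 x - N * (bI1 μ (N * x) / I0))
    (r := fun x => 2 * cB1 (a ^ 2 - 1 / 4) (b ^ 2 - 1 / 4) x * Y x) ?_ ?_ ?_ ?_ ?_
  · have e : N * (1 / N) = 1 := by field_simp
    simpa only [e] using this
  · intro x h0 h1
    exact (hY x h0 (by linarith [Real.pi_gt_three])).1.sub (d1 x)
  · intro x h0 h1
    refine ((hY x h0 (by linarith [Real.pi_gt_three])).2.sub (d2 x)).congr_deriv ?_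
    have o := bI_ode (μ := μ) (by linarith) (N * x)
    have o2 : bI2 μ (N * x) = - bI μ (N * x) - (2 * (a + 1 / 2)) * bI1 μ (N * x) / (N * x) := by
      field_simp
      rw [hμ] at o ⊢
      linear_combination o
    rw [o2]
    field_simp
    ring
  · intro x h0 h1
    have h2 := (hb x h0 (by linarith [Real.pi_gt_three])).2.1
    have h3 : |bI μ (N * x) / I0| ≤ 1 := by
      rw [abs_div, abs_of_pos hI, div_le_one hI]
      exact bI_abs (by linarith) _
    have h4 : |Y x| ≤ |Y x - bI μ (N * x) / I0| + 1 := by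
      have := abs_add_le (Y x - bI μ (N * x) / I0) (bI μ (N * x) / I0)
      rw [sub_add_cancel] at this
      linarith
    simp only [abs_mul, abs_two]
    gcongr
  · have := (d1 0).continuousAt.tendsto.mono_left (nhdsWithin_le_nhds (s := Set.Ioi 0))
    simp only [mul_zero, ← hI0, div_self hI.ne'] at this
    simpa using l0.sub this
  · have := (d2 0).continuousAt.tendsto.mono_left (nhdsWithin_le_nhds (s := Set.Ioi 0))
    simp only [mul_zero, bI1_zero, zero_div] at this
    simpa using l1.sub this

set_option maxHeartbeats 2000000 in
lemma far_bd {a b ε : ℝ} (ha : 1 / 2 < a) (hε : 0 < ε) (hε2 : ε < Real.pi / 2) :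
    ∃ C : ℝ, 0 ≤ C ∧ ∀ N : ℝ, 1 ≤ N → ∀ Y Y1 : ℝ → ℝ,
    (∀ θ, 0 < θ → θ < Real.pi → HasDerivAt Y (Y1 θ) θ ∧
      HasDerivAt Y1 (-(2 * (a + 1 / 2) / θ) * Y1 θ - (N ^ 2 + 2 * cB1 (a ^ 2 - 1 / 4) (b ^ 2 - 1 / 4) θ) * Y θ) θ) →
    Filter.Tendsto Y (nhdsWithin 0 (Set.Ioi 0)) (nhds 1) →
    Filter.Tendsto Y1 (nhdsWithin 0 (Set.Ioi 0)) (nhds 0) →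
    ∀ t, 1 / N ≤ t → t ≤ Real.pi - ε →
      |(N * t) ^ (a + 1 / 2) * Y t -
        (bF a (N * t) + cB (a ^ 2 - 1 / 4) (b ^ 2 - 1 / 4) t * bF1 a (N * t) / N)| ≤ C / N ^ 2 := by
  obtain ⟨K, hK, hb⟩ := cB_bounds (a ^ 2 - 1 / 4) (b ^ 2 - 1 / 4) hε hε2
  obtain ⟨Cn, hCn, hnear⟩ := near_bd (a := a) (b := b) ha
  obtain ⟨CF, hCF, hF⟩ := bF_two ha
  set m := a ^ 2 - 1 / 4 with hm
  have hm0 : 0 < m := by rw [hm]; nlinarith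
  set A := a + 1 / 2 with hA
  have hA0 : 0 < A := by linarith
  set CR := CF * K * (1 + 8 * K + 4 * m) with hCR
  set Q := m + 32 * K with hQ
  have hCR0 : 0 ≤ CR := by positivity
  have hQ0 : 0 ≤ Q := by positivity
  set d0 := Real.sqrt Cn with hd0
  have hd00 : 0 ≤ d0 := Real.sqrt_nonneg _
  set C0 := (d0 + A * d0 + K * CF + K * (1 + m) * CF) ^ 2 + (d0 + K * CF) ^ 2 with hC0
  refine ⟨Real.sqrt ((C0 + 1) * Real.exp (5 * (Q + CR))), Real.sqrt_nonneg _, ?_⟩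
  intro N hN Y Y1 hY l0 l1 t ht1 ht2
  have hN0 : 0 < N := by linarith
  have hi : 1 / N ≤ 1 := by rw [div_le_one hN0]; exact hN
  have hi0 : 0 < 1 / N := by positivity
  have hpi := Real.pi_gt_three
  have hpi4 := Real.pi_lt_four
  have dN : ∀ x, HasDerivAt (fun x : ℝ => N * x) N x := fun x => by
    simpa using (hasDerivAt_id x).const_mul N
  set B := cB m (b ^ 2 - 1 / 4) with hB
  set B1 := cB1 m (b ^ 2 - 1 / 4) with hB1
  set B2 := cB2 m (b ^ 2 - 1 / 4) with hB2
  have hNx : ∀ x, 1 / N ≤ x → 1 ≤ N * x := fun x hx => by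
    rw [div_le_iff₀ hN0] at hx; linarith
  have hfin := far_abs (N := N) (Q := Q) (CR := CR) (C0 := C0) (t := t) hN hQ0 hCR0 ht1 (by linarith)
    (e := fun x => (N * x) ^ A * Y x - (bF a (N * x) + B x * bF1 a (N * x) / N))
    (e1 := fun x => (N * x) ^ A * (Y1 x + A / x * Y x) -
      (N * bF1 a (N * x) + B1 x * bF1 a (N * x) / N - B x * (1 - m / (N * x) ^ 2) * bF a (N * x)))
    (q := fun x => -m / x ^ 2 + 2 * B1 x)
    (R := fun x => (B2 x + 2 * B x * B1 x) / N * bF1 a (N * x) +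
      (2 * B1 x * m / (N ^ 2 * x ^ 2) - 2 * B x * m / (N ^ 2 * x ^ 3)) * bF a (N * x)) ?_ ?_ ?_ ?_ ?_
  · have h1 : |(N * t) ^ A * Y t - (bF a (N * t) + B t * bF1 a (N * t) / N)| ≤
        Real.sqrt ((C0 + 1) * Real.exp (5 * (Q + CR)) / N ^ 4) := Real.abs_le_sqrt hfin
    rw [Real.sqrt_div' _ (by positivity), show N ^ 4 = (N ^ 2) ^ 2 by ring, Real.sqrt_sq (by positivity)] at h1
    exact h1
  · intro x hx1 hx2
    have hx : 0 < x := by linarith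
    have hz : 0 < N * x := by positivity
    have dP : HasDerivAt (fun x => (N * x) ^ A) (A / x * (N * x) ^ A) x := by
      refine ((dN x).rpow_const (p := A) (Or.inl hz.ne')).congr_deriv ?_
      rw [Real.rpow_sub_one hz.ne']
      field_simp
    have dF : HasDerivAt (fun x => bF a (N * x)) (bF1 a (N * x) * N) x := (bF_deriv ha hz).comp x (dN x)
    have dF1 : HasDerivAt (fun x => bF1 a (N * x)) (-(1 - m / (N * x) ^ 2) * bF a (N * x) * N) x :=
      (bF1_deriv ha hz).comp x (dN x)
    have dB := cB_deriv m (b ^ 2 - 1 / 4) hx (by linarith)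
    refine ((dP.mul (hY x hx (by linarith)).1).sub (dF.add ((dB.mul dF1).div_const N))).congr_deriv ?_
    simp only [← hB, ← hB1]
    field_simp
    ring
  · intro x hx1 hx2
    have hx : 0 < x := by linarith
    have hz : 0 < N * x := by positivity
    have dP : HasDerivAt (fun x => (N * x) ^ A) (A / x * (N * x) ^ A) x := by
      refine ((dN x).rpow_const (p := A) (Or.inl hz.ne')).congr_deriv ?_
      rw [Real.rpow_sub_one hz.ne']
      field_simp
    have dF : HasDerivAt (fun x => bF a (N * x)) (bF1 a (N * x) * N) x := (bF_deriv ha hz).comp x (dN x)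
    have dF1 : HasDerivAt (fun x => bF1 a (N * x)) (-(1 - m / (N * x) ^ 2) * bF a (N * x) * N) x :=
      (bF1_deriv ha hz).comp x (dN x)
    have dB := cB_deriv m (b ^ 2 - 1 / 4) hx (by linarith)
    have dB1 := cB1_deriv m (b ^ 2 - 1 / 4) hx (by linarith)
    have dA : HasDerivAt (fun x => A / x) (-A / x ^ 2) x := by
      simpa [div_eq_mul_inv] using (hasDerivAt_inv hx.ne').const_mul A
    have dm : HasDerivAt (fun x => 1 - m / (N * x) ^ 2) (2 * m / (N ^ 2 * x ^ 3)) x := by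
      refine ((((dN x).fun_pow 2).fun_inv (by positivity)).const_mul m |>.const_sub 1).congr_deriv ?_
      simp only [Nat.cast_ofNat, Nat.reduceSub, pow_one]
      field_simp
    refine ((dP.fun_mul ((hY x hx (by linarith)).2.fun_add (dA.fun_mul (hY x hx (by linarith)).1))).fun_sub
      (((dF1.const_mul N).fun_add ((dB1.fun_mul dF1).div_const N)).fun_sub
        ((dB.fun_mul dm).fun_mul dF))).congr_deriv ?_
    simp only [← hB, ← hB1, ← hB2]
    have hmA : m = A ^ 2 - A := by rw [hm, hA]; ring
    generalize (N * x) ^ A = P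
    generalize bF a (N * x) = f
    generalize bF1 a (N * x) = f1
    rw [hmA]
    field_simp
    ring
  · intro x hx1 hx2
    have hx : 0 < x := by linarith
    obtain ⟨k0, k1, k2, -⟩ := hb x hx (by linarith)
    have : |-m / x ^ 2| = m / x ^ 2 := by rw [neg_div, abs_neg, abs_of_pos (by positivity)]
    calc |-m / x ^ 2 + 2 * B1 x| ≤ |-m / x ^ 2| + |2 * B1 x| := abs_add_le _ _
      _ ≤ m / x ^ 2 + 2 * K := by rw [this, abs_mul, abs_two]; linarith
      _ ≤ Q / x ^ 2 := by
        rw [hQ, add_div]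
        have : 2 * K ≤ 32 * K / x ^ 2 := by
          rw [le_div_iff₀ (by positivity)]
          have : x ^ 2 ≤ 16 := by nlinarith
          nlinarith
        linarith
  · intro x hx1 hx2
    have hx : 0 < x := by linarith
    obtain ⟨k0, k1, k2, -⟩ := hb x hx (by linarith)
    obtain ⟨-, -, f0, f1⟩ := hF (N * x) (hNx x hx1)
    have hx4 : x ≤ 4 := by linarith
    have r1 : |B2 x + 2 * B x * B1 x| ≤ K + 8 * K * K := by
      calc _ ≤ |B2 x| + 2 * |B x| * |B1 x| := by
            refine (abs_add_le _ _).trans ?_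
            rw [abs_mul, abs_mul, abs_two]
        _ ≤ K + 2 * (K * 4) * K := by
            have : |B x| ≤ K * 4 := k0.trans (by gcongr)
            gcongr
        _ = _ := by ring
    have r2 : |2 * B1 x * m / (N ^ 2 * x ^ 2) - 2 * B x * m / (N ^ 2 * x ^ 3)| ≤ 4 * K * m / (N ^ 2 * x ^ 2) := by
      calc _ ≤ |2 * B1 x * m / (N ^ 2 * x ^ 2)| + |2 * B x * m / (N ^ 2 * x ^ 3)| := abs_sub _ _
        _ = 2 * |B1 x| * m / (N ^ 2 * x ^ 2) + 2 * |B x| * m / (N ^ 2 * x ^ 3) := by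
            simp only [abs_div, abs_mul, abs_two, abs_of_pos hm0, abs_of_pos hN0, abs_of_pos hx, abs_pow]
        _ ≤ 2 * K * m / (N ^ 2 * x ^ 2) + 2 * (K * x) * m / (N ^ 2 * x ^ 3) := by gcongr
        _ = _ := by field_simp; ring
    calc _ ≤ |(B2 x + 2 * B x * B1 x) / N * bF1 a (N * x)| + |(2 * B1 x * m / (N ^ 2 * x ^ 2) - 2 * B x * m / (N ^ 2 * x ^ 3)) * bF a (N * x)| := abs_add_le _ _
      _ ≤ (K + 8 * K * K) / N * CF + 4 * K * m / (N ^ 2 * x ^ 2) * CF := by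
        rw [abs_mul, abs_mul, abs_div, abs_of_pos hN0]
        gcongr
      _ ≤ _ := by
        have : CR * (1 / N) * (1 + 1 / (N * x ^ 2)) - ((K + 8 * K * K) / N * CF + 4 * K * m / (N ^ 2 * x ^ 2) * CF)
          = CF * K * (4 * m) / N + CF * K * (1 + 8 * K) / (N ^ 2 * x ^ 2) := by
          rw [hCR]; field_simp; ring
        have : 0 ≤ CF * K * (4 * m) / N + CF * K * (1 + 8 * K) / (N ^ 2 * x ^ 2) := by positivity
        linarith
  · have e : N * (1 / N) = 1 := by field_simp
    have hn := hnear N hN Y Y1 hY l0 l1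
    obtain ⟨k0, k1, k2, -⟩ := hb (1 / N) hi0 (by linarith)
    obtain ⟨-, -, f0, f1⟩ := hF 1 le_rfl
    have v0 : bF a 1 = bI (a - 1 / 2) 1 / bI (a - 1 / 2) 0 := by simp [bF]
    have v1 : bF1 a 1 = A * bF a 1 + bI1 (a - 1 / 2) 1 / bI (a - 1 / 2) 0 := by simp [bF, bF1, hA]
    simp only [e, Real.one_rpow, one_mul]
    rw [← v0] at hn
    obtain ⟨g1, hg1⟩ : ∃ g1, g1 = bI1 (a - 1 / 2) 1 / bI (a - 1 / 2) 0 := ⟨_, rfl⟩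
    rw [← hg1] at hn v1
    have n1 : |Y1 (1 / N) - N * g1| ≤ d0 / N := by
      have h1 : (Y1 (1 / N) - N * g1) ^ 2 ≤ Cn / N ^ 2 := by
        have : 0 ≤ N ^ 2 * (Y (1 / N) - bF a 1) ^ 2 := by positivity
        linarith
      have := Real.abs_le_sqrt h1
      rwa [Real.sqrt_div' _ (by positivity), Real.sqrt_sq (by positivity)] at this
    have n0 : |Y (1 / N) - bF a 1| ≤ d0 / N ^ 2 := by
      have h1 : (N * (Y (1 / N) - bF a 1)) ^ 2 ≤ Cn / N ^ 2 := by
        have : 0 ≤ (Y1 (1 / N) - N * g1) ^ 2 := by positivity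
        rw [mul_pow]; linarith
      have := Real.abs_le_sqrt h1
      rw [Real.sqrt_div' _ (by positivity), Real.sqrt_sq (by positivity), abs_mul, abs_of_pos hN0] at this
      rw [le_div_iff₀ hN0] at this
      rw [le_div_iff₀ (by positivity)]
      calc _ = N * |Y (1 / N) - bF a 1| * N := by ring
        _ ≤ _ := this
    have w0 : |Y (1 / N) - (bF a 1 + B (1 / N) * bF1 a 1 / N)| ≤ (d0 + K * CF) / N ^ 2 := by
      calc _ = |(Y (1 / N) - bF a 1) - B (1 / N) * bF1 a 1 / N| := by ring_nf
        _ ≤ |Y (1 / N) - bF a 1| + |B (1 / N) * bF1 a 1 / N| := abs_sub _ _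
        _ ≤ d0 / N ^ 2 + (K * (1 / N)) * CF / N := by
          rw [abs_div, abs_mul, abs_of_pos hN0]; gcongr
        _ = _ := by field_simp
    have w1 : |Y1 (1 / N) + A / (1 / N) * Y (1 / N) - (N * bF1 a 1 + B1 (1 / N) * bF1 a 1 / N - B (1 / N) * (1 - m / 1 ^ 2) * bF a 1)|
        ≤ (d0 + A * d0 + K * CF + K * (1 + m) * CF) / N := by
      have hmm : |1 - m / 1 ^ 2| ≤ 1 + m := by
        rw [abs_le]; constructor <;> norm_num <;> linarith
      calc _ = |(Y1 (1 / N) - N * g1) + A * N * (Y (1 / N) - bF a 1) - B1 (1 / N) * bF1 a 1 / N + B (1 / N) * (1 - m / 1 ^ 2) * bF a 1| := by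
            congr 1
            nth_rewrite 1 [v1]
            field_simp
            ring
        _ ≤ |Y1 (1 / N) - N * g1| + |A * N * (Y (1 / N) - bF a 1)| + |B1 (1 / N) * bF1 a 1 / N| + |B (1 / N) * (1 - m / 1 ^ 2) * bF a 1| := by
            refine (abs_add_le _ _).trans ?_
            gcongr
            refine (abs_sub _ _).trans ?_
            gcongr
            exact abs_add_le _ _
        _ ≤ d0 / N + A * N * (d0 / N ^ 2) + K * CF / N + K * (1 / N) * (1 + m) * CF := by
            simp only [abs_mul, abs_div (B1 (1 / N) * bF1 a 1), abs_of_pos hN0, abs_of_pos hA0]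
            gcongr
        _ = _ := by field_simp
    have w0' := pow_le_pow_left₀ (abs_nonneg _) w0 2
    have w1' := pow_le_pow_left₀ (abs_nonneg _) w1 2
    rw [sq_abs] at w0' w1'
    calc _ ≤ ((d0 + A * d0 + K * CF + K * (1 + m) * CF) / N) ^ 2 + N ^ 2 * ((d0 + K * CF) / N ^ 2) ^ 2 := by gcongr
      _ = _ := by rw [hC0]; field_simp

end ConcretePart

section AssemblyPart

lemma U_bd {a b ε : ℝ} (ha : 1 / 2 < a) (hε : 0 < ε) (hε2 : ε < Real.pi / 2) :
    ∃ C : ℝ, 0 ≤ C ∧ ∀ N : ℝ, 1 ≤ N → ∀ Y Y1 : ℝ → ℝ,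
    (∀ θ, 0 < θ → θ < Real.pi → HasDerivAt Y (Y1 θ) θ ∧
      HasDerivAt Y1 (-(2 * (a + 1 / 2) / θ) * Y1 θ - (N ^ 2 + 2 * cB1 (a ^ 2 - 1 / 4) (b ^ 2 - 1 / 4) θ) * Y θ) θ) →
    Filter.Tendsto Y (nhdsWithin 0 (Set.Ioi 0)) (nhds 1) →
    Filter.Tendsto Y1 (nhdsWithin 0 (Set.Ioi 0)) (nhds 0) →
    ∀ t, 1 / N ≤ t → t ≤ Real.pi - ε →
      |(N * t) ^ (a + 1 / 2) * Y t / bK a -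
        (Real.cos (N * t - (a + 1 / 2) * Real.pi / 2) +
          N⁻¹ * F2fn a b t * Real.sin (N * t - (a + 1 / 2) * Real.pi / 2))| ≤ C / (N * t) ^ 2 ∧
      |Real.cos (N * t - (a + 1 / 2) * Real.pi / 2) +
          N⁻¹ * F2fn a b t * Real.sin (N * t - (a + 1 / 2) * Real.pi / 2)| ≤ C := by
  obtain ⟨K, hK, hb⟩ := cB_bounds (a ^ 2 - 1 / 4) (b ^ 2 - 1 / 4) hε hε2
  obtain ⟨Cf, hCf, hfar⟩ := far_bd (a := a) (b := b) ha hε hε2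
  obtain ⟨CF, hCF, hF⟩ := bF_two ha
  have hk := bK_pos ha
  have hm0 : 0 < a ^ 2 - 1 / 4 := by nlinarith
  refine ⟨(16 * Cf + CF * (1 + 16 * K)) / bK a + (1 + 4 * K + (a ^ 2 - 1 / 4)), by positivity, ?_⟩
  intro N hN Y Y1 hY l0 l1 t ht1 ht2
  have hN0 : 0 < N := by linarith
  have hi0 : 0 < 1 / N := by positivity
  have ht : 0 < t := by linarith
  have ht4 : t ≤ 4 := by linarith [Real.pi_lt_four]
  have hz : 1 ≤ N * t := by rw [div_le_iff₀ hN0] at ht1; linarith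
  have hz0 : 0 < N * t := by linarith
  have h1 := hfar N hN Y Y1 hY l0 l1 t ht1 ht2
  obtain ⟨f1, f2, -, -⟩ := hF (N * t) hz
  have k0 := (hb t ht ht2).1
  have hFe := F2_eq a b (θ := t) ht (by linarith)
  rw [hFe]
  set m := a ^ 2 - 1 / 4 with hm
  set B := cB m (b ^ 2 - 1 / 4) t with hB
  set ω := N * t - (a + 1 / 2) * Real.pi / 2 with hω
  set S := Real.cos ω + N⁻¹ * (-B - m / (2 * t)) * Real.sin ω with hS
  have t16 : t ^ 2 ≤ 16 := by nlinarith
  have inv : 1 / N ^ 2 ≤ 16 / (N * t) ^ 2 := by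
    rw [div_le_div_iff₀ (by positivity) (by positivity)]
    nlinarith [sq_nonneg N]
  have e1 : |(N * t) ^ (a + 1 / 2) * Y t - bK a * S| ≤ (16 * Cf + CF * (1 + 16 * K)) / (N * t) ^ 2 := by
    calc _ = |((N * t) ^ (a + 1 / 2) * Y t - (bF a (N * t) + B * bF1 a (N * t) / N)) +
          ((bF a (N * t) - bK a * (Real.cos ω - m / (2 * (N * t)) * Real.sin ω)) +
            B / N * (bF1 a (N * t) + bK a * Real.sin ω))| := by
            congr 1; rw [hS]; field_simp; ring
      _ ≤ Cf / N ^ 2 + (CF / (N * t) ^ 2 + (K * t) / N * (CF / (N * t))) := by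
            refine (abs_add_le _ _).trans (add_le_add h1 ((abs_add_le _ _).trans (add_le_add f1 ?_)))
            rw [abs_mul, abs_div, abs_of_pos hN0]
            gcongr
      _ = Cf * (1 / N ^ 2) + CF / (N * t) ^ 2 + K * CF * (1 / N ^ 2) := by field_simp; ring
      _ ≤ Cf * (16 / (N * t) ^ 2) + CF / (N * t) ^ 2 + K * CF * (16 / (N * t) ^ 2) := by gcongr
      _ = _ := by ring
  have hS1 : |S| ≤ 1 + 4 * K + m := by
    have : |N⁻¹ * (-B - m / (2 * t)) * Real.sin ω| ≤ 4 * K + m := by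
      rw [abs_mul, abs_mul, abs_of_pos (inv_pos.2 hN0)]
      calc _ ≤ N⁻¹ * (K * t + m / (2 * t)) * 1 := by
            have : |-B - m / (2 * t)| ≤ K * t + m / (2 * t) := by
              refine (abs_sub _ _).trans ?_
              rw [abs_neg, abs_of_pos (show 0 < m / (2 * t) by positivity)]
              linarith
            have := Real.abs_sin_le_one ω
            gcongr
        _ = N⁻¹ * (K * t) + m / (2 * (N * t)) := by field_simp
        _ ≤ 1 * (K * 4) + m / 1 := by
            have : N⁻¹ ≤ 1 := inv_le_one_of_one_le₀ hN
            have : 1 ≤ 2 * (N * t) := by linarith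
            gcongr
        _ = _ := by ring
    calc |S| ≤ |Real.cos ω| + |N⁻¹ * (-B - m / (2 * t)) * Real.sin ω| := abs_add_le _ _
      _ ≤ _ := by linarith [Real.abs_cos_le_one ω]
  constructor
  · calc _ = |(N * t) ^ (a + 1 / 2) * Y t - bK a * S| / bK a := by
            rw [← abs_of_pos hk, ← abs_div, abs_of_pos hk]; congr 1; field_simp
      _ ≤ (16 * Cf + CF * (1 + 16 * K)) / (N * t) ^ 2 / bK a := by gcongr
      _ = (16 * Cf + CF * (1 + 16 * K)) / bK a / (N * t) ^ 2 := by ring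
      _ ≤ _ := by
        gcongr
        have : 0 ≤ 1 + 4 * K + m := by positivity
        linarith
  · have : 0 ≤ (16 * Cf + CF * (1 + 16 * K)) / bK a := by positivity
    linarith

lemma lnR_exp {a b : ℝ} (ha : 1 / 2 < a) (hb : -(1 / 2) < b) (n : ℕ) :
    Real.exp (lnR a b n) * ((n : ℝ) + (a + b + 1) / 2) ^ (2 * a) =
      Real.Gamma (n + (a + b) + 1) * Real.Gamma (n + a + 1) / (Real.Gamma (n + b + 1) * Real.Gamma (n + 1)) := by
  have hn : (0:ℝ) ≤ n := Nat.cast_nonneg n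
  have h1 := Real.Gamma_pos_of_pos (s := n + (a + b) + 1) (by linarith)
  have h2 := Real.Gamma_pos_of_pos (s := n + a + 1) (by linarith)
  have h3 := Real.Gamma_pos_of_pos (s := n + b + 1) (by linarith)
  have h4 := Real.Gamma_pos_of_pos (s := (n:ℝ) + 1) (by linarith)
  have h5 : 0 < (n : ℝ) + (a + b + 1) / 2 := by linarith
  rw [lnR, Real.rpow_def_of_pos h5, ← Real.exp_add,
    show ∀ p q r s t : ℝ, p + q - r - s - 2 * a * t + t * (2 * a) = (p + q) - (r + s) by intros; ring,
    Real.exp_sub, Real.exp_add, Real.exp_add, Real.exp_log h1, Real.exp_log h2, Real.exp_log h3, Real.exp_log h4]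

lemma m_wr (a b : ℝ) {θ : ℝ} (h0 : 0 < θ) (h1 : θ < Real.pi) :
    mAB a b θ * θ ^ (a + 1 / 2) * wr a b θ = 2 ^ (a + 1 / 2) / Real.sqrt Real.pi := by
  obtain ⟨hS, hC, -⟩ := half_facts h0 h1
  have e1 : wr a b θ = (2 * Real.sin (θ / 2)) ^ (a + 1 / 2) / θ ^ (a + 1 / 2) * Real.cos (θ / 2) ^ (b + 1 / 2) := by
    rw [wr, Real.rpow_def_of_pos (by positivity), Real.rpow_def_of_pos h0, Real.rpow_def_of_pos hC, ← Real.exp_sub, ← Real.exp_add]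
    congr 1; ring
  rw [e1, mAB, Real.mul_rpow (by norm_num) hS.le, Real.sqrt_eq_rpow, Real.rpow_neg Real.pi_pos.le,
    show -a - 1 / 2 = -(a + 1 / 2) by ring, show -b - 1 / 2 = -(b + 1 / 2) by ring,
    Real.rpow_neg hS.le, Real.rpow_neg hC.le]
  have := Real.rpow_pos_of_pos hS (a + 1 / 2)
  have := Real.rpow_pos_of_pos hC (b + 1 / 2)
  have := Real.rpow_pos_of_pos h0 (a + 1 / 2)
  have := Real.rpow_pos_of_pos Real.pi_pos (1 / 2)
  field_simp

end AssemblyPart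

set_option maxHeartbeats 2000000

/-- Lemma 2.5 i): two-term asymptotics of the generalised Dirichlet kernel
`v_L^{(α,β)}(1,cos θ)` for `c⁽¹⁾/L ≤ θ ≤ π − ε`, with `L̃ = L + (α+β+2)/2`;
here `c⁽¹⁾ = c⁽¹⁾(α,β) > 0` and `C = C(ε,α,β) > 0`. -/
theorem dirichletJ_two_term_asymptotics_left (α β : ℝ)
    (hα : -(1 / 2 : ℝ) < α) (hβ : -(1 / 2 : ℝ) < β) (hαβ : -5 < α - β) :
    ∃ c : ℝ, 0 < c ∧
      ∀ ε : ℝ, 0 < ε → ε < Real.pi / 2 →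
        ∃ C : ℝ, 0 < C ∧
          ∀ L : ℕ, 1 ≤ L → ∀ θ : ℝ, c / (L : ℝ) ≤ θ → θ ≤ Real.pi - ε →
            |dirichletJ α β L 1 (Real.cos θ) -
                (2 : ℝ) ^ (-(α + β + 1)) / Real.Gamma (α + 1) *
                  ((L : ℝ) + (α + β + 2) / 2) ^ (α + 1 / 2) * mAB (α + 1) β θ *
                    (Real.cos (omegaA (α + 1) (((L : ℝ) + (α + β + 2) / 2) * θ)) +
                      ((L : ℝ) + (α + β + 2) / 2)⁻¹ * F2fn (α + 1) β θ *
                        Real.cos (omegaA (α + 2) (((L : ℝ) + (α + β + 2) / 2) * θ)))| ≤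
              C * ((2 : ℝ) ^ (-(α + β + 1)) / Real.Gamma (α + 1)) *
                ((L : ℝ) + (α + β + 2) / 2) ^ (α + 1 / 2) * mAB (α + 1) β θ *
                  ((L : ℝ) ^ uHat (α + 1) * θ ^ nuHat (α + 1) +
                    (L : ℝ) ^ (-(2 : ℝ)) * θ ^ (-(2 : ℝ))) := by
  refine ⟨1, one_pos, fun ε hε hε2 => ?_⟩
  set a := α + 1 with ha'
  have ha : 1 / 2 < a := by linarith
  obtain ⟨CU, hCU, hU⟩ := U_bd (a := a) (b := β) ha hε hε2
  obtain ⟨CG, hCG, hG⟩ := gamma_ratio_bound (a := a) (b := β) ha hβ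
  refine ⟨(1 + CG) * CU + 16 * CG * CU + 1, by positivity, ?_⟩
  intro L hL θ hθ1 hθ2
  have hL1 : (1:ℝ) ≤ L := by exact_mod_cast hL
  have hL0 : (0:ℝ) < L := by linarith
  have hθ0 : 0 < θ := lt_of_lt_of_le (by positivity) hθ1
  have hθπ : θ < Real.pi := by linarith
  have hθ4 : θ ≤ 4 := by linarith [Real.pi_lt_four]
  obtain ⟨N, hN⟩ : ∃ N : ℝ, N = (L : ℝ) + (α + β + 2) / 2 := ⟨_, rfl⟩
  have hN' : (L : ℝ) + (a + β + 1) / 2 = N := by rw [hN, ha']; ring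
  have hNL : (L : ℝ) ≤ N := by linarith
  have hN1 : 1 ≤ N := by linarith
  have hN0 : 0 < N := by linarith
  have hθN : 1 / N ≤ θ := le_trans (by gcongr) hθ1
  obtain ⟨Y, Y1, hY, l0, l1, hYe⟩ := yhat_exists (a := a) (b := β) ha hβ L
  rw [hN'] at hY
  obtain ⟨u1, u2⟩ := hU N hN1 Y Y1 hY l0 l1 θ hθN hθ2
  have hR := hG L hL
  have hRe := lnR_exp (a := a) (b := β) ha hβ L
  rw [hN'] at hRe
  obtain ⟨R, hRdef⟩ : ∃ R, R = Real.exp (lnR a β L) := ⟨_, rfl⟩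
  rw [← hRdef] at hR hRe
  have o1 : omegaA a (N * θ) = N * θ - (a + 1 / 2) * Real.pi / 2 := by rw [omegaA]; ring
  have o2 : Real.cos (omegaA (α + 2) (N * θ)) = Real.sin (N * θ - (a + 1 / 2) * Real.pi / 2) := by
    rw [← Real.cos_sub_pi_div_two, omegaA, ha']; congr 1; ring
  rw [← hN, o1, o2]
  obtain ⟨S, hS⟩ : ∃ S, S = Real.cos (N * θ - (a + 1 / 2) * Real.pi / 2) +
          N⁻¹ * F2fn a β θ * Real.sin (N * θ - (a + 1 / 2) * Real.pi / 2) := ⟨_, rfl⟩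
  rw [← hS] at u1 u2 ⊢
  obtain ⟨U, hUd⟩ : ∃ U, U = (N * θ) ^ (a + 1 / 2) * Y θ / bK a := ⟨_, rfl⟩
  rw [← hUd] at u1
  have hΓα := Real.Gamma_pos_of_pos (s := α + 1) (by linarith)
  have hmp : 0 < mAB a β θ := by
    obtain ⟨hS, hC, -⟩ := half_facts hθ0 hθπ
    have := Real.rpow_pos_of_pos hS (-a - 1 / 2)
    have := Real.rpow_pos_of_pos hC (-β - 1 / 2)
    have := Real.rpow_pos_of_pos Real.pi_pos (-(1 / 2))
    rw [mAB]; positivity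
  obtain ⟨pr, hpr⟩ : ∃ pr, pr = (2:ℝ) ^ (-(α + β + 1)) / Real.Gamma (α + 1) := ⟨_, rfl⟩
  have hpr0 : 0 < pr := by rw [hpr]; positivity
  have hv : dirichletJ α β L 1 (Real.cos θ) = pr * N ^ (α + 1 / 2) * mAB a β θ * (R * U) := by
    rw [dirichlet_closed hα hβ, ← hpr, ← ha', hUd, hYe]
    have p1 := jacobiP_one (a := a) (b := β) (by linarith) (by linarith) L
    have g1 := Real.Gamma_pos_of_pos (s := L + (a + β) + 1) (by linarith)
    have g2 := Real.Gamma_pos_of_pos (s := L + a + 1) (by linarith)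
    have g3 := Real.Gamma_pos_of_pos (s := L + β + 1) (by linarith)
    have g5 := Real.Gamma_pos_of_pos (s := a + 1) (by linarith)
    have g4 : (0:ℝ) < Nat.factorial L := by exact_mod_cast Nat.factorial_pos L
    rw [Real.Gamma_nat_eq_factorial] at hRe
    have hp0 : 0 < jacobiP a β L 1 := by rw [p1]; positivity
    have mw := m_wr a β hθ0 hθπ
    rw [show (L : ℝ) + α + β + 2 = L + (a + β) + 1 by rw [ha']; ring]
    have hk : bK a = 2 ^ (a + 1 / 2) / Real.sqrt Real.pi * Real.Gamma (a + 1) := by rw [bK]; ring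
    have hkp := bK_pos ha
    have hNN : N ^ (α + 1 / 2) * N ^ (a + 1 / 2) = N ^ (2 * a) := by
      rw [← Real.rpow_add hN0]; congr 1; rw [ha']; ring
    have c1 : N ^ (α + 1 / 2) * mAB a β θ * (R * ((N * θ) ^ (a + 1 / 2) * wr a β θ / bK a)) =
        Real.Gamma (L + (a + β) + 1) / Real.Gamma (L + β + 1) * jacobiP a β L 1 := by
      calc _ = (R * (N ^ (α + 1 / 2) * N ^ (a + 1 / 2))) * (mAB a β θ * θ ^ (a + 1 / 2) * wr a β θ) / bK a := by
            rw [Real.mul_rpow hN0.le hθ0.le]; ring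
        _ = (Real.Gamma (L + (a + β) + 1) * Real.Gamma (L + a + 1) / (Real.Gamma (L + β + 1) * Nat.factorial L)) * (bK a / Real.Gamma (a + 1)) / bK a := by
            rw [hNN, hRe, mw, hk]; field_simp
        _ = _ := by rw [p1]; field_simp
    calc pr * (Real.Gamma (L + (a + β) + 1) / Real.Gamma (L + β + 1)) * jacobiP a β L (Real.cos θ)
        = pr * (Real.Gamma (L + (a + β) + 1) / Real.Gamma (L + β + 1) * jacobiP a β L 1) *
          (jacobiP a β L (Real.cos θ) / jacobiP a β L 1) := by field_simp
      _ = _ := by rw [← c1]; ring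
  rw [hv, ← hpr]
  have hM : 0 < pr * N ^ (α + 1 / 2) * mAB a β θ := by
    have := Real.rpow_pos_of_pos hN0 (α + 1 / 2)
    positivity
  have hfin : |R * U - S| ≤ ((1 + CG) * CU + 16 * CG * CU) * (1 / ((L:ℝ) ^ 2 * θ ^ 2)) := by
    have q0 : 1 / (N * θ) ^ 2 ≤ 1 / ((L:ℝ) ^ 2 * θ ^ 2) := by
      rw [mul_pow]; gcongr
    have q1 : 1 / (L:ℝ) ^ 2 ≤ 16 * (1 / ((L:ℝ) ^ 2 * θ ^ 2)) := by
      rw [mul_one_div, div_le_div_iff₀ (by positivity) (by positivity)]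
      have : θ ^ 2 ≤ 16 := by nlinarith
      have := mul_le_mul_of_nonneg_left this (sq_nonneg (L:ℝ))
      linarith
    have q2 : |R| ≤ 1 + CG := by
      have h1 : CG / (L:ℝ) ^ 2 ≤ CG := div_le_self hCG (one_le_pow₀ hL1)
      have := abs_add_le (R - 1) 1
      rw [sub_add_cancel, abs_one] at this
      linarith
    calc |R * U - S| = |R * (U - S) + (R - 1) * S| := by ring_nf
      _ ≤ |R| * |U - S| + |R - 1| * |S| := by
        refine (abs_add_le _ _).trans ?_
        rw [abs_mul, abs_mul]
      _ ≤ (1 + CG) * (CU / (N * θ) ^ 2) + CG / (L:ℝ) ^ 2 * CU := by gcongr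
      _ = (1 + CG) * CU * (1 / (N * θ) ^ 2) + CG * CU * (1 / (L:ℝ) ^ 2) := by ring
      _ ≤ (1 + CG) * CU * (1 / ((L:ℝ) ^ 2 * θ ^ 2)) + CG * CU * (16 * (1 / ((L:ℝ) ^ 2 * θ ^ 2))) := by gcongr
      _ = _ := by ring
  have hX : 1 / ((L:ℝ) ^ 2 * θ ^ 2) = (L:ℝ) ^ (-(2:ℝ)) * θ ^ (-(2:ℝ)) := by
    rw [Real.rpow_neg hL0.le, Real.rpow_neg hθ0.le]
    norm_cast
    field_simp
  rw [hX] at hfin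
  have z1 := Real.rpow_pos_of_pos hL0 (-(2:ℝ))
  have z2 := Real.rpow_pos_of_pos hθ0 (-(2:ℝ))
  have z3 := Real.rpow_pos_of_pos hL0 (uHat a)
  have z4 := Real.rpow_pos_of_pos hθ0 (nuHat a)
  have hfin2 : |R * U - S| ≤ ((1 + CG) * CU + 16 * CG * CU + 1) *
      ((L:ℝ) ^ uHat a * θ ^ nuHat a + (L:ℝ) ^ (-(2:ℝ)) * θ ^ (-(2:ℝ))) := by
    refine hfin.trans ?_
    have : 0 ≤ (L:ℝ) ^ uHat a * θ ^ nuHat a := by positivity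
    exact mul_le_mul (by linarith) (by linarith) (by positivity) (by positivity)
  calc _ = |(pr * N ^ (α + 1 / 2) * mAB a β θ) * (R * U - S)| := by ring_nf
    _ = (pr * N ^ (α + 1 / 2) * mAB a β θ) * |R * U - S| := by rw [abs_mul, abs_of_pos hM]
    _ ≤ (pr * N ^ (α + 1 / 2) * mAB a β θ) * (((1 + CG) * CU + 16 * CG * CU + 1) *
      ((L:ℝ) ^ uHat a * θ ^ nuHat a + (L:ℝ) ^ (-(2:ℝ)) * θ ^ (-(2:ℝ)))) := by gcongr
    _ = _ := by ring
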